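/- arXiv:1202.5253 — 4 statements merged into one kernel-verified Lean document; each statement's English description precedes it below -/
import Mathlib

section
/- Any polynomial solution Ψ(t) of the scattering equation X_1(t)Ψ(t) = RΨ(t) on the span of link patterns LP(2n), normalized so that not all components vanish, has some component of degree at least n−1 in t. -/
open Finset Polynomial

/-- A link pattern on `2n` points: a fixed-point-free non-crossing involution. -/
def IsLinkPattern (n : ℕ) (f : Fin (2 * n) → Fin (2 * n)) : Prop :=
  Function.Involutive f ∧ (∀ i, f i ≠ i) ∧
    ∀ i j : Fin (2 * n),
      ¬ ((i : ℕ) < (j : ℕ) ∧ (j : ℕ) < (f i : ℕ) ∧ (f i : ℕ) < (f j : ℕ))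

instance (n : ℕ) : DecidablePred (IsLinkPattern n) := fun _ => by
  unfold IsLinkPattern Function.Involutive; infer_instance

/-- The inverse rotation `R⁻¹` on link patterns: the arc `{i+1, j+1}` becomes `{i, j}`. -/
def rotinvf (N : ℕ) [NeZero N] (f : Fin N → Fin N) : Fin N → Fin N :=
  fun i => f (i + 1) - 1

/-- The diagrammatic action of the Temperley–Lieb generator `e₁` on a link pattern
(at `τ = 1`): the points `1, 2` (indices `0, 1`) get joined by a short arc, and the
former partners of `1` and `2` get joined to each other; closed loops are erased. -/
def e1f (N : ℕ) [NeZero N] (f : Fin N → Fin N) : Fin N → Fin N :=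
  fun i =>
    if i = 0 then 1 else if i = 1 then 0
    else if i = f 0 then f 1 else if i = f 1 then f 0 else f i

namespace Scat

/-- binary value of the (reversed) word `v`, a minus counting as a digit one -/
def valR : List Bool → ℕ
  | [] => 0
  | b :: v => 2 * valR v + (if b then 0 else 1)

lemma valR_lt (v : List Bool) : valR v + 1 ≤ 2 ^ v.length := by
  induction v with
  | nil => simp [valR]
  | cons b v ih =>
    simp only [valR, List.length_cons, pow_succ]
    split_ifs <;> omega

def rR (N : ℕ) (v : List Bool) : ℕ :=
  (2 ^ N - valR v * 2 ^ (N - v.length)) * (2 * N + 2) + (N + 1 + (N - v.length))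

def rL (N : ℕ) (v : List Bool) : ℕ :=
  (2 ^ N + 1 - (valR v + 1) * 2 ^ (N - v.length)) * (2 * N + 2) + v.length

lemma rL_step (N : ℕ) (b : Bool) (v : List Bool) (h : v.length + 1 ≤ N) :
    rL N v < rL N (b :: v) := by
  obtain ⟨m, rfl⟩ := Nat.exists_eq_add_of_le h
  have e1 : v.length + 1 + m - v.length = m + 1 := by omega
  have e2 : v.length + 1 + m - (v.length + 1) = m := by omega
  unfold rL
  simp only [List.length_cons, e1, e2]
  have : (valR (b :: v) + 1) * 2 ^ m ≤ (valR v + 1) * 2 ^ (m + 1) := by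
    rw [pow_succ, mul_comm (2 ^ m) 2, ← mul_assoc]
    apply Nat.mul_le_mul_right
    simp only [valR]; split_ifs <;> omega
  have := Nat.mul_le_mul_right (2 * (v.length + 1 + m) + 2)
    (Nat.sub_le_sub_left this (2 ^ (v.length + 1 + m) + 1))
  omega

lemma rR_step (N : ℕ) (b : Bool) (v : List Bool) (h : v.length + 1 ≤ N) :
    rR N (b :: v) < rR N v := by
  obtain ⟨m, rfl⟩ := Nat.exists_eq_add_of_le h
  have e1 : v.length + 1 + m - v.length = m + 1 := by omega
  have e2 : v.length + 1 + m - (v.length + 1) = m := by omega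
  unfold rR
  simp only [List.length_cons, e1, e2]
  have : valR v * 2 ^ (m + 1) ≤ valR (b :: v) * 2 ^ m := by
    rw [pow_succ, mul_comm (2 ^ m) 2, ← mul_assoc]
    apply Nat.mul_le_mul_right
    simp only [valR]; split_ifs <;> omega
  have := Nat.mul_le_mul_right (2 * (v.length + 1 + m) + 2)
    (Nat.sub_le_sub_left this (2 ^ (v.length + 1 + m)))
  omega

lemma rRL (N : ℕ) (v : List Bool) (h : v.length ≤ N) : rL N v < rR N v := by
  unfold rR rL
  have h1 : 0 < 2 ^ (N - v.length) := by positivity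
  have h2 : 2 ^ N + 1 - (valR v + 1) * 2 ^ (N - v.length)
      ≤ 2 ^ N - valR v * 2 ^ (N - v.length) := by
    rw [add_mul]; omega
  have := Nat.mul_le_mul_right (2 * N + 2) h2
  omega

lemma rLR (N : ℕ) (v : List Bool) (h : v.length + 1 ≤ N) :
    rR N (false :: v) < rL N (true :: v) := by
  unfold rR rL
  simp only [List.length_cons, valR, if_true, Bool.false_eq_true, if_false, add_zero]
  have h1 : (2 * valR v + 1) * 2 ^ (N - (v.length + 1)) ≤ 2 ^ N := by
    calc _ ≤ 2 ^ (v.length + 1) * 2 ^ (N - (v.length + 1)) := by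
          apply Nat.mul_le_mul_right
          have := valR_lt v
          rw [pow_succ]; omega
      _ = 2 ^ N := by rw [← pow_add]; congr 1; omega
  generalize (2 * valR v + 1) * 2 ^ (N - (v.length + 1)) = x at h1 ⊢
  rw [show 2 ^ N + 1 - x = (2 ^ N - x) + 1 by omega, Nat.add_mul (2 ^ N - x) 1]
  omega

lemma linear_vanish {L : Type*} [Field L] (d N : ℕ) (q : L) (hq : q ^ 2 - q + 1 = 0)
    (ψ : List Bool → Bool → List Bool → ℕ → L)
    (good : List Bool → Bool → List Bool → Prop)
    (hgood : ∀ v a u, good v a u ↔ (v.length + 1 + u.length = N ∧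
      v.count true + (if a then 1 else 0) + u.count true = d + 2))
    (hdeg : ∀ v a u, good v a u → ∀ k, d < k → ψ v a u k = 0)
    (hal0 : ∀ v a u, good (a :: v) a u → ψ (a :: v) a u 0 = 0)
    (hal1 : ∀ v a u, good (a :: v) a u → ∀ k, ψ (a :: v) a u (k + 1) = 0 ↔ ψ v a (a :: u) k = 0)
    (hB0 : ∀ v u, good (true :: v) false u →
      q * ψ (true :: v) false u 0 = q * ψ v true (false :: u) 0 + ψ v false (true :: u) 0)
    (hB1 : ∀ v u, good (true :: v) false u → ∀ k,
      q * ψ (true :: v) false u (k + 1) =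
        (q * ψ v true (false :: u) (k + 1) + ψ v false (true :: u) (k + 1))
        + ((1 - q) * ψ v true (false :: u) k - ψ v false (true :: u) k))
    (hD0 : ∀ v u, good (true :: v) false u →
      ψ (false :: v) true u 0 = q * ψ v true (false :: u) 0 + ψ v false (true :: u) 0)
    (hD1 : ∀ v u, good (true :: v) false u → ∀ k,
      ψ (false :: v) true u (k + 1) =
        (q * ψ v true (false :: u) (k + 1) + ψ v false (true :: u) (k + 1))
        - q ^ 2 * ((1 - q) * ψ v true (false :: u) k - ψ v false (true :: u) k)) :
    ∀ v a u, good v a u → ∀ k, ψ v a u k = 0 := by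
  have hq0 : q ≠ 0 := by rintro rfl; simp at hq
  have key : ∀ m : ℕ, ∀ v a u, good v a u →
      (rL N v < m → ∀ k, k < v.count true → ψ v a u k = 0) ∧
      (rR N v < m → ∀ k, d < k + u.count true → ψ v a u k = 0) := by
    intro m
    induction m with
    | zero => intro v a u _; constructor <;> intro h <;> omega
    | succ m ih =>
      intro v a u hg
      have hg' := (hgood _ _ _).1 hg
      constructor
      · intro hr k hk
        match v, hg, hg', hr, hk with
        | [], hg, hg', hr, hk => simp at hk
        | b :: v, hg, hg', hr, hk =>
          simp only [List.length_cons, List.count_cons] at hg' hk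
          have hlen : v.length + 1 ≤ N := by omega
          have hs := rL_step N b v hlen
          by_cases hab : b = a
          · subst hab
            have hgA : good v b (b :: u) := by
              rw [hgood]; simp only [List.length_cons, List.count_cons]
              cases b <;> simp at hg' ⊢ <;> omega
            cases k with
            | zero => exact hal0 _ _ _ hg
            | succ k =>
              rw [hal1 _ _ _ hg]
              refine (ih _ _ _ hgA).1 (by omega) _ ?_
              split_ifs at hk <;> omega
          · cases b <;> cases a <;> simp at hab
            · -- b = false, a = true : D
              simp at hg' hk
              have hgB : good (true :: v) false u := by
                rw [hgood]; simp; omega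
              have hgA : good v true (false :: u) := by rw [hgood]; simp; omega
              have hgC : good v false (true :: u) := by rw [hgood]; simp; omega
              have LA := (ih _ _ _ hgA).1 (by omega)
              have LC := (ih _ _ _ hgC).1 (by omega)
              cases k with
              | zero => rw [hD0 _ _ hgB, LA _ hk, LC _ hk]; ring
              | succ k =>
                rw [hD1 _ _ hgB, LA _ hk, LC _ hk, LA k (by omega), LC k (by omega)]; ring
            · simp at hg' hk
              have hgD : good (false :: v) true u := by
                rw [hgood]; simp; omega
              have hgA : good v true (false :: u) := by rw [hgood]; simp; omega
              have hgC : good v false (true :: u) := by rw [hgood]; simp; omega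
              have LA := (ih _ _ _ hgA).1 (by omega)
              have LC := (ih _ _ _ hgC).1 (by omega)
              have hcr := rLR N v hlen
              have RD := (ih _ _ _ hgD).2 (by omega)
              apply (mul_eq_zero_iff_left hq0).1
              rcases Nat.lt_or_ge k (v.count true) with hk' | hk'
              · cases k with
                | zero => rw [hB0 _ _ hg, LA _ hk', LC _ hk']; ring
                | succ k =>
                  rw [hB1 _ _ hg, LA _ hk', LC _ hk', LA k (by omega), LC k (by omega)]; ring
              · have hDk := RD k (by omega)
                cases k with
                | zero => rw [hB0 _ _ hg, ← hD0 _ _ hg, hDk]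
                | succ k =>
                  have e := hD1 _ _ hg k
                  rw [hDk, LA k (by omega), LC k (by omega)] at e
                  rw [hB1 _ _ hg, LA k (by omega), LC k (by omega)]
                  linear_combination -e
      · intro hr k hk
        match u, hg, hg', hr, hk with
        | [], hg, hg', hr, hk => exact hdeg _ _ _ hg _ (by simpa using hk)
        | b :: u, hg, hg', hr, hk =>
          simp only [List.length_cons, List.count_cons] at hg' hk
          have hlen : v.length + 1 ≤ N := by omega
          have hsa := rR_step N true v hlen
          have hsb := rR_step N false v hlen
          by_cases hab : b = a
          · subst hab
            have hgA : good (b :: v) b u := by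
              rw [hgood]; simp only [List.length_cons, List.count_cons]
              cases b <;> simp at hg' ⊢ <;> omega
            rw [← hal1 _ _ _ hgA]
            refine (ih _ _ _ hgA).2 (by cases b <;> omega) _ ?_
            split_ifs at hk <;> omega
          · have hg2 : good (true :: v) false u := by
              rw [hgood]; cases b <;> cases a <;> simp at hab hg' ⊢ <;> omega
            have hgD : good (false :: v) true u := by
              rw [hgood]; cases b <;> cases a <;> simp at hab hg' ⊢ <;> omega
            have hgA : good v true (false :: u) := by
              rw [hgood]; cases b <;> cases a <;> simp at hab hg' ⊢ <;> omega
            have RB := (ih _ _ _ hg2).2 (by omega)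
            have RD := (ih _ _ _ hgD).2 (by omega)
            have hrho : ∀ k, d < (k + 1) + u.count true →
                (1 - q) * ψ v true (false :: u) k - ψ v false (true :: u) k = 0 := by
              intro k hk
              have e1 := hB1 _ _ hg2 k
              have e2 := hD1 _ _ hg2 k
              rw [RB _ hk] at e1
              rw [RD _ hk] at e2
              apply (mul_eq_zero_iff_left hq0).1
              linear_combination e2 - e1 - hq *
                ((1 - q) * ψ v true (false :: u) k - ψ v false (true :: u) k)
            have hsig : ∀ k, d < k + u.count true →
                q * ψ v true (false :: u) k + ψ v false (true :: u) k = 0 := by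
              intro k hk
              cases k with
              | zero => rw [← hD0 _ _ hg2, RD _ hk]
              | succ k =>
                have e2 := hD1 _ _ hg2 k
                rw [RD _ hk, hrho k hk] at e2
                linear_combination -e2
            cases b <;> cases a <;> simp at hab
            · -- b = false, a = true : A
              simp at hk
              linear_combination hsig k hk + hrho k (by omega)
            · -- b = true, a = false : C
              simp at hk hg'
              have e := hrho k (by omega)
              have hA : ψ v true (false :: u) k = 0 := by
                rcases Nat.lt_or_ge d (k + u.count true) with h | h
                · linear_combination hsig k h + hrho k (by omega)
                · have := rRL N v (by omega)
                  exact (ih _ _ _ hgA).1 (by omega) k (by omega)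
              rw [hA] at e
              linear_combination -e
  intro v a u hg k
  have hg' := (hgood _ _ _).1 hg
  rcases Nat.lt_or_ge k (v.count true) with h | h
  · exact (key _ _ _ _ hg).1 (Nat.lt_succ_self _) k h
  · refine (key _ _ _ _ hg).2 (Nat.lt_succ_self _) k ?_
    split_ifs at hg' <;> omega

end Scat
namespace Scat

section Weights

lemma two_le {n : ℕ} [h : NeZero (2 * n)] : 2 ≤ 2 * n := by
  have := h.out; omega

lemma val_one' {n : ℕ} [NeZero (2 * n)] : ((1 : Fin (2 * n)) : ℕ) = 1 := by
  have := two_le (n := n)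
  rw [Fin.val_one', Nat.mod_eq_of_lt (by omega)]

lemma val_zero' {n : ℕ} [NeZero (2 * n)] : ((0 : Fin (2 * n)) : ℕ) = 0 := rfl

lemma val_add1 {n : ℕ} [NeZero (2 * n)] (i : Fin (2 * n)) :
    ((i + 1 : Fin (2 * n)) : ℕ) = if (i : ℕ) + 1 = 2 * n then 0 else (i : ℕ) + 1 := by
  have := i.2
  rw [Fin.val_add, val_one']
  split_ifs with h
  · rw [h, Nat.mod_self]
  · exact Nat.mod_eq_of_lt (by omega)

lemma val_sub1 {n : ℕ} [NeZero (2 * n)] (i : Fin (2 * n)) :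
    ((i - 1 : Fin (2 * n)) : ℕ) = if (i : ℕ) = 0 then 2 * n - 1 else (i : ℕ) - 1 := by
  have h := val_add1 (i - 1)
  rw [sub_add_cancel] at h
  have := (i - 1).2
  have := i.2
  split_ifs at h ⊢ <;> omega

lemma rotinv_LP {n : ℕ} [NeZero (2 * n)] {f : Fin (2 * n) → Fin (2 * n)}
    (hf : IsLinkPattern n f) : IsLinkPattern n (rotinvf (2 * n) f) := by
  obtain ⟨h1, h2, h3⟩ := hf
  refine ⟨?_, ?_, ?_⟩
  · intro i
    simp only [rotinvf, sub_add_cancel, h1 (i + 1), add_sub_cancel_right]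
  · intro i h
    simp only [rotinvf, sub_eq_iff_eq_add] at h
    exact h2 _ h
  · rintro i j ⟨a, b, c⟩
    simp only [rotinvf] at b c
    have e1 := h3 (i + 1) (j + 1)
    have e2 := h3 (f (j + 1)) (i + 1)
    rw [h1 (j + 1)] at e2
    have := (f (i + 1)).2
    have := (f (j + 1)).2
    rw [val_sub1] at b c
    rw [val_sub1] at c
    rw [val_add1, val_add1] at e1 e2
    have := i.2
    have := j.2
    generalize ((f (i + 1) : Fin (2 * n)) : ℕ) = x at *
    generalize ((f (j + 1) : Fin (2 * n)) : ℕ) = y at *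
    split_ifs at * <;> omega

lemma rotinv_inj {n : ℕ} [NeZero (2 * n)] : Function.Injective (rotinvf (2 * n)) := by
  intro f g h
  funext i
  have := congrFun h (i - 1)
  simpa [rotinvf] using this

/-- partners of `0` and `1` when they are not linked -/
lemma partner {n : ℕ} [NeZero (2 * n)] {f : Fin (2 * n) → Fin (2 * n)}
    (hf : IsLinkPattern n f) (h : f 0 ≠ 1) :
    1 < (f 1 : ℕ) ∧ (f 1 : ℕ) < (f 0 : ℕ) := by
  obtain ⟨h1, h2, h3⟩ := hf
  have e0 := h2 0
  have e1 := h2 1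
  have h10 : f 1 ≠ 0 := by
    intro h'; apply h; rw [← h', h1]
  have hne : f 0 ≠ f 1 := fun h' => by
    have := congrArg Fin.val (h1.injective h')
    rw [val_one', val_zero'] at this
    omega
  have := h3 0 1
  rw [ne_eq, Fin.ext_iff] at *
  rw [val_one', val_zero'] at *
  omega

lemma e1_eq_self {n : ℕ} [NeZero (2 * n)] {f : Fin (2 * n) → Fin (2 * n)}
    (hf : IsLinkPattern n f) (h : f 0 = 1) : e1f (2 * n) f = f := by
  have h10 : f 1 = 0 := by rw [← h, hf.1]
  funext i
  unfold e1f
  split_ifs with a b c d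
  · rw [a, h]
  · rw [b, h10]
  · rw [h] at c; exact absurd c b
  · rw [h10] at d; exact absurd d a
  · rfl

lemma e1_LP {n : ℕ} [NeZero (2 * n)] {f : Fin (2 * n) → Fin (2 * n)}
    (hf : IsLinkPattern n f) : IsLinkPattern n (e1f (2 * n) f) := by
  by_cases h : f 0 = 1
  · rw [e1_eq_self hf h]; exact hf
  obtain ⟨p1, p2⟩ := partner hf h
  obtain ⟨h1, h2, h3⟩ := hf
  have v1 := val_one' (n := n)
  have v0 := val_zero' (n := n)
  have h1' : ∀ i, f (f i) = i := h1
  have key : ∀ i, (i = 0 ∧ e1f (2 * n) f i = 1) ∨ (i = 1 ∧ e1f (2 * n) f i = 0) ∨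
      (i = f 0 ∧ e1f (2 * n) f i = f 1) ∨ (i = f 1 ∧ e1f (2 * n) f i = f 0) ∨
      (i ≠ 0 ∧ i ≠ 1 ∧ i ≠ f 0 ∧ i ≠ f 1 ∧ e1f (2 * n) f i = f i) := by
    intro i
    unfold e1f
    split_ifs with a b c d <;> simp_all
  have inj : ∀ i j, (f i : ℕ) = f j → (i : ℕ) = j := fun i j hh => by
    rw [h1.injective (Fin.ext hh)]
  refine ⟨?_, ?_, ?_⟩
  · intro i
    have k1 := key i
    have k2 := key (e1f (2 * n) f i)
    generalize e1f (2 * n) f i = y at *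
    have := h1' i
    have := h1' 0
    have := h1' 1
    have := h1' y
    have := inj i 0
    have := inj i 1
    generalize e1f (2 * n) f y = z at *
    rcases k1 with ⟨a, b⟩ | ⟨a, b⟩ | ⟨a, b⟩ | ⟨a, b⟩ | ⟨a, a1, a2, a3, b⟩ <;>
    rcases k2 with ⟨c, e⟩ | ⟨c, e⟩ | ⟨c, e⟩ | ⟨c, e⟩ | ⟨c, c1, c2, c3, e⟩ <;>
    grind
  · intro i hi
    have k1 := key i
    rw [hi] at k1
    have := h2 i
    grind
  · rintro i j ⟨a, b, c⟩
    have := h3 i j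
    have k1 := key i
    have k2 := key j
    have a1 := h3 0 i
    have a2 := h3 0 j
    have a3 := h3 1 i
    have a4 := h3 1 j
    have a5 := h3 i (f 0)
    have a6 := h3 i (f 1)
    have a7 := h3 j (f 0)
    have a8 := h3 j (f 1)
    simp only [h1'] at *
    have c1 := inj i 0
    have c2 := inj i 1
    have c3 := inj j 0
    have c4 := inj j 1
    simp only [Fin.ext_iff, ne_eq] at k1 k2
    generalize ((e1f (2 * n) f i : Fin (2 * n)) : ℕ) = x at *
    generalize ((e1f (2 * n) f j : Fin (2 * n)) : ℕ) = y at *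
    omega

def fac {L : Type*} [Field L] (q : L) {N : ℕ} (σ : Fin N → Fin N) (w : Fin N → Bool)
    (i : Fin N) : L :=
  if w i = w (σ i) then 0 else if (i : ℕ) < (σ i : ℕ) ∧ w i = true then q else 1

def wt {L : Type*} [Field L] (q : L) {N : ℕ} (σ : Fin N → Fin N) (w : Fin N → Bool) : L :=
  ∏ i, fac q σ w i

lemma prod_two {L ι : Type*} [CommRing L] [Fintype ι] [DecidableEq ι] (f : ι → L) (a b : ι)
    (h : a ≠ b) : ∏ i, f i = f a * f b * ∏ i ∈ (univ.erase a).erase b, f i := by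
  rw [← Finset.mul_prod_erase univ f (mem_univ a),
    ← Finset.mul_prod_erase (univ.erase a) f (a := b) (by simp [h.symm]), mul_assoc]

lemma wt_rot {L : Type*} [Field L] (q : L) (hq0 : q ≠ 0) {n : ℕ} [NeZero (2 * n)]
    {σ : Fin (2 * n) → Fin (2 * n)} (hσ : IsLinkPattern n σ) (w : Fin (2 * n) → Bool) :
    wt q σ w = (if w 0 then q else q⁻¹) * wt q (rotinvf (2 * n) σ) (fun i => w (i + 1)) := by
  obtain ⟨h1, h2, h3⟩ := hσ
  have e : wt q (rotinvf (2 * n) σ) (fun i => w (i + 1)) =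
      ∏ i, fac q (rotinvf (2 * n) σ) (fun i => w (i + 1)) (i - 1) :=
    (Fintype.prod_equiv (Equiv.subRight (1 : Fin (2 * n))) _ _ (fun i => rfl)).symm
  have e' : ∀ i, fac q (rotinvf (2 * n) σ) (fun i => w (i + 1)) (i - 1) =
      if w i = w (σ i) then 0 else
        if ((i - 1 : Fin (2 * n)) : ℕ) < ((σ i - 1 : Fin (2 * n)) : ℕ) ∧ w i = true
        then q else 1 := by
    intro i
    simp only [fac, rotinvf, sub_add_cancel]
  rw [e, wt]
  simp only [e']
  have hs : (0 : Fin (2 * n)) ≠ σ 0 := (h2 0).symm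
  have hs' : (σ 0 : ℕ) ≠ 0 := fun h => hs (Fin.ext h.symm)
  rw [prod_two _ 0 (σ 0) hs, prod_two (fun i => if w i = w (σ i) then 0 else
        if ((i - 1 : Fin (2 * n)) : ℕ) < ((σ i - 1 : Fin (2 * n)) : ℕ) ∧ w i = true
        then q else 1) 0 (σ 0) hs]
  have rest : ∏ i ∈ (univ.erase 0).erase (σ 0), fac q σ w i =
      ∏ i ∈ (univ.erase 0).erase (σ 0), (if w i = w (σ i) then 0 else
        if ((i - 1 : Fin (2 * n)) : ℕ) < ((σ i - 1 : Fin (2 * n)) : ℕ) ∧ w i = true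
        then q else 1 : L) := by
    apply Finset.prod_congr rfl
    intro i hi
    simp only [mem_erase, mem_univ, and_true] at hi
    have hi0 : (i : ℕ) ≠ 0 := fun h => hi.2 (Fin.ext h)
    have hsi : (σ i : ℕ) ≠ 0 := fun h => hi.1 (by rw [← h1 i]; congr 1; exact Fin.ext h)
    have : (((i - 1 : Fin (2 * n)) : ℕ) < ((σ i - 1 : Fin (2 * n)) : ℕ)) ↔ (i : ℕ) < σ i := by
      rw [val_sub1, val_sub1, if_neg hi0, if_neg hsi]; omega
    simp only [fac, this]
  rw [rest, ← mul_assoc]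
  congr 1
  have := (σ 0).2
  simp only [fac, h1 0, val_sub1, val_zero', if_neg hs', if_true]
  have b1 : 0 < (σ 0 : ℕ) := by omega
  have b2 : ¬ (2 * n - 1 < (σ 0 : ℕ) - 1) := by omega
  have b3 : (σ 0 : ℕ) - 1 < 2 * n - 1 := by omega
  rcases hw : w 0 <;> rcases hw' : w (σ 0) <;> simp [b1, b2, b3, hq0]

lemma wt_e1 {L : Type*} [Field L] (q : L) (hq : q ^ 2 - q + 1 = 0) {n : ℕ} [NeZero (2 * n)]
    {π : Fin (2 * n) → Fin (2 * n)} (hπ : IsLinkPattern n π) (w wp wm : Fin (2 * n) → Bool)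
    (hp : ∀ i, i ≠ 0 → i ≠ 1 → wp i = w i) (hm : ∀ i, i ≠ 0 → i ≠ 1 → wm i = w i)
    (hp0 : wp 0 = true) (hp1 : wp 1 = false) (hm0 : wm 0 = false) (hm1 : wm 1 = true) :
    wt q (e1f (2 * n) π) w = (if w 0 = w 1 then 0 else if w 0 then q else 1) *
      (wt q π wp + (1 - q) * wt q π wm) := by
  have v1 := val_one' (n := n)
  have v0 := val_zero' (n := n)
  have h01 : (0 : Fin (2 * n)) ≠ 1 := by
    intro h; have := congrArg Fin.val h; rw [v1, v0] at this; omega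
  have h1' : ∀ i, π (π i) = i := hπ.1
  by_cases h : π 0 = 1
  · have h10 : π 1 = 0 := by rw [← h, h1']
    rw [e1_eq_self hπ h]
    unfold wt
    rw [prod_two _ 0 1 h01, prod_two (fac q π wp) 0 1 h01, prod_two (fac q π wm) 0 1 h01]
    have rest : ∀ w' : Fin (2 * n) → Bool, (∀ i, i ≠ 0 → i ≠ 1 → w' i = w i) →
        ∏ i ∈ (univ.erase 0).erase 1, fac q π w' i = ∏ i ∈ (univ.erase 0).erase 1, fac q π w i := by
      intro w' hw'
      apply Finset.prod_congr rfl
      intro i hi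
      simp only [mem_erase, mem_univ, and_true] at hi
      have a1 : π i ≠ 0 := fun h' => hi.1 (by rw [← h1' i, h', h])
      have a2 : π i ≠ 1 := fun h' => hi.2 (by rw [← h1' i, h', h10])
      simp only [fac, hw' i hi.2 hi.1, hw' _ a1 a2]
    rw [rest wp hp, rest wm hm]
    simp only [fac, h, h10, hp0, hp1, hm0, hm1, v0, v1]
    rcases hw : w 0 <;> rcases hw' : w 1 <;> simp
    · ring
    · left; ring
  · obtain ⟨p1, p2⟩ := partner hπ h
    have n1 : π 0 ≠ 0 := hπ.2.1 0
    have n2 : π 1 ≠ 0 := fun h' => by rw [h'] at p1; rw [v0] at p1; omega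
    have n3 : π 1 ≠ 1 := hπ.2.1 1
    have n4 : π 0 ≠ π 1 := fun h' => by rw [h'] at p2; omega
    have four : ∀ f : Fin (2 * n) → L, ∏ i, f i = f 0 * f 1 * (f (π 0) * f (π 1) *
        ∏ i ∈ (((univ.erase 0).erase 1).erase (π 0)).erase (π 1), f i) := by
      intro f
      rw [prod_two f 0 1 h01,
        ← Finset.mul_prod_erase ((univ.erase 0).erase 1) f (a := π 0) (by simp [h, n1]),
        ← Finset.mul_prod_erase (((univ.erase 0).erase 1).erase (π 0)) f (a := π 1)
          (by simp [n2, n3, n4.symm]), mul_assoc (f (π 0))]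
    unfold wt
    rw [four, four (fac q π wp), four (fac q π wm)]
    have rest : ∀ w' : Fin (2 * n) → Bool, (∀ i, i ≠ 0 → i ≠ 1 → w' i = w i) →
        ∏ i ∈ (((univ.erase 0).erase 1).erase (π 0)).erase (π 1), fac q π w' i =
        ∏ i ∈ (((univ.erase 0).erase 1).erase (π 0)).erase (π 1), fac q (e1f (2 * n) π) w i := by
      intro w' hw'
      apply Finset.prod_congr rfl
      intro i hi
      simp only [mem_erase, mem_univ, and_true] at hi
      obtain ⟨b1, b2, b3, b4⟩ := hi
      have a1 : π i ≠ 0 := fun h' => b2 (by rw [← h1' i, h'])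
      have a2 : π i ≠ 1 := fun h' => b1 (by rw [← h1' i, h'])
      have : e1f (2 * n) π i = π i := by simp [e1f, b1, b2, b3, b4]
      simp only [fac, hw' i b4 b3, hw' _ a1 a2, this]
    rw [rest wp hp, rest wm hm]
    have E0 : e1f (2 * n) π 0 = 1 := by simp [e1f]
    have E1 : e1f (2 * n) π 1 = 0 := by simp [e1f, h01.symm]
    have E2 : e1f (2 * n) π (π 0) = π 1 := by simp [e1f, n1, h]
    have E3 : e1f (2 * n) π (π 1) = π 0 := by simp [e1f, n2, n3, n4.symm]
    simp only [fac, E0, E1, E2, E3, h1', hp0, hp1, hm0, hm1, v0, v1, hp _ n1 h, hp _ n2 n3,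
      hm _ n1 h, hm _ n2 n3]
    have c1 : 0 < (π 0 : ℕ) := by omega
    have c2 : ¬ ((π 0 : ℕ) < π 1) := by omega
    have c3 : ¬ ((π 0 : ℕ) < 1) := by omega
    have c4 : ¬ ((π 1 : ℕ) < 1) := by omega
    have hq' : (1 - q) * q = 1 := by linear_combination -hq
    rcases hw : w 0 <;> rcases hw' : w 1 <;> rcases hw2 : w (π 0) <;> rcases hw3 : w (π 1) <;>
      simp [c1, c2, c4, p1, p2] <;>
      (try left) <;> rw [← mul_assoc (1 - q), hq', one_mul]

end Weights

end Scat
namespace Scat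

section Main

lemma same_openers {n : ℕ} {f g : Fin (2 * n) → Fin (2 * n)}
    (hf : IsLinkPattern n f) (hg : IsLinkPattern n g)
    (h : ∀ i : Fin (2 * n), (i : ℕ) < f i ↔ (i : ℕ) < g i) : f = g := by
  have hf1 : ∀ i, f (f i) = i := hf.1
  have hg1 : ∀ i, g (g i) = i := hg.1
  have main : ∀ m : ℕ, ∀ i : Fin (2 * n), 2 * n - (i : ℕ) ≤ m → (i : ℕ) < f i → f i = g i := by
    intro m
    induction m with
    | zero => intro i hi _; have := i.2; omega
    | succ m ih =>
      intro i hi hif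
      have hig := (h i).1 hif
      by_contra hne
      have aux : ∀ f' g' : Fin (2 * n) → Fin (2 * n), IsLinkPattern n f' → IsLinkPattern n g' →
          (∀ i : Fin (2 * n), (i : ℕ) < f' i ↔ (i : ℕ) < g' i) →
          (∀ j : Fin (2 * n), (i : ℕ) < j → (j : ℕ) < g' j → f' j = g' j) →
          (i : ℕ) < f' i → (f' i : ℕ) < g' i → False := by
        intro f' g' hf' hg' hh hmax h1 h2
        have hf1 : ∀ i, f' (f' i) = i := hf'.1
        have hg1 : ∀ i, g' (g' i) = i := hg'.1
        have hcl : ¬ ((f' i : ℕ) < g' (f' i)) := by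
          rw [← hh, hf1]; omega
        have hne' := hg'.2.1 (f' i)
        have hlt : (g' (f' i) : ℕ) < f' i := by
          have : (g' (f' i) : ℕ) ≠ f' i := fun h => hne' (Fin.ext h)
          omega
        have hgt : (i : ℕ) < g' (f' i) := by
          have h3 := hg'.2.2 (g' (f' i)) i
          rw [hg1] at h3
          have : (g' (f' i) : ℕ) ≠ i := fun h => by
            have e : g' (f' i) = i := Fin.ext h
            have e2 : f' i = g' i := by rw [← e, hg1, e]
            rw [e2] at h2; omega
          omega
        have := hmax _ hgt (by rw [hg1]; exact hlt)
        rw [hg1] at this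
        have e : g' (f' i) = i := by
          apply hf'.1.injective; rw [this]
        rw [e] at hgt; omega
      have hmax : ∀ j : Fin (2 * n), (i : ℕ) < j → (j : ℕ) < f j → f j = g j := by
        intro j hj hj'
        exact ih j (by have := j.2; omega) hj'
      rcases Nat.lt_trichotomy (f i : ℕ) (g i) with a | a | a
      · exact aux f g hf hg h (fun j hj hj' => hmax j hj ((h j).2 hj')) hif a
      · exact hne (Fin.ext a)
      · exact aux g f hg hf (fun j => (h j).symm) (fun j hj hj' => (hmax j hj hj').symm) hig a
  funext i
  rcases Nat.lt_trichotomy (i : ℕ) (f i) with a | a | a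
  · exact main _ i le_rfl a
  · exact absurd (Fin.ext a.symm) (hf.2.1 i)
  · have := main _ (f i) le_rfl (by rw [hf1]; exact a)
    rw [hf1] at this
    rw [this, hg1]
    rw [← this]

/-- the word marking the openers -/
def opw {N : ℕ} (σ : Fin N → Fin N) : Fin N → Bool := fun i => decide ((i : ℕ) < σ i)

def pot {N : ℕ} (w : Fin N → Bool) : ℕ := ∑ i, if w i then (i : ℕ) else 0

lemma opw_ne {n : ℕ} {σ : Fin (2 * n) → Fin (2 * n)} (hσ : IsLinkPattern n σ) (i) :
    opw σ i ≠ opw σ (σ i) := by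
  have h1 : σ (σ i) = i := hσ.1 i
  have : (σ i : ℕ) ≠ i := fun h => hσ.2.1 i (Fin.ext h)
  simp only [opw, h1]
  rcases Nat.lt_or_gt_of_ne this with a | a
  · simp [a]; exact Nat.le_of_lt a
  · simp [a]; exact Nat.le_of_lt a

lemma sum_invol {N : ℕ} {σ : Fin N → Fin N} (hσ : Function.Involutive σ) (f : Fin N → ℕ) :
    2 * ∑ i, f i = ∑ i, (f i + f (σ i)) := by
  rw [Finset.sum_add_distrib, two_mul]
  congr 1
  exact Fintype.sum_equiv hσ.toPerm _ _ (fun i => by simp [hσ i])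

lemma pot_le {n : ℕ} {π : Fin (2 * n) → Fin (2 * n)} (hπ : IsLinkPattern n π)
    (w : Fin (2 * n) → Bool) (hw : ∀ i, w i ≠ w (π i)) (hle : pot w ≤ pot (opw π)) :
    w = opw π := by
  have e1 := sum_invol hπ.1 (fun i => if w i then (i : ℕ) else 0)
  have e2 := sum_invol hπ.1 (fun i => if opw π i then (i : ℕ) else 0)
  have hterm : ∀ i ∈ (univ : Finset (Fin (2 * n))),
      ((if opw π i then (i : ℕ) else 0) + (if opw π (π i) then ((π i : Fin (2 * n)) : ℕ) else 0)) ≤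
      ((if w i then (i : ℕ) else 0) + (if w (π i) then ((π i : Fin (2 * n)) : ℕ) else 0)) := by
    intro i _
    have h1 : π (π i) = i := hπ.1 i
    have := hw i
    simp only [opw, h1, decide_eq_true_eq]
    rcases hx : w i <;> rcases hy : w (π i) <;> simp_all <;> split_ifs <;> omega
  have hsum := (Finset.sum_eq_sum_iff_of_le hterm).1 (by
    apply le_antisymm (Finset.sum_le_sum hterm)
    rw [← e1, ← e2]
    unfold pot at hle
    omega)
  funext i
  have := hsum i (mem_univ i)
  have h1 : π (π i) = i := hπ.1 i
  have hwi := hw i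
  have hne : (π i : ℕ) ≠ i := fun h => hπ.2.1 i (Fin.ext h)
  simp only [opw, h1, decide_eq_true_eq] at this ⊢
  rcases hx : w i <;> rcases hy : w (π i) <;> simp_all <;> split_ifs at this <;> omega

lemma wt_ne_zero {L : Type*} [Field L] {q : L} (hq0 : q ≠ 0) {N : ℕ} {σ : Fin N → Fin N}
    {w : Fin N → Bool} : wt q σ w ≠ 0 ↔ ∀ i, w i ≠ w (σ i) := by
  unfold wt fac
  rw [Finset.prod_ne_zero_iff]
  constructor
  · intro h i hi
    exact h i (mem_univ i) (if_pos hi)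
  · intro h i _
    rw [if_neg (h i)]
    split_ifs
    · exact hq0
    · exact one_ne_zero

def LP (n : ℕ) : Finset (Fin (2 * n) → Fin (2 * n)) := univ.filter (fun π => IsLinkPattern n π)

lemma mem_LP {n : ℕ} {σ} : σ ∈ LP n ↔ IsLinkPattern n σ := by simp [LP]

noncomputable def psi {L : Type*} [Field L] (q : L) {n : ℕ}
    (Ψ : (Fin (2 * n) → Fin (2 * n)) → Polynomial L) (w : Fin (2 * n) → Bool) : Polynomial L :=
  ∑ σ ∈ LP n, C (wt q σ w) * Ψ σ

lemma psi_injective {L : Type*} [Field L] {q : L} (hq0 : q ≠ 0) {n : ℕ}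
    (Ψ : (Fin (2 * n) → Fin (2 * n)) → Polynomial L)
    (h : ∀ σ, IsLinkPattern n σ → psi q Ψ (opw σ) = 0) :
    ∀ σ, IsLinkPattern n σ → Ψ σ = 0 := by
  have main : ∀ m : ℕ, ∀ σ, IsLinkPattern n σ → pot (opw σ) < m → Ψ σ = 0 := by
    intro m
    induction m with
    | zero => intro _ _ h; omega
    | succ m ih =>
      intro σ hσ hm
      have e := h σ hσ
      unfold psi at e
      rw [Finset.sum_eq_single σ] at e
      · rcases mul_eq_zero.1 e with e | e
        · exact absurd (C_eq_zero.1 e) ((wt_ne_zero hq0).2 (opw_ne hσ))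
        · exact e
      · intro π hπ hne
        rw [mem_LP] at hπ
        by_cases hw : wt q π (opw σ) = 0
        · rw [hw]; simp
        · have hw' := (wt_ne_zero hq0).1 hw
          rcases Nat.lt_or_ge (pot (opw π)) (pot (opw σ)) with a | a
          · rw [ih π hπ (by omega), mul_zero]
          · exfalso
            have := pot_le hπ _ hw' a
            apply hne
            apply same_openers hπ hσ
            intro i
            have := congrFun this i
            simp only [opw, decide_eq_decide] at this
            exact this.symm
      · intro hh; exact absurd (mem_LP.2 hσ) hh
  intro σ hσ
  exact main _ σ hσ (Nat.lt_succ_self _)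

lemma psi_eq {L : Type*} [Field L] {q : L} (hq : q ^ 2 - q + 1 = 0) {n : ℕ} [NeZero (2 * n)]
    (Ψ : (Fin (2 * n) → Fin (2 * n)) → Polynomial L)
    (heq : ∀ σ, IsLinkPattern n σ →
      Polynomial.X * Ψ σ +
          (1 - Polynomial.X) *
            ∑ π ∈ Finset.univ.filter
                (fun π => IsLinkPattern n π ∧ e1f (2 * n) π = σ), Ψ π
        = Ψ (rotinvf (2 * n) σ))
    (w wp wm : Fin (2 * n) → Bool)
    (hp : ∀ i, i ≠ 0 → i ≠ 1 → wp i = w i) (hm : ∀ i, i ≠ 0 → i ≠ 1 → wm i = w i)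
    (hp0 : wp 0 = true) (hp1 : wp 1 = false) (hm0 : wm 0 = false) (hm1 : wm 1 = true) :
    X * psi q Ψ w + (1 - X) * (C (if w 0 = w 1 then 0 else if w 0 then q else 1) *
      (psi q Ψ wp + C (1 - q) * psi q Ψ wm)) =
    C (if w 0 then q else q⁻¹) * psi q Ψ (fun i => w (i + 1)) := by
  have hq0 : q ≠ 0 := by rintro rfl; simp at hq
  have e1 : ∑ σ ∈ LP n, C (wt q σ w) * (∑ π ∈ Finset.univ.filter
                (fun π => IsLinkPattern n π ∧ e1f (2 * n) π = σ), Ψ π) =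
      ∑ π ∈ LP n, C (wt q (e1f (2 * n) π) w) * Ψ π := by
    have := Finset.sum_fiberwise_of_maps_to (s := LP n) (t := LP n) (g := e1f (2 * n))
      (fun π hπ => mem_LP.2 (e1_LP (mem_LP.1 hπ))) (fun π => C (wt q (e1f (2 * n) π) w) * Ψ π)
    rw [← this]
    apply Finset.sum_congr rfl
    intro σ hσ
    rw [Finset.mul_sum, LP, Finset.filter_filter]
    apply Finset.sum_congr rfl
    intro π hπ
    simp only [mem_filter, mem_univ, true_and] at hπ
    rw [hπ.2]
  have e2 : ∑ π ∈ LP n, C (wt q (e1f (2 * n) π) w) * Ψ π =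
      C (if w 0 = w 1 then 0 else if w 0 then q else 1) *
      (psi q Ψ wp + C (1 - q) * psi q Ψ wm) := by
    unfold psi
    rw [Finset.mul_sum, ← Finset.sum_add_distrib, Finset.mul_sum]
    apply Finset.sum_congr rfl
    intro π hπ
    rw [wt_e1 q hq (mem_LP.1 hπ) w wp wm hp hm hp0 hp1 hm0 hm1]
    simp only [C_mul, C_add]
    ring
  have e3 : ∑ σ ∈ LP n, C (wt q σ w) * Ψ (rotinvf (2 * n) σ) =
      C (if w 0 then q else q⁻¹) * psi q Ψ (fun i => w (i + 1)) := by
    have hmaps : ∀ σ ∈ LP n, rotinvf (2 * n) σ ∈ LP n := fun σ hσ =>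
      mem_LP.2 (rotinv_LP (mem_LP.1 hσ))
    have himg : (LP n).image (rotinvf (2 * n)) = LP n := by
      apply Finset.eq_of_subset_of_card_le
      · exact Finset.image_subset_iff.2 hmaps
      · rw [Finset.card_image_of_injective _ rotinv_inj]
    unfold psi
    conv_rhs => rw [← himg]
    rw [Finset.sum_image (fun a _ b _ h => rotinv_inj h), Finset.mul_sum]
    apply Finset.sum_congr rfl
    intro σ hσ
    rw [wt_rot q hq0 (mem_LP.1 hσ) w, C_mul, mul_assoc]
  rw [← e2, ← e1, ← e3]
  unfold psi
  rw [Finset.mul_sum, Finset.mul_sum, ← Finset.sum_add_distrib]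
  apply Finset.sum_congr rfl
  intro σ hσ
  rw [← heq σ (mem_LP.1 hσ)]
  ring

def toW (N : ℕ) (l : List Bool) : Fin N → Bool := fun i => l.getD i false

lemma toW_ofFn {N : ℕ} (w : Fin N → Bool) : toW N (List.ofFn w) = w := by
  funext i
  simp [toW]

lemma count_ofFn' {N : ℕ} (w : Fin N → Bool) :
    (List.ofFn w).count true = ∑ i, if w i then 1 else 0 := by
  induction N with
  | zero => simp
  | succ N ih =>
    rw [List.ofFn_succ, List.count_cons, ih, Fin.sum_univ_succ, add_comm]
    simp

lemma count_opw {n : ℕ} {σ : Fin (2 * n) → Fin (2 * n)} (hσ : IsLinkPattern n σ) :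
    (List.ofFn (opw σ)).count true = n := by
  rw [count_ofFn']
  have e := sum_invol hσ.1 (fun i => if opw σ i then 1 else 0)
  have : ∀ i, ((if opw σ i then 1 else 0) + (if opw σ (σ i) then 1 else 0) : ℕ) = 1 := by
    intro i
    have := opw_ne hσ i
    rcases hx : opw σ i <;> rcases hy : opw σ (σ i) <;> simp_all
  simp only [this] at e
  simp at e ⊢
  omega

/-- the equation on lists -/
lemma psi_list {L : Type*} [Field L] {q : L} (hq : q ^ 2 - q + 1 = 0) {n : ℕ} [NeZero (2 * n)]
    (Ψ : (Fin (2 * n) → Fin (2 * n)) → Polynomial L)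
    (heq : ∀ σ, IsLinkPattern n σ →
      Polynomial.X * Ψ σ +
          (1 - Polynomial.X) *
            ∑ π ∈ Finset.univ.filter
                (fun π => IsLinkPattern n π ∧ e1f (2 * n) π = σ), Ψ π
        = Ψ (rotinvf (2 * n) σ))
    (x y : Bool) (l : List Bool) (hl : l.length + 2 = 2 * n) :
    X * psi q Ψ (toW _ (x :: y :: l)) + (1 - X) * (C (if x = y then 0 else if x then q else 1) *
      (psi q Ψ (toW _ (true :: false :: l)) + C (1 - q) * psi q Ψ (toW _ (false :: true :: l)))) =
    C (if x then q else q⁻¹) * psi q Ψ (toW _ (y :: (l ++ [x]))) := by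
  have v1 := val_one' (n := n)
  have v0 := val_zero' (n := n)
  have ne : ∀ i : Fin (2 * n), i ≠ 0 → i ≠ 1 → ∃ k, (i : ℕ) = k + 2 := by
    intro i h0 h1
    have a : (i : ℕ) ≠ 0 := fun h => h0 (Fin.ext h)
    have b : (i : ℕ) ≠ 1 := fun h => h1 (Fin.ext (by rw [h, v1]))
    exact ⟨i - 2, by omega⟩
  have := psi_eq hq Ψ heq (toW _ (x :: y :: l)) (toW _ (true :: false :: l))
    (toW _ (false :: true :: l))
    (by intro i h0 h1; obtain ⟨k, hk⟩ := ne i h0 h1; simp [toW, hk])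
    (by intro i h0 h1; obtain ⟨k, hk⟩ := ne i h0 h1; simp [toW, hk])
    (by simp [toW]) (by simp only [toW, v1]; rfl) (by simp [toW]) (by simp only [toW, v1]; rfl)
  have hx : toW (2 * n) (x :: y :: l) 0 = x := by simp [toW]
  have hy : toW (2 * n) (x :: y :: l) 1 = y := by simp only [toW, v1]; rfl
  have hrot : (fun i => toW (2 * n) (x :: y :: l) (i + 1)) = toW (2 * n) (y :: (l ++ [x])) := by
    funext i
    simp only [toW, val_add1]
    have := i.2
    split_ifs with h
    · have : (i : ℕ) = l.length + 1 := by omega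
      rw [this]
      simp
    · rw [List.getD_cons_succ, ← List.cons_append, List.getD_append]
      simp; omega
  rw [hx, hy, hrot] at this
  exact this

lemma vanish {L : Type*} [Field L] {q : L} (hq : q ^ 2 - q + 1 = 0) {d n : ℕ} (hn : n = d + 2)
    [NeZero (2 * n)]
    (Ψ : (Fin (2 * n) → Fin (2 * n)) → Polynomial L)
    (heq : ∀ σ, IsLinkPattern n σ →
      Polynomial.X * Ψ σ +
          (1 - Polynomial.X) *
            ∑ π ∈ Finset.univ.filter
                (fun π => IsLinkPattern n π ∧ e1f (2 * n) π = σ), Ψ π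
        = Ψ (rotinvf (2 * n) σ))
    (hdeg : ∀ σ, IsLinkPattern n σ → (Ψ σ).natDegree ≤ d) :
    ∀ σ, IsLinkPattern n σ → Ψ σ = 0 := by
  have hq0 : q ≠ 0 := by rintro rfl; simp at hq
  have hqi : q⁻¹ = 1 - q := by
    apply inv_eq_of_mul_eq_one_right; linear_combination -hq
  apply psi_injective hq0 Ψ
  set good : List Bool → Bool → List Bool → Prop := fun v a u =>
    (v.length + 1 + u.length = 2 * n ∧
      v.count true + (if a then 1 else 0) + u.count true = d + 2) with hgood
  -- the four equations as polynomial identities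
  have hal : ∀ v a u, good (a :: v) a u →
      X * psi q Ψ (toW _ (a :: ((a :: u) ++ v.reverse))) =
        C (if a then q else q⁻¹) * psi q Ψ (toW _ (a :: (u ++ (a :: v).reverse))) := by
    intro v a u hg
    have := psi_list hq Ψ heq a a (u ++ v.reverse) (by
      have := hg.1; simp at this ⊢; omega)
    simpa using this
  have hB : ∀ v u, good (true :: v) false u →
      C q * psi q Ψ (toW _ (false :: (u ++ (true :: v).reverse))) =
      (C q * psi q Ψ (toW _ (true :: ((false :: u) ++ v.reverse))) +
        psi q Ψ (toW _ (false :: ((true :: u) ++ v.reverse)))) +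
      X * (C (1 - q) * psi q Ψ (toW _ (true :: ((false :: u) ++ v.reverse))) -
        psi q Ψ (toW _ (false :: ((true :: u) ++ v.reverse)))) := by
    intro v u hg
    have := psi_list hq Ψ heq true false (u ++ v.reverse) (by
      have := hg.1; simp at this ⊢; omega)
    simp only [if_true, Bool.true_eq_false, if_false] at this
    simp only [List.reverse_cons, List.cons_append, ← List.append_assoc] at this ⊢
    rw [← this]
    have hc : (C q * C (1 - q) : L[X]) = 1 := by
      rw [← C_mul, ← C_1]; congr 1; linear_combination -hq
    have hc2 : (C (1 - q) : L[X]) = 1 - C q := by rw [C_sub, C_1]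
    generalize psi q Ψ _ = A
    generalize psi q Ψ _ = B
    rw [hc2] at hc ⊢
    linear_combination (1 - X) * B * hc
  have hD : ∀ v u, good (true :: v) false u →
      psi q Ψ (toW _ (true :: (u ++ (false :: v).reverse))) =
      (C q * psi q Ψ (toW _ (true :: ((false :: u) ++ v.reverse))) +
        psi q Ψ (toW _ (false :: ((true :: u) ++ v.reverse)))) -
      X * (C (q ^ 2) * (C (1 - q) * psi q Ψ (toW _ (true :: ((false :: u) ++ v.reverse))) -
        psi q Ψ (toW _ (false :: ((true :: u) ++ v.reverse))))) := by
    intro v u hg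
    have := psi_list hq Ψ heq false true (u ++ v.reverse) (by
      have := hg.1; simp at this ⊢; omega)
    simp only [Bool.false_eq_true, if_false] at this
    simp only [List.reverse_cons, List.cons_append, ← List.append_assoc] at this ⊢
    rw [hqi] at this
    have hc2 : (C (1 - q) : L[X]) = 1 - C q := by rw [C_sub, C_1]
    have hc : (C q * (1 - C q) : L[X]) = 1 := by
      rw [← hc2, ← C_mul, ← C_1]; congr 1; linear_combination -hq
    rw [C_pow]
    rw [hc2, C_1] at this
    rw [hc2]
    generalize psi q Ψ (toW (2 * n) (true :: false :: (u ++ v.reverse))) = A at *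
    generalize psi q Ψ (toW (2 * n) (false :: true :: (u ++ v.reverse))) = B at *
    generalize psi q Ψ _ = D at *
    linear_combination -D * hc - C q * this + (B + X * C q * A) * hc
  have hv := linear_vanish d (2 * n) q hq
    (fun v a u k => (psi q Ψ (toW _ (a :: (u ++ v.reverse)))).coeff k) good
    (fun v a u => Iff.rfl) ?_ ?_ ?_ ?_ ?_ ?_ ?_
  · intro σ hσ
    have hc := count_opw hσ
    have hl : (List.ofFn (opw σ)).length = 2 * n := List.length_ofFn
    have hw := toW_ofFn (opw σ)
    match hlist : List.ofFn (opw σ) with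
    | [] => rw [hlist] at hl; simp at hl; omega
    | a :: u =>
      rw [hlist] at hl hc hw
      have := hv [] a u ⟨by simp at hl ⊢; omega, by
        rw [List.count_cons] at hc
        cases a <;> simp at hc ⊢ <;> omega⟩
      simp only [List.reverse_nil, List.append_nil, hw] at this
      ext k
      rw [this k, coeff_zero]
  · intro v a u _ k hk
    apply Polynomial.coeff_eq_zero_of_natDegree_lt
    refine lt_of_le_of_lt ?_ hk
    unfold psi
    apply Polynomial.natDegree_sum_le_of_forall_le
    intro σ hσ
    exact (natDegree_C_mul_le _ _).trans (hdeg σ (mem_LP.1 hσ))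
  · intro v a u hg
    have := congrArg (fun p => coeff p 0) (hal v a u hg)
    simp only [mul_coeff_zero, coeff_X_zero, zero_mul, coeff_C_zero] at this
    rcases mul_eq_zero.1 this.symm with h | h
    · exfalso
      have : (if a then q else q⁻¹) ≠ 0 := by split_ifs <;> simp [hq0]
      exact this h
    · exact h
  · intro v a u hg k
    have := congrArg (fun p => coeff p (k + 1)) (hal v a u hg)
    simp only [coeff_X_mul, coeff_C_mul] at this
    have hc : (if a then q else q⁻¹) ≠ 0 := by split_ifs <;> simp [hq0]
    show coeff _ _ = 0 ↔ coeff _ _ = 0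
    rw [this, mul_eq_zero]
    exact ⟨Or.inr, fun h => h.resolve_left hc⟩
  · intro v u hg
    have := congrArg (fun p => coeff p 0) (hB v u hg)
    simpa using this
  · intro v u hg k
    have := congrArg (fun p => coeff p (k + 1)) (hB v u hg)
    simpa only [coeff_add, coeff_sub, coeff_X_mul, coeff_C_mul] using this
  · intro v u hg
    have := congrArg (fun p => coeff p 0) (hD v u hg)
    simpa using this
  · intro v u hg k
    have := congrArg (fun p => coeff p (k + 1)) (hD v u hg)
    simpa only [coeff_add, coeff_sub, coeff_X_mul, coeff_C_mul] using this

end Main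

end Scat

/-- **Degree lower bound for polynomial solutions of the scattering equation.**
Any polynomial solution `Ψ(t)` of `X₁(t)Ψ(t) = RΨ(t)` on the span of link
patterns `LP(2n)`, not all of whose components vanish, has some component of
degree at least `n − 1` in `t`. -/
theorem scattering_degree_lower_bound {K : Type*} [Field K] (n : ℕ) [NeZero (2 * n)]
    (Ψ : (Fin (2 * n) → Fin (2 * n)) → Polynomial K)
    (heq : ∀ σ, IsLinkPattern n σ →
      Polynomial.X * Ψ σ +
          (1 - Polynomial.X) *
            ∑ π ∈ Finset.univ.filter
                (fun π => IsLinkPattern n π ∧ e1f (2 * n) π = σ), Ψ π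
        = Ψ (rotinvf (2 * n) σ))
    (hne : ∃ f, IsLinkPattern n f ∧ Ψ f ≠ 0) :
    ∃ f, IsLinkPattern n f ∧ n - 1 ≤ (Ψ f).natDegree := by
  by_contra hcon
  push Not at hcon
  have hn0 := NeZero.ne (2 * n)
  obtain ⟨f0, hf0, hf0'⟩ := hne
  have hf1 := hcon f0 hf0
  obtain ⟨d, hd⟩ : ∃ d, n = d + 2 := ⟨n - 2, by omega⟩
  obtain ⟨q, hq⟩ : ∃ q : AlgebraicClosure K, q ^ 2 - q + 1 = 0 := by
    have hdeg : (Polynomial.X ^ 2 - Polynomial.X + 1 : Polynomial (AlgebraicClosure K)).degree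
        ≠ 0 := by
      have : (Polynomial.X ^ 2 - Polynomial.X + 1 : Polynomial (AlgebraicClosure K)).degree = 2 := by
        compute_degree!
      rw [this]; decide
    obtain ⟨q, hq⟩ := IsAlgClosed.exists_root _ hdeg
    exact ⟨q, by simpa [Polynomial.IsRoot] using hq⟩
  have hv := Scat.vanish hq hd (fun σ => (Ψ σ).map (algebraMap K (AlgebraicClosure K))) ?_ ?_
    f0 hf0
  · exact hf0' ((Polynomial.map_eq_zero _).1 hv)
  · intro σ hσ
    have := congrArg (Polynomial.map (algebraMap K (AlgebraicClosure K))) (heq σ hσ)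
    simpa [Polynomial.map_sum] using this
  · intro σ hσ
    have := hcon σ hσ
    have h2 := Polynomial.natDegree_map_le (f := algebraMap K (AlgebraicClosure K)) (p := Ψ σ)
    omega
end

section
/- The total number of n×n alternating sign matrices (equivalently, fully-packed loop configurations on the n×n square with alternating boundary conditions and fixed boundary coloring) is ∏_{j=0}^{n-1} (3j+1)!/(n+j)!. -/
open Finset

/-- An alternating sign matrix of size `n`: entries in `{−1, 0, 1}`, every row
and column sums to `1`, and the nonzero entries alternate in sign along each
row and column (equivalently, all partial row and column sums are `0` or `1`). -/
def IsASM (n : ℕ) (A : Matrix (Fin n) (Fin n) ℤ) : Prop :=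
  (∀ i j, A i j = -1 ∨ A i j = 0 ∨ A i j = 1) ∧
  (∀ i, ∑ j, A i j = 1) ∧
  (∀ j, ∑ i, A i j = 1) ∧
  (∀ i k, (∑ j ∈ Finset.univ.filter (fun j => j ≤ k), A i j) = 0 ∨
          (∑ j ∈ Finset.univ.filter (fun j => j ≤ k), A i j) = 1) ∧
  (∀ j k, (∑ i ∈ Finset.univ.filter (fun i => i ≤ k), A i j) = 0 ∨
          (∑ i ∈ Finset.univ.filter (fun i => i ≤ k), A i j) = 1)

namespace SixV

/-- Six-vertex local weight: `h, m` horizontal edges (left, right), `b, c` vertical edges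
(top, bottom). -/
def L (w x y : ℂ) : Bool → Bool → Bool → Bool → ℂ
  | false, false, false, false => x - w * y
  | true, true, true, true => x - w * y
  | false, false, true, true => y - w * x
  | true, true, false, false => y - w * x
  | false, true, false, true => 1 - w
  | true, false, true, false => (1 - w) * (x * y)
  | _, _, _, _ => 0

/-- The intertwining matrix. -/
def R (w x X : ℂ) : Bool → Bool → Bool → Bool → ℂ
  | false, false, false, false => X - w ^ 2 * x
  | true, true, true, true => X - w ^ 2 * x
  | false, true, false, true => x * (1 - w ^ 2)
  | true, false, true, false => X * (1 - w ^ 2)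
  | false, true, true, false => w * (x - X)
  | true, false, false, true => w * (x - X)
  | _, _, _, _ => 0

lemma ybe (w x X y : ℂ) (hw : w ^ 2 + w + 1 = 0) (h₁ h₂ p₁ p₂ c d : Bool) :
    ∑ k₁, ∑ k₂, R w x X h₁ h₂ k₁ k₂ * ∑ b, L w x y k₁ p₁ c b * L w X y k₂ p₂ b d =
    ∑ k₁, ∑ k₂, (∑ b, L w X y h₁ k₁ c b * L w x y h₂ k₂ b d) * R w x X k₁ k₂ p₁ p₂ := by
  have hw2 : w ^ 2 = - w - 1 := by linear_combination hw
  cases h₁ <;> cases h₂ <;> cases p₁ <;> cases p₂ <;> cases c <;> cases d <;>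
    simp only [Fintype.sum_bool, L, R] <;> first | ring1 | grind

/-- Row transfer weights. -/
def T (w x : ℂ) : (n : ℕ) → (Fin n → ℂ) → Bool → Bool → (Fin n → Bool) → (Fin n → Bool) → ℂ
  | 0, _, h, h', _, _ => if h = h' then 1 else 0
  | n + 1, y, h, h', s, s' =>
    ∑ m, L w x (y 0) h m (s 0) (s' 0) * T w x n (Fin.tail y) m h' (Fin.tail s) (Fin.tail s')

lemma sum_cons {M : Type*} [AddCommMonoid M] (n : ℕ) (f : (Fin (n + 1) → Bool) → M) :
    ∑ s, f s = ∑ b, ∑ t : Fin n → Bool, f (Fin.cons b t) := by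
  rw [← Fintype.sum_prod_type', ← (Fin.consEquiv (fun _ : Fin (n+1) => Bool)).sum_comp]
  rfl

lemma two_row (w x X : ℂ) (n : ℕ) (y : Fin (n + 1) → ℂ) (k₁ k₂ m₁ m₂ : Bool)
    (s s' : Fin (n + 1) → Bool) :
    ∑ u, T w x (n + 1) y k₁ m₁ s u * T w X (n + 1) y k₂ m₂ u s' =
    ∑ p₁, ∑ p₂, (∑ b, L w x (y 0) k₁ p₁ (s 0) b * L w X (y 0) k₂ p₂ b (s' 0)) *
      ∑ t, T w x n (Fin.tail y) p₁ m₁ (Fin.tail s) t *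
        T w X n (Fin.tail y) p₂ m₂ t (Fin.tail s') := by
  rw [sum_cons]
  simp only [T, Fin.cons_zero, Fin.tail_cons, Fintype.sum_bool]
  simp only [← Finset.sum_add_distrib, Finset.mul_sum]
  refine Finset.sum_congr rfl fun t _ => ?_
  ring

lemma rtt (w x X : ℂ) (hw : w ^ 2 + w + 1 = 0) : ∀ (n : ℕ) (y : Fin n → ℂ)
    (h₁ h₂ m₁ m₂ : Bool) (s s' : Fin n → Bool),
    ∑ k₁, ∑ k₂, R w x X h₁ h₂ k₁ k₂ * ∑ u, T w x n y k₁ m₁ s u * T w X n y k₂ m₂ u s' =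
    ∑ k₁, ∑ k₂, (∑ u, T w X n y h₁ k₁ s u * T w x n y h₂ k₂ u s') * R w x X k₁ k₂ m₁ m₂ := by
  intro n
  induction n with
  | zero =>
    intro y h₁ h₂ m₁ m₂ s s'
    simp only [T]
    cases h₁ <;> cases h₂ <;> cases m₁ <;> cases m₂ <;> simp [R]
  | succ n ih =>
    intro y h₁ h₂ m₁ m₂ s s'
    simp only [two_row]
    have key : ∀ p₁ p₂, _ := fun p₁ p₂ => ybe w x X (y 0) hw h₁ h₂ p₁ p₂ (s 0) (s' 0)
    have ih' : ∀ p₁ p₂, _ := fun p₁ p₂ => ih (Fin.tail y) p₁ p₂ m₁ m₂ (Fin.tail s) (Fin.tail s')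
    generalize hG : (fun p₁ p₂ q₁ q₂ => ∑ t, T w x n (Fin.tail y) p₁ q₁ (Fin.tail s) t *
        T w X n (Fin.tail y) p₂ q₂ t (Fin.tail s')) = G at *
    generalize hG' : (fun p₁ p₂ q₁ q₂ => ∑ t, T w X n (Fin.tail y) p₁ q₁ (Fin.tail s) t *
        T w x n (Fin.tail y) p₂ q₂ t (Fin.tail s')) = G' at *
    have e1 : ∀ p₁ p₂ q₁ q₂, ∑ t, T w x n (Fin.tail y) p₁ q₁ (Fin.tail s) t *
        T w X n (Fin.tail y) p₂ q₂ t (Fin.tail s') = G p₁ p₂ q₁ q₂ := by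
      intros; rw [← hG]
    have e2 : ∀ p₁ p₂ q₁ q₂, ∑ t, T w X n (Fin.tail y) p₁ q₁ (Fin.tail s) t *
        T w x n (Fin.tail y) p₂ q₂ t (Fin.tail s') = G' p₁ p₂ q₁ q₂ := by
      intros; rw [← hG']
    simp only [e1, e2] at ih' ⊢
    generalize hH : (fun k₁ k₂ p₁ p₂ => ∑ b, L w x (y 0) k₁ p₁ (s 0) b *
      L w X (y 0) k₂ p₂ b (s' 0)) = H at *
    generalize hH' : (fun k₁ k₂ p₁ p₂ => ∑ b, L w X (y 0) k₁ p₁ (s 0) b *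
      L w x (y 0) k₂ p₂ b (s' 0)) = H' at *
    have f1 : ∀ k₁ k₂ p₁ p₂, ∑ b, L w x (y 0) k₁ p₁ (s 0) b *
      L w X (y 0) k₂ p₂ b (s' 0) = H k₁ k₂ p₁ p₂ := by intros; rw [← hH]
    have f2 : ∀ k₁ k₂ p₁ p₂, ∑ b, L w X (y 0) k₁ p₁ (s 0) b *
      L w x (y 0) k₂ p₂ b (s' 0) = H' k₁ k₂ p₁ p₂ := by intros; rw [← hH']
    simp only [f1, f2] at key ⊢
    calc _ = ∑ p₁, ∑ p₂, (∑ k₁, ∑ k₂, R w x X h₁ h₂ k₁ k₂ * H k₁ k₂ p₁ p₂) * G p₁ p₂ m₁ m₂ := by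
          simp only [Fintype.sum_bool]; ring
      _ = ∑ k₁, ∑ k₂, H' h₁ h₂ k₁ k₂ * ∑ p₁, ∑ p₂, R w x X k₁ k₂ p₁ p₂ * G p₁ p₂ m₁ m₂ := by
          simp only [key]; simp only [Fintype.sum_bool]; ring
      _ = _ := by
          simp only [ih']; simp only [Fintype.sum_bool]; ring

/-- The row operator with domain-wall boundary. -/
def B (w x : ℂ) (n : ℕ) (y : Fin n → ℂ) : Matrix (Fin n → Bool) (Fin n → Bool) ℂ :=
  Matrix.of fun s s' => T w x n y false true s s'

lemma B_comm (w x X : ℂ) (hw : w ^ 2 + w + 1 = 0) (n : ℕ) (y : Fin n → ℂ) 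
    (hx : X ≠ w ^ 2 * x) : Commute (B w x n y) (B w X n y) := by
  ext s s'
  have := rtt w x X hw n y false false true true s s'
  simp only [Fintype.sum_bool, R] at this
  simp only [Matrix.mul_apply, B, Matrix.of_apply]
  refine mul_left_cancel₀ (sub_ne_zero.2 hx) ?_
  linear_combination this

end SixV

namespace SixV

lemma T_one_one (w x : ℂ) : ∀ (n : ℕ) (y : Fin n → ℂ) (s' : Fin n → Bool),
    T w x n y true true (fun _ => false) s' =
      if s' = (fun _ => false) then ∏ j, (y j - w * x) else 0 := by
  intro n
  induction n with
  | zero => intro y s'; simp [T, Subsingleton.elim s' (fun _ => false)]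
  | succ n ih =>
    intro y s'
    have ht : Fin.tail (fun _ : Fin (n + 1) => false) = fun _ => false := rfl
    have hs : s' = (fun _ => false) ↔ s' 0 = false ∧ Fin.tail s' = fun _ => false := by
      constructor
      · rintro rfl; exact ⟨rfl, rfl⟩
      · rintro ⟨h1, h2⟩
        ext i
        refine Fin.cases h1 (fun j => congrFun h2 j) i
    simp only [T, ht, Fintype.sum_bool, ih, hs, Fin.prod_univ_succ]
    cases h : s' 0 <;> simp [L, Fin.tail]

/-- Partition function with domain wall boundary conditions. -/
noncomputable def Z (w : ℂ) (n : ℕ) (x y : Fin n → ℂ) : ℂ :=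
  (List.ofFn fun i => B w (x i) n y).prod (fun _ => false) (fun _ => true)

lemma B_cons (w x : ℂ) (n : ℕ) (y : Fin (n + 1) → ℂ) (b c : Bool) (s t : Fin n → Bool) :
    B w x (n + 1) y (Fin.cons b s) (Fin.cons c t) =
      ∑ m, L w x (y 0) false m b c * T w x n (Fin.tail y) m true s t := by
  simp [B, T]

lemma frozen_col (w : ℂ) (n : ℕ) (y : Fin (n + 1) → ℂ) (s t : Fin n → Bool) (l : List ℂ) :
    (l.map fun x => B w x (n + 1) y).prod (Fin.cons true s) (Fin.cons true t) =
    (l.map fun x => y 0 - w * x).prod * (l.map fun x => B w x n (Fin.tail y)).prod s t := by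
  induction l generalizing s with
  | nil =>
    simp only [List.map_nil, List.prod_nil, Matrix.one_apply, one_mul]
    congr 1
    simp [Fin.cons_right_injective]
  | cons x l ih =>
    simp only [List.map_cons, List.prod_cons, Matrix.mul_apply, sum_cons, Fintype.sum_bool,
      B_cons, L, ih, zero_mul, add_zero, zero_add, Finset.sum_const_zero]
    rw [Finset.mul_sum]
    refine Finset.sum_congr rfl fun u _ => ?_
    simp only [B, Matrix.of_apply]
    ring

lemma cons_const (n : ℕ) (b : Bool) :
    (fun _ : Fin (n + 1) => b) = Fin.cons b (fun _ : Fin n => b) := by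
  ext i; refine Fin.cases rfl (fun j => rfl) i

lemma Z_frozen (w : ℂ) (n : ℕ) (x y : Fin (n + 1) → ℂ) (h : x 0 = w * y 0) :
    Z w (n + 1) x y = (1 - w) * (∏ j : Fin n, (y j.succ - w * x 0)) *
      (∏ i : Fin n, (y 0 - w * x i.succ)) * Z w n (Fin.tail x) (Fin.tail y) := by
  unfold Z
  have := frozen_col w n y (fun _ => false) (fun _ => true) (List.ofFn (Fin.tail x))
  rw [List.map_ofFn, List.map_ofFn, List.map_ofFn, List.prod_ofFn] at this
  rw [List.ofFn_succ, List.prod_cons, Matrix.mul_apply, sum_cons, cons_const n true,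
    cons_const n false]
  simp only [B_cons, Fintype.sum_bool, L, h, T_one_one, sub_self, zero_mul, zero_add, add_zero,
    Finset.sum_const_zero, ite_mul, mul_ite, mul_zero, Finset.sum_ite_eq', Finset.mem_univ, if_true]
  have this' : (List.ofFn fun i : Fin n => B w (x i.succ) (n+1) y).prod
    (Fin.cons true fun _ => false) (Fin.cons true fun _ => true) = _ := this
  rw [this']
  simp only [Function.comp_def, Fin.tail]
  ring

lemma Z_perm (w : ℂ) (hw : w ^ 2 + w + 1 = 0) (n : ℕ) (x x' y : Fin n → ℂ)
    (hp : (List.ofFn x).Perm (List.ofFn x'))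
    (hx : ∀ i j, i ≠ j → x i ≠ w ^ 2 * x j) : Z w n x y = Z w n x' y := by
  unfold Z
  have h := hp.map (fun a => B w a n y)
  rw [List.map_ofFn, List.map_ofFn] at h
  have := h.prod_eq' (by
    rw [List.pairwise_ofFn]
    intro i j hij
    exact B_comm w _ _ hw n y (hx j i hij.ne'))
  exact congrFun (congrFun this _) _

/-- `f` is a polynomial function of degree `< d`. -/
def PLT (d : ℕ) (f : ℂ → ℂ) : Prop :=
  ∃ p : Polynomial ℂ, p.degree < d ∧ ∀ y, f y = p.eval y

lemma PLT.add {d : ℕ} {f g : ℂ → ℂ} (hf : PLT d f) (hg : PLT d g) : PLT d (fun y => f y + g y) := by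
  obtain ⟨p, hp, hp'⟩ := hf
  obtain ⟨q, hq, hq'⟩ := hg
  exact ⟨p + q, (Polynomial.degree_add_le _ _).trans_lt (max_lt hp hq), by simp [hp', hq']⟩

lemma PLT.zero (d : ℕ) : PLT d (fun _ => 0) :=
  ⟨0, by simp [Polynomial.degree_zero, bot_lt_iff_ne_bot], by simp⟩

lemma PLT.const (a : ℂ) : PLT 1 (fun _ => a) :=
  ⟨Polynomial.C a, lt_of_le_of_lt Polynomial.degree_C_le (by norm_num), by simp⟩

lemma PLT.sum {d : ℕ} {ι : Type*} (s : Finset ι) (f : ι → ℂ → ℂ) (h : ∀ i ∈ s, PLT d (f i)) :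
    PLT d (fun y => ∑ i ∈ s, f i y) := by
  classical
  induction s using Finset.induction_on with
  | empty => simpa using PLT.zero d
  | insert a s ha ih =>
    simp only [Finset.sum_insert ha]
    exact (h a (by simp)).add (ih fun i hi => h i (by simp [hi]))

lemma PLT.mono {d e : ℕ} {f : ℂ → ℂ} (h : d ≤ e) (hf : PLT d f) : PLT e f := by
  obtain ⟨p, hp, hp'⟩ := hf
  exact ⟨p, hp.trans_le (by exact_mod_cast h), hp'⟩

lemma PLT.mul {d e : ℕ} {f g : ℂ → ℂ} (hf : PLT d f) (hg : PLT (e + 1) g) :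
    PLT (d + e) (fun y => f y * g y) := by
  obtain ⟨p, hp, hp'⟩ := hf
  obtain ⟨q, hq, hq'⟩ := hg
  refine ⟨p * q, ?_, by simp [hp', hq']⟩
  by_cases h0 : p = 0
  · simp [h0, Polynomial.degree_zero, bot_lt_iff_ne_bot]
  by_cases h1 : q = 0
  · simp [h1, Polynomial.degree_zero, bot_lt_iff_ne_bot]
  rw [Polynomial.degree_eq_natDegree h0] at hp
  rw [Polynomial.degree_eq_natDegree h1] at hq
  rw [Polynomial.degree_eq_natDegree (mul_ne_zero h0 h1), Polynomial.natDegree_mul h0 h1]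
  norm_cast at *
  omega

lemma PLT.lin (a b : ℂ) : PLT 2 (fun y => a * y + b) :=
  ⟨Polynomial.C a * Polynomial.X + Polynomial.C b,
    lt_of_le_of_lt Polynomial.degree_linear_le (by norm_num), by simp⟩

lemma PLT.congr {d : ℕ} {f g : ℂ → ℂ} (hf : PLT d f) (h : ∀ y, g y = f y) : PLT d g := by
  have : g = f := funext h
  rwa [this]

lemma PLT.mulC {d : ℕ} {f : ℂ → ℂ} (hf : PLT d f) (a : ℂ) : PLT d (fun y => f y * a) := by
  simpa using PLT.mul (e := 0) hf (PLT.const a)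

lemma col_degree (w : ℂ) (n : ℕ) (y : Fin n → ℂ) (t : Fin n → Bool) (l : List ℂ) :
    ∀ (b : Bool) (s : Fin n → Bool), PLT (l.length + if b then 1 else 0) (fun y0 =>
    (l.map fun x => B w x (n + 1) (Fin.cons y0 y)).prod (Fin.cons b s) (Fin.cons true t)) := by
  induction l with
  | nil =>
    intro b s
    cases b
    · refine (PLT.zero _).congr fun y0 => ?_
      simp only [List.map_nil, List.prod_nil]
      rw [Matrix.one_apply_ne]
      intro h
      simpa using congrFun h 0
    · simpa using PLT.const _
  | cons x l ih =>
    intro b s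
    simp only [List.map_cons, List.prod_cons, Matrix.mul_apply, sum_cons]
    refine PLT.sum _ _ fun c _ => PLT.sum _ _ fun u _ => ?_
    simp only [B_cons, Fin.cons_zero, Fin.tail_cons, Fintype.sum_bool]
    have h := ih c u
    cases b <;> cases c <;> simp only [L, zero_mul, zero_add, add_zero] <;>
      simp only [List.length_cons, if_true, if_false, Bool.false_eq_true, add_zero] at h ⊢
    · have := ((PLT.lin (-w) x).mul (e := 0) (PLT.const (T w x n y false true s u)))
      refine ((h.mul this)).congr fun y0 => ?_
      ring
    · have := (h.mulC ((1 - w) * T w x n y true true s u))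
      refine this.congr fun y0 => ?_
      ring
    · exact (PLT.zero _).congr fun y0 => rfl
    · have := ((PLT.lin (1) (-w*x)).mul (e := 0) (PLT.const (T w x n y false true s u)))
      refine ((h.mul this)).congr fun y0 => ?_
      ring

lemma Z_degree (w : ℂ) (n : ℕ) (x : Fin (n + 1) → ℂ) (y : Fin n → ℂ) :
    PLT (n + 1) (fun y0 => Z w (n + 1) x (Fin.cons y0 y)) := by
  have := col_degree w n y (fun _ => true) (List.ofFn x) false (fun _ => false)
  simp only [List.length_ofFn, List.map_ofFn, ← cons_const] at this
  exact this

end SixV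

namespace SixV

/-- exponents 0,1,3,4,6,7,... -/
def ex (j : ℕ) : ℕ := 3 * (j / 2) + j % 2

noncomputable def D (m : ℕ) (z : Fin m → ℂ) : ℂ := (Matrix.of fun i j : Fin m => z i ^ ex j).det

noncomputable def V (m : ℕ) (z : Fin m → ℂ) : ℂ := (Matrix.vandermonde z).det

lemma ex_add_two (j : ℕ) : ex (j + 2) = ex j + 3 := by unfold ex; omega

lemma DV_perm (m : ℕ) (z z' : Fin m → ℂ) (hz : Function.Injective z)
    (h : ∀ i, ∃ j, z' j = z i) : V m z * D m z' = V m z' * D m z := by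
  choose σ hσ using h
  have hinj : Function.Injective σ := fun a b hab => hz (by rw [← hσ, ← hσ, hab])
  let τ : Equiv.Perm (Fin m) := Equiv.ofBijective σ (Finite.injective_iff_bijective.1 hinj)
  have hτ : z = z' ∘ τ := by ext i; exact (hσ i).symm
  have h1 : D m z = Equiv.Perm.sign τ * D m z' := by
    rw [D, D, ← Matrix.det_permute, hτ]; rfl
  have h2 : V m z = Equiv.Perm.sign τ * V m z' := by
    rw [V, V, ← Matrix.det_permute, hτ]; rfl
  rw [h1, h2]; ring

lemma V_cons (m : ℕ) (y : ℂ) (w : Fin m → ℂ) :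
    V (m + 1) (Fin.cons y w) = (∏ k, (w k - y)) * V m w := by
  simp only [V, Matrix.det_vandermonde, Fin.prod_univ_succ, Fin.prod_Ioi_succ, Fin.prod_Ioi_zero,
    Fin.cons_zero, Fin.cons_succ]

lemma det_core (m : ℕ) (M : Matrix (Fin (m + 2)) (Fin (m + 2)) ℂ) (x y : ℂ)
    (h00 : M 0 0 = 1) (h01 : M 0 1 = y) (h0 : ∀ j : Fin m, M 0 j.succ.succ = 0)
    (h10 : M 1 0 = 1) (h11 : M 1 1 = x) (h1 : ∀ j : Fin m, M 1 j.succ.succ = 0) :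
    M.det = (x - y) * (M.submatrix (fun i : Fin m => i.succ.succ) (fun i => i.succ.succ)).det := by
  have e1 : (Fin.succ 0 : Fin (m+2)) = 1 := rfl
  rw [Matrix.det_succ_row_zero, Fin.sum_univ_succ, Fin.sum_univ_succ]
  simp only [h0, e1, h00, h01, mul_zero, zero_mul, Finset.sum_const_zero]
  rw [Matrix.det_succ_row_zero, Fin.sum_univ_succ, Matrix.det_succ_row_zero (n := m),
    Fin.sum_univ_succ]
  have s1 : ∀ j : Fin m, (1 : Fin (m + 2)).succAbove j.succ = j.succ.succ := by
    intro j; rw [← e1, Fin.succ_succAbove_succ]; simp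
  have s0 : (1 : Fin (m + 2)).succAbove 0 = 0 := by
    rw [← e1, Fin.succ_succAbove_zero]
  simp only [Matrix.submatrix_apply, Fin.succAbove_zero, e1, h11, h1, s1, s0, h10, mul_zero,
    zero_mul, Finset.sum_const_zero, Matrix.submatrix_submatrix, Function.comp_def]
  simp
  ring

lemma D_rec (m : ℕ) (x y : ℂ) (w : Fin m → ℂ) (h : y ^ 3 = x ^ 3) :
    D (m + 2) (Fin.cons y (Fin.cons x w : Fin (m + 1) → ℂ)) =
      (x - y) * (∏ k, (w k ^ 3 - x ^ 3)) * D m w := by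
  set z : Fin (m + 2) → ℂ := Fin.cons y (Fin.cons x w : Fin (m + 1) → ℂ) with hz
  set M : Matrix (Fin (m + 2)) (Fin (m + 2)) ℂ := Matrix.of fun i j => z i ^ ex j with hM
  let S : Matrix (Fin (m + 2)) (Fin (m + 2)) ℂ :=
    Matrix.of fun k j => if (k : ℕ) + 2 = j then x ^ 3 else 0
  have hU : (1 - S).det = 1 := by
    rw [Matrix.det_of_isUpperTriangular]
    · simp [S]
    · intro i j hij
      have hij' : j < i := hij
      have : ¬ ((i : ℕ) + 2 = j) := by have : (j : ℕ) < i := hij'; omega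
      simp [S, this, Matrix.one_apply_ne hij'.ne']
  have hMS0 : ∀ i, (M * S) i 0 = 0 := by
    intro i; simp [Matrix.mul_apply, S]
  have hMS1 : ∀ i, (M * S) i 1 = 0 := by
    intro i; simp [Matrix.mul_apply, S]
  have hMS2 : ∀ i (j : Fin m), (M * S) i j.succ.succ = z i ^ ex j * x ^ 3 := by
    intro i j
    rw [Matrix.mul_apply, Finset.sum_eq_single j.castSucc.castSucc]
    · simp [S, M]
    · intro k _ hk
      have : ¬ ((k : ℕ) = j) := fun hh => hk (by ext; simpa using hh)
      simp [S, this]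
    · simp
  have hdet : D (m + 2) z = (M - M * S).det := by
    rw [show M - M * S = M * (1 - S) by rw [mul_sub, mul_one], Matrix.det_mul, hU, mul_one]
    rfl
  rw [hdet, det_core m _ x y]
  · rw [mul_assoc, D, ← Matrix.det_mul_column]
    congr 2
    ext i j
    simp only [Matrix.submatrix_apply, Matrix.sub_apply, hMS2, Matrix.of_apply]
    simp only [M, z, Matrix.of_apply, Fin.cons_succ, Fin.val_succ, add_assoc, Nat.reduceAdd, ex_add_two]
    ring
  · rw [Matrix.sub_apply, hMS0]; simp [M, ex]
  · rw [Matrix.sub_apply, hMS1]; simp [M, ex, z]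
  · intro j
    rw [Matrix.sub_apply, hMS2]
    simp only [M, z, Matrix.of_apply, Fin.cons_zero, Fin.val_succ, add_assoc, Nat.reduceAdd, ex_add_two]
    rw [pow_add, h]; ring
  · rw [Matrix.sub_apply, hMS0]; simp [M, ex]
  · rw [Matrix.sub_apply, hMS1]; simp [M, ex, z]
  · intro j
    rw [Matrix.sub_apply, hMS2]
    have : z 1 = x := rfl
    simp only [M, this, Matrix.of_apply, Fin.val_succ, add_assoc, Nat.reduceAdd, ex_add_two]
    rw [pow_add]; ring

lemma PLT.pow (k : ℕ) : PLT (k + 1) (fun y => y ^ k) :=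
  ⟨Polynomial.X ^ k, by rw [Polynomial.degree_X_pow]; exact_mod_cast Nat.lt_succ_self k, by simp⟩

lemma det_degree (m d : ℕ) (e : ℕ → ℕ) (w : Fin m → ℂ) (he : ∀ j, j ≤ m → e j ≤ d) :
    PLT (d + 1) (fun y => (Matrix.of fun i j : Fin (m + 1) =>
      (Fin.cons y w : Fin (m + 1) → ℂ) i ^ e j).det) := by
  simp only [Matrix.det_succ_row_zero]
  refine PLT.sum _ _ fun j _ => ?_
  refine ((PLT.pow (e j)).mono (Nat.succ_le_succ (he j (by omega)))).mulC
    ((-1) ^ (j : ℕ) * (Matrix.of fun (i k : Fin m) => w i ^ e (j.succAbove k)).det) |>.congr ?_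
  intro y
  simp only [Matrix.of_apply, Fin.cons_zero, Matrix.submatrix, Fin.cons_succ]
  ring

lemma D_degree (n : ℕ) (w : Fin (2 * n + 1) → ℂ) :
    PLT (3 * n + 2) (fun y => D (2 * n + 2) (Fin.cons y w)) :=
  det_degree (2 * n + 1) (3 * n + 1) ex w (by intro j hj; unfold ex; omega)

lemma V_degree (n : ℕ) (w : Fin (2 * n + 1) → ℂ) :
    PLT (2 * n + 2) (fun y => V (2 * n + 2) (Fin.cons y w)) :=
  det_degree (2 * n + 1) (2 * n + 1) id w (by intro j hj; exact hj)

lemma D_zero (m : ℕ) (w : Fin m → ℂ) (k : Fin m) : D (m + 1) (Fin.cons (w k) w) = 0 := by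
  refine Matrix.det_zero_of_row_eq (i := 0) (j := k.succ) (Fin.succ_ne_zero k).symm ?_
  ext j; simp

lemma V_zero (m : ℕ) (w : Fin m → ℂ) (k : Fin m) : V (m + 1) (Fin.cons (w k) w) = 0 := by
  rw [V_cons, Finset.prod_eq_zero (Finset.mem_univ k) (by simp), zero_mul]

end SixV

namespace SixV

noncomputable def Cc (w : ℂ) (n : ℕ) : ℂ := ∏ k ∈ Finset.range n, ((1 - w) * (-w) ^ k)

/-- The pairs of variables `x`, `y` have nonzero, pairwise distinct cubes. -/
def Gen {n m : ℕ} (x : Fin n → ℂ) (y : Fin m → ℂ) : Prop :=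
  Function.Injective (fun k => (Sum.elim x y k) ^ 3) ∧ ∀ k, Sum.elim x y k ≠ 0

lemma w_cube {w : ℂ} (hw : w ^ 2 + w + 1 = 0) : w ^ 3 = 1 := by
  linear_combination (w - 1) * hw

lemma w_sq_ne {w : ℂ} (hw : w ^ 2 + w + 1 = 0) : w ^ 2 ≠ 1 := by
  intro h
  have h1 : w = -2 := by linear_combination hw - h
  rw [h1] at h; norm_num at h

noncomputable def eqv (n : ℕ) : Fin (2 * n) ≃ Fin n ⊕ Fin n :=
  Fintype.equivOfCardEq (by simp; ring)

noncomputable def eqv' (n : ℕ) : Fin (2 * n + 1) ≃ Fin (n + 1) ⊕ Fin n :=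
  Fintype.equivOfCardEq (by simp; ring)

noncomputable def zc (n : ℕ) (x y : Fin n → ℂ) : Fin (2 * n) → ℂ := Sum.elim x y ∘ eqv n

lemma Gen.inj {n m : ℕ} {x : Fin n → ℂ} {y : Fin m → ℂ} (h : Gen x y) :
    Function.Injective (Sum.elim x y) := fun a b hab => h.1 (by simp [hab])

lemma Z_move (w : ℂ) (hw : w ^ 2 + w + 1 = 0) (n : ℕ) (x : Fin (n + 1) → ℂ)
    (y : Fin (n + 1) → ℂ) (i : Fin (n + 1)) (hx : Function.Injective fun i => x i ^ 3) :
    Z w (n + 1) x y = Z w (n + 1) (Fin.cons (x i) (fun j => x (i.succAbove j))) y := by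
  refine Z_perm w hw _ _ _ y ?_ ?_
  · have h : (Fin.cons (x i) (fun j => x (i.succAbove j)) : Fin (n + 1) → ℂ) =
        x ∘ (i.cycleRange.symm) := by
      ext k
      refine Fin.cases ?_ (fun j => ?_) k
      · simp [Fin.cycleRange_symm_zero]
      · simp [Fin.cycleRange_symm_succ]
    rw [h]
    exact (Equiv.Perm.ofFn_comp_perm _ _).symm
  · intro a b hab h
    refine hab (hx ?_)
    simp only [h]
    linear_combination (x b ^ 3) * (w ^ 3 + 1) * w_cube hw

lemma root_case (w : ℂ) (hw : w ^ 2 + w + 1 = 0) (n : ℕ)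
    (ih : ∀ (x y : Fin n → ℂ), Gen x y →
      Z w n x y * V (2 * n) (zc n x y) = Cc w n * D (2 * n) (zc n x y))
    (x : Fin (n + 1) → ℂ) (y : Fin n → ℂ) (hg : Gen x y) (i : Fin (n + 1)) :
    Z w (n + 1) x (Fin.cons (w ^ 2 * x i) y) *
      V (2 * n + 2) (Fin.cons (w ^ 2 * x i) (Sum.elim x y ∘ eqv' n)) =
    Cc w (n + 1) * D (2 * n + 2) (Fin.cons (w ^ 2 * x i) (Sum.elim x y ∘ eqv' n)) := by
  have hw3 := w_cube hw
  have hw0 : w ≠ 0 := by rintro rfl; norm_num at hw3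
  set x' : Fin n → ℂ := fun j => x (i.succAbove j) with hx'
  have hxi : x i ≠ 0 := hg.2 (Sum.inl i)
  let φ : Fin n ⊕ Fin n → Fin (n + 1) ⊕ Fin n := Sum.map i.succAbove id
  have hφ : Function.Injective φ := Sum.map_injective.2 ⟨Fin.succAbove_right_injective, fun _ _ h => h⟩
  have hφ' : ∀ k, Sum.elim x' y k = Sum.elim x y (φ k) := by rintro (k | k) <;> rfl
  have hφi : ∀ k, φ k ≠ Sum.inl i := by
    rintro (k | k) <;> simp [φ, Fin.succAbove_ne]
  have hg' : Gen x' y := by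
    refine ⟨fun a b hab => hφ (hg.1 ?_), fun k => ?_⟩
    · simpa only [hφ'] using hab
    · rw [hφ']; exact hg.2 _
  have IH := ih x' y hg'
  set w' := zc n x' y with hw'
  have hw'φ : ∀ k, w' k = Sum.elim x y (φ (eqv n k)) := fun k => hφ' _
  set y0 := w ^ 2 * x i with hy0
  have hy03 : y0 ^ 3 = x i ^ 3 := by
    rw [hy0]; linear_combination (x i ^ 3) * (w ^ 3 + 1) * hw3
  have hyx : x i - y0 ≠ 0 := by
    rw [hy0, sub_ne_zero]
    intro h
    apply w_sq_ne hw
    have : (w ^ 2 - 1) * x i = 0 := by linear_combination -h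
    rcases mul_eq_zero.1 this with h | h
    · linear_combination h
    · exact absurd h hxi
  set z1 : Fin (2 * n + 2) → ℂ := Fin.cons y0 (Sum.elim x y ∘ eqv' n) with hz1
  set z2 : Fin (2 * n + 2) → ℂ := Fin.cons y0 (Fin.cons (x i) w' : Fin (2 * n + 1) → ℂ) with hz2
  have hw'3 : ∀ k, w' k ^ 3 - x i ^ 3 ≠ 0 := by
    intro k h
    refine hφi (eqv n k) (hg.1 ?_)
    simp only [← hw'φ, Sum.elim_inl]
    linear_combination h
  have hVw' : V (2 * n) w' ≠ 0 := by
    rw [V, Matrix.det_vandermonde_ne_zero_iff]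
    exact hg'.inj.comp (eqv n).injective
  have hV2 : V (2 * n + 2) z2 = (x i - y0) * (∏ k, ((w' k - y0) * (w' k - x i))) * V (2 * n) w' := by
    rw [hz2, V_cons, V_cons, Fin.prod_univ_succ, Finset.prod_mul_distrib]
    simp only [Fin.cons_zero, Fin.cons_succ]
    ring
  have hfac : ∀ k, w' k ^ 3 - x i ^ 3 = ((w' k - y0) * (w' k - x i)) * (w' k - w * x i) := by
    intro k
    rw [hy0]
    linear_combination (w' k ^ 2 * x i - w * w' k * x i ^ 2) * hw + (x i ^ 3) * hw3
  have hD2 : D (2 * n + 2) z2 = (x i - y0) * ((∏ k, ((w' k - y0) * (w' k - x i))) *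
      (∏ k, (w' k - w * x i))) * D (2 * n) w' := by
    rw [hz2, D_rec _ _ _ _ hy03, ← Finset.prod_mul_distrib]
    simp only [hfac]
  have hP : (∏ k, ((w' k - y0) * (w' k - x i))) ≠ 0 := by
    rw [Finset.prod_ne_zero_iff]
    intro k _ h
    apply hw'3 k
    rw [hfac, h, zero_mul]
  have hV2ne : V (2 * n + 2) z2 ≠ 0 := by
    rw [hV2]
    exact mul_ne_zero (mul_ne_zero hyx hP) hVw'
  have hz2inj : Function.Injective z2 := by
    rwa [V, Matrix.det_vandermonde_ne_zero_iff] at hV2ne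
  have hmem : ∀ k, ∃ j, z1 j = z2 k := by
    intro k
    refine Fin.cases ⟨0, rfl⟩ (fun k => ?_) k
    refine Fin.cases ⟨((eqv' n).symm (Sum.inl i)).succ, ?_⟩ (fun k => ?_) k
    · simp [hz1, hz2]
    · refine ⟨((eqv' n).symm (φ (eqv n k))).succ, ?_⟩
      simp [hz1, hz2, hw'φ]
  have hDV := DV_perm _ z2 z1 hz2inj hmem
  have hZ : Z w (n + 1) x (Fin.cons y0 y) =
      (1 - w) * (-w) ^ n * (∏ k, (w' k - w * x i)) * Z w n x' y := by
    rw [Z_move w hw n x _ i (fun a b hab => Sum.inl_injective (hg.1 hab)), Z_frozen]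
    · have e1 : ∏ k, (w' k - w * x i) =
          (∏ j, (x' j - w * x i)) * ∏ j, (y j - w * x i) := by
        have := Fintype.prod_sum_type (fun k => Sum.elim x' y k - w * x i)
        rw [← (eqv n).prod_comp] at this
        exact this
      have e2 : ∏ j : Fin n, (y0 - w * x' j) = (-w) ^ n * ∏ j, (x' j - w * x i) := by
        have : (-w) ^ n = ∏ _j : Fin n, (-w) := by simp
        rw [this, ← Finset.prod_mul_distrib]
        refine Finset.prod_congr rfl fun j _ => ?_
        rw [hy0]; ring
      simp only [Fin.cons_zero, Fin.cons_succ, Fin.tail_cons]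
      rw [e1, e2]; ring
    · simp only [Fin.cons_zero, hy0]
      linear_combination -(x i) * hw3
  have hC : Cc w (n + 1) = Cc w n * ((1 - w) * (-w) ^ n) := by
    rw [Cc, Finset.prod_range_succ]; rfl
  have h2 : Z w (n + 1) x (Fin.cons y0 y) * V (2 * n + 2) z2 = Cc w (n + 1) * D (2 * n + 2) z2 := by
    rw [hZ, hV2, hD2, hC]
    linear_combination ((1 - w) * (-w) ^ n * (∏ k, (w' k - w * x i)) *
      (x i - y0) * (∏ k, ((w' k - y0) * (w' k - x i)))) * IH
  refine mul_left_cancel₀ hV2ne ?_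
  linear_combination (V (2 * n + 2) z1) * h2 - Cc w (n + 1) * hDV

theorem main_id (w : ℂ) (hw : w ^ 2 + w + 1 = 0) : ∀ (n : ℕ) (x y : Fin n → ℂ), Gen x y →
    Z w n x y * V (2 * n) (zc n x y) = Cc w n * D (2 * n) (zc n x y) := by
  intro n
  induction n with
  | zero =>
    intro x y _
    have : (fun _ : Fin 0 => false) = (fun _ : Fin 0 => true) := Subsingleton.elim _ _
    simp [Z, V, D, Cc, this]
  | succ n ih =>
    intro x y hg
    set yt : Fin n → ℂ := Fin.tail y with hyt
    let φ : Fin (n + 1) ⊕ Fin n → Fin (n + 1) ⊕ Fin (n + 1) := Sum.map id Fin.succ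
    have hφ : Function.Injective φ := Sum.map_injective.2 ⟨fun _ _ h => h, Fin.succ_injective _⟩
    have hφ' : ∀ k, Sum.elim x yt k = Sum.elim x y (φ k) := by rintro (k | k) <;> rfl
    have hg' : Gen x yt := by
      refine ⟨fun a b hab => hφ (hg.1 ?_), fun k => ?_⟩
      · simpa only [hφ'] using hab
      · rw [hφ']; exact hg.2 _
    set ww := Sum.elim x yt ∘ eqv' n with hww
    have hw3 := w_cube hw
    have hpoly : PLT (3 * n + 2) (fun y0 => Z w (n + 1) x (Fin.cons y0 yt) *
        V (2 * n + 2) (Fin.cons y0 ww) + D (2 * n + 2) (Fin.cons y0 ww) * (- Cc w (n + 1))) := by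
      refine PLT.add ?_ ((D_degree n ww).mulC _)
      exact (((Z_degree w n x yt).mul (V_degree n ww))).mono (by omega)
    obtain ⟨p, hp, hp'⟩ := hpoly
    have hp0 : p = 0 := by
      by_contra hne
      refine hne (Polynomial.eq_zero_of_natDegree_lt_card_of_eval_eq_zero p
        (f := Sum.elim ww (fun i => w ^ 2 * x i)) ?_ ?_ ?_)
      · have hcube : ∀ i, (w ^ 2 * x i) ^ 3 = x i ^ 3 := fun i => by
          linear_combination (x i ^ 3) * (w ^ 3 + 1) * hw3
        have hcross : ∀ (a : Fin (2 * n + 1)) (b : Fin (n + 1)), ww a ≠ w ^ 2 * x b := by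
          intro a b h
          have h3 : eqv' n a = Sum.inl b := hg'.1 (by
            have : (ww a) ^ 3 = x b ^ 3 := by rw [h, hcube]
            exact this)
          have h4 : ww a = x b := by simp [hww, h3]
          rw [h4] at h
          have hxb : x b ≠ 0 := hg.2 (Sum.inl b)
          apply w_sq_ne hw
          have h5 : (w ^ 2 - 1) * x b = 0 := by linear_combination -h
          rcases mul_eq_zero.1 h5 with h6 | h6
          · linear_combination h6
          · exact absurd h6 hxb
        rintro (a | a) (b | b) hab
        · simp only [Sum.elim_inl] at hab
          rw [(hg'.inj.comp (eqv' n).injective) hab]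
        · exact absurd hab (hcross a b)
        · exact absurd hab.symm (hcross b a)
        · simp only [Sum.elim_inr] at hab
          congr 1
          refine Sum.inl_injective (hg.1 (?_ : x a ^ 3 = x b ^ 3))
          rw [← hcube, ← hcube b, hab]
      · rintro (a | a)
        · rw [← hp']
          simp only [Sum.elim_inl]
          rw [V_zero, D_zero]; ring
        · rw [← hp']
          simp only [Sum.elim_inr]
          rw [root_case w hw n ih x yt hg' a]; ring
      · rw [Polynomial.degree_eq_natDegree hne] at hp
        simp only [Fintype.card_sum, Fintype.card_fin]
        have : p.natDegree < 3 * n + 2 := by exact_mod_cast hp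
        omega
    have h1 := hp' (y 0)
    rw [hp0, Polynomial.eval_zero] at h1
    beta_reduce at h1
    have hy : (Fin.cons (y 0) yt : Fin (n + 1) → ℂ) = y := Fin.cons_self_tail y
    rw [hy] at h1
    set z1 : Fin (2 * n + 2) → ℂ := Fin.cons (y 0) ww with hz1
    set z : Fin (2 * n + 2) → ℂ := zc (n + 1) x y with hz
    have hzinj : Function.Injective z := hg.inj.comp (eqv (n + 1)).injective
    have hmem : ∀ k, ∃ j, z1 j = z k := by
      intro k
      change ∃ j, z1 j = Sum.elim x y (eqv (n + 1) k)
      rcases eqv (n + 1) k with i | i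
      · exact ⟨((eqv' n).symm (Sum.inl i)).succ, by simp [hz1, hww]⟩
      · refine Fin.cases ⟨0, rfl⟩ (fun i => ?_) i
        exact ⟨((eqv' n).symm (Sum.inr i)).succ, by simp [hz1, hww, hyt, Fin.tail]⟩
    have hDV := DV_perm _ z z1 hzinj hmem
    have hV1 : V (2 * n + 2) z1 ≠ 0 := by
      rw [V, Matrix.det_vandermonde_ne_zero_iff, hz1, Fin.cons_injective_iff]
      refine ⟨?_, hg'.inj.comp (eqv' n).injective⟩
      rintro ⟨a, ha⟩
      have : φ (eqv' n a) = Sum.inr 0 := hg.inj (by rw [← hφ']; exact ha)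
      rcases h : eqv' n a with b | b <;> simp [φ, h] at this
    change Z w (n + 1) x y * V (2 * n + 2) z = Cc w (n + 1) * D (2 * n + 2) z
    refine mul_left_cancel₀ hV1 ?_
    linear_combination (V (2 * n + 2) z) * h1 + Cc w (n + 1) * hDV

end SixV

namespace SixV

lemma T_cont (w : ℂ) : ∀ (n : ℕ) (x : ℝ → ℂ) (y : ℝ → Fin n → ℂ) (_ : Continuous x)
    (_ : ∀ i, Continuous fun t => y t i) (h h' : Bool) (s s' : Fin n → Bool),
    Continuous fun t => T w (x t) n (y t) h h' s s' := by
  intro n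
  induction n with
  | zero => intro x y hx hy h h' s s'; exact continuous_const
  | succ n ih =>
    intro x y hx hy h h' s s'
    simp only [T]
    refine continuous_finsetSum _ fun m _ => ?_
    refine Continuous.mul ?_ (ih x (fun t => Fin.tail (y t)) hx (fun i => hy i.succ) _ _ _ _)
    have hy0 := hy 0
    cases h <;> cases m <;> cases s 0 <;> cases s' 0 <;> simp only [L] <;> fun_prop

lemma Z_cont (w : ℂ) (n : ℕ) (x y : ℝ → Fin n → ℂ) (hx : ∀ i, Continuous fun t => x t i)
    (hy : ∀ i, Continuous fun t => y t i) : Continuous fun t => Z w n (x t) (y t) := by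
  have : Continuous fun t => (List.ofFn fun i => B w (x t i) n (y t)).prod := by
    have h := continuous_list_prod (f := fun (i : Fin n) t => B w (x t i) n (y t))
      (List.finRange n) (fun i _ => by
        refine continuous_matrix fun s s' => ?_
        exact T_cont w n _ y (hx i) hy _ _ s s')
    simpa only [List.ofFn_eq_map] using h
  exact this.matrix_elem _ _

/-- the q-number `(t^b - t^a)/(t-1)` for `a ≤ b`. -/
noncomputable def gq (a b : ℕ) (t : ℝ) : ℂ := (t : ℂ) ^ a * ∑ k ∈ range (b - a), (t : ℂ) ^ k

lemma gq_spec {a b : ℕ} (h : a ≤ b) (t : ℝ) :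
    (t : ℂ) ^ b - (t : ℂ) ^ a = ((t : ℂ) - 1) * gq a b t := by
  have := mul_geom_sum (t : ℂ) (b - a)
  rw [gq]
  calc _ = (t : ℂ) ^ a * ((t : ℂ) ^ (b - a) - 1) := by
        rw [mul_sub, ← pow_add, Nat.add_sub_cancel' h, mul_one]
    _ = _ := by rw [← this]; ring

lemma gq_one {a b : ℕ} (h : a ≤ b) : gq a b 1 = (b : ℂ) - a := by
  simp [gq, Nat.cast_sub h]

lemma gq_cont (a b : ℕ) : Continuous (gq a b) := by
  unfold gq; fun_prop

lemma ex_mono {i j : ℕ} (h : i ≤ j) : ex i ≤ ex j := by unfold ex; omega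

lemma limit_id (w : ℂ) (hw : w ^ 2 + w + 1 = 0) (n : ℕ) :
    Z w n (fun _ => 1) (fun _ => 1) *
      (∏ i : Fin (2 * n), ∏ j ∈ Ioi i, (((j : ℕ) : ℂ) - ((i : ℕ) : ℂ))) =
    Cc w n * (∏ i : Fin (2 * n), ∏ j ∈ Ioi i, ((ex j : ℂ) - (ex i : ℂ))) := by
  let x : ℝ → Fin n → ℂ := fun t i => (t : ℂ) ^ ((eqv n).symm (Sum.inl i) : ℕ)
  let y : ℝ → Fin n → ℂ := fun t i => (t : ℂ) ^ ((eqv n).symm (Sum.inr i) : ℕ)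
  have hs : ∀ t k, Sum.elim (x t) (y t) k = (t : ℂ) ^ ((eqv n).symm k : ℕ) := by
    rintro t (k | k) <;> rfl
  let f : ℝ → ℂ := fun t => Z w n (x t) (y t) * ∏ i : Fin (2 * n), ∏ j ∈ Ioi i, gq i j t
  let g : ℝ → ℂ := fun t => Cc w n * ∏ i : Fin (2 * n), ∏ j ∈ Ioi i, gq (ex i) (ex j) t
  have hfc : Continuous f := by
    refine Continuous.mul (Z_cont w n x y (fun i => by fun_prop) (fun i => by fun_prop)) ?_
    exact continuous_finsetProd _ fun i _ => continuous_finsetProd _ fun j _ => gq_cont _ _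
  have hgc : Continuous g := by
    refine Continuous.mul continuous_const ?_
    exact continuous_finsetProd _ fun i _ => continuous_finsetProd _ fun j _ => gq_cont _ _
  have hfg : ∀ t, 1 < t → f t = g t := by
    intro t ht
    have hgen : Gen (x t) (y t) := by
      constructor
      · intro a b hab
        simp only [hs, ← pow_mul] at hab
        have h1 : t ^ (((eqv n).symm a : ℕ) * 3) = t ^ (((eqv n).symm b : ℕ) * 3) := by
          exact_mod_cast hab
        have h2 := pow_right_injective₀ (by linarith) ht.ne' h1
        have h3 : ((eqv n).symm a : ℕ) = ((eqv n).symm b : ℕ) := by simpa using h2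
        exact (eqv n).symm.injective (Fin.ext h3)
      · intro k
        rw [hs]
        exact pow_ne_zero _ (by exact_mod_cast (by linarith : t ≠ 0))
    have hid := main_id w hw n _ _ hgen
    have hz : zc n (x t) (y t) = fun k : Fin (2 * n) => (t : ℂ) ^ (k : ℕ) := by
      ext k
      rw [zc, Function.comp_apply, hs, Equiv.symm_apply_apply]
    rw [hz] at hid
    have hV : V (2 * n) (fun k : Fin (2 * n) => (t : ℂ) ^ (k : ℕ)) =
        (∏ i : Fin (2 * n), ∏ j ∈ Ioi i, ((t : ℂ) - 1)) * ∏ i : Fin (2 * n), ∏ j ∈ Ioi i, gq i j t := by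
      rw [V, Matrix.det_vandermonde]
      simp only [← Finset.prod_mul_distrib]
      refine Finset.prod_congr rfl fun i _ => Finset.prod_congr rfl fun j hj => ?_
      exact gq_spec (le_of_lt (Fin.lt_def.1 (Finset.mem_Ioi.1 hj))) t
    have hD : D (2 * n) (fun k : Fin (2 * n) => (t : ℂ) ^ (k : ℕ)) =
        (∏ i : Fin (2 * n), ∏ j ∈ Ioi i, ((t : ℂ) - 1)) *
          ∏ i : Fin (2 * n), ∏ j ∈ Ioi i, gq (ex i) (ex j) t := by
      have : (Matrix.of fun i j : Fin (2 * n) => ((t : ℂ) ^ (i : ℕ)) ^ ex j) =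
          (Matrix.vandermonde fun j : Fin (2 * n) => (t : ℂ) ^ ex j).transpose := by
        ext i j
        simp only [Matrix.of_apply, Matrix.transpose_apply, Matrix.vandermonde_apply, ← pow_mul]
        rw [mul_comm]
      rw [D, this, Matrix.det_transpose, Matrix.det_vandermonde]
      simp only [← Finset.prod_mul_distrib]
      refine Finset.prod_congr rfl fun i _ => Finset.prod_congr rfl fun j hj => ?_
      exact gq_spec (ex_mono (le_of_lt (Fin.lt_def.1 (Finset.mem_Ioi.1 hj)))) t
    have hne : (∏ i : Fin (2 * n), ∏ j ∈ Ioi i, ((t : ℂ) - 1)) ≠ 0 := by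
      refine Finset.prod_ne_zero_iff.2 fun i _ => Finset.prod_ne_zero_iff.2 fun j _ => ?_
      rw [sub_ne_zero]
      exact_mod_cast ht.ne'
    rw [hV, hD] at hid
    refine mul_left_cancel₀ hne ?_
    simp only [f, g]
    linear_combination hid
  have h1 : f 1 = g 1 := by
    have hcl : IsClosed {t | f t = g t} := isClosed_eq hfc hgc
    have hsub : Set.Ioi (1 : ℝ) ⊆ {t | f t = g t} := fun t ht => hfg t ht
    have := hcl.closure_subset_iff.2 hsub
    rw [closure_Ioi] at this
    exact this (Set.self_mem_Ici)
  have hx1 : x 1 = fun _ => 1 := by ext i; simp [x]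
  have hy1 : y 1 = fun _ => 1 := by ext i; simp [y]
  simp only [f, g, hx1, hy1] at h1
  have e1 : ∀ i : Fin (2 * n), ∀ j ∈ Ioi i, gq i j 1 = ((j : ℕ) : ℂ) - ((i : ℕ) : ℂ) := fun i j hj =>
    gq_one (le_of_lt (Fin.lt_def.1 (Finset.mem_Ioi.1 hj)))
  have e2 : ∀ i : Fin (2 * n), ∀ j ∈ Ioi i, gq (ex i) (ex j) 1 = (ex j : ℂ) - (ex i : ℂ) := fun i j hj =>
    gq_one (ex_mono (le_of_lt (Fin.lt_def.1 (Finset.mem_Ioi.1 hj))))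
  rw [Finset.prod_congr rfl fun i _ => Finset.prod_congr rfl (e1 i),
    Finset.prod_congr rfl fun i _ => Finset.prod_congr rfl (e2 i)] at h1
  exact h1

lemma prod_pairs (m : ℕ) (f : ℕ → ℕ → ℂ) :
    ∏ i : Fin m, ∏ j ∈ Ioi i, f i j = ∏ j ∈ range m, ∏ i ∈ range j, f i j := by
  rw [Finset.prod_comm' (t' := univ) (s' := fun j => Iio j) (by simp),
    ← Fin.prod_univ_eq_prod_range (fun j => ∏ i ∈ range j, f i j)]
  refine Finset.prod_congr rfl fun j _ => ?_
  have : range (j : ℕ) = (Iio j).map Fin.valEmbedding := by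
    rw [Fin.map_valEmbedding_Iio]; ext; simp
  rw [this, Finset.prod_map]
  rfl

lemma fact_prod (m : ℕ) : ∏ i ∈ range m, ((m : ℂ) - i) = (m.factorial : ℂ) := by
  induction m with
  | zero => simp
  | succ m ih =>
    rw [Finset.prod_range_succ', Nat.factorial_succ]
    push_cast
    rw [← ih, mul_comm]
    simp

lemma Q_prod (n : ℕ) : (∏ i ∈ range (2 * n), (((3 * n : ℕ) : ℂ) - ex i)) *
    (∏ i ∈ range (2 * n + 1), (((3 * n + 1 : ℕ) : ℂ) - ex i)) =
    ((3 * n + 1).factorial : ℂ) * 3 ^ n * (n.factorial : ℂ) := by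
  induction n with
  | zero => simp [ex]
  | succ n ih =>
    have h1 : ∏ i ∈ range (2 * (n + 1)), (((3 * (n + 1) : ℕ) : ℂ) - ex i) =
        (∏ i ∈ range (2 * n), (((3 * n : ℕ) : ℂ) - ex i)) * (3 * n + 2) * (3 * n + 3) := by
      rw [show 2 * (n + 1) = 2 * n + 1 + 1 by ring, Finset.prod_range_succ', Finset.prod_range_succ']
      congr 1
      · congr 1
        · refine Finset.prod_congr rfl fun i _ => ?_
          rw [show i + 1 + 1 = i + 2 from rfl, ex_add_two]; push_cast; ring
        · simp [ex]; ring
      · simp [ex]; ring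
    have h2 : ∏ i ∈ range (2 * (n + 1) + 1), (((3 * (n + 1) + 1 : ℕ) : ℂ) - ex i) =
        (∏ i ∈ range (2 * n + 1), (((3 * n + 1 : ℕ) : ℂ) - ex i)) * (3 * n + 3) * (3 * n + 4) := by
      rw [show 2 * (n + 1) + 1 = 2 * n + 1 + 1 + 1 by ring, Finset.prod_range_succ',
        Finset.prod_range_succ']
      congr 1
      · congr 1
        · refine Finset.prod_congr rfl fun i _ => ?_
          rw [show i + 1 + 1 = i + 2 from rfl, ex_add_two]; push_cast; ring
        · simp [ex]; ring
      · simp [ex]; ring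
    rw [h1, h2, show 3 * (n + 1) + 1 = 3 * n + 1 + 1 + 1 + 1 by ring]
    simp only [Nat.factorial_succ (n := n), Nat.factorial_succ (n := 3 * n + 1 + 1 + 1),
      Nat.factorial_succ (n := 3 * n + 1 + 1), Nat.factorial_succ (n := 3 * n + 1)]
    generalize (∏ i ∈ range (2 * n), (((3 * n : ℕ) : ℂ) - ex i)) = a1 at *
    generalize (∏ i ∈ range (2 * n + 1), (((3 * n + 1 : ℕ) : ℂ) - ex i)) = a2 at *
    push_cast
    rw [pow_succ]
    linear_combination ((3 * n + 2) * (3 * n + 3) * (3 * n + 3) * (3 * n + 4) : ℂ) * ih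

noncomputable def Rr (n : ℕ) : ℂ :=
  ∏ j ∈ range n, ((Nat.factorial (3 * j + 1) : ℂ) / (Nat.factorial (n + j) : ℂ))

lemma Rr_rec (n : ℕ) : Rr (n + 1) * ((2 * n).factorial * (2 * n + 1).factorial) =
    Rr n * ((3 * n + 1).factorial * n.factorial) := by
  have h := Finset.prod_range_succ' (fun j => ((n + j).factorial : ℂ)) (n + 1)
  rw [Finset.prod_range_succ, Finset.prod_range_succ] at h
  simp only [Rr, Finset.prod_div_distrib]
  rw [Finset.prod_range_succ (fun j => ((3 * j + 1).factorial : ℂ)) n]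
  have e : ∏ j ∈ range (n + 1), ((n + 1 + j).factorial : ℂ) =
      ∏ j ∈ range (n + 1), ((n + (j + 1)).factorial : ℂ) :=
    Finset.prod_congr rfl fun j _ => by rw [show n + 1 + j = n + (j + 1) by ring]
  rw [e]
  have hne1 : ∏ j ∈ range (n + 1), ((n + (j + 1)).factorial : ℂ) ≠ 0 :=
    Finset.prod_ne_zero_iff.2 fun j _ => by exact_mod_cast Nat.factorial_ne_zero _
  have hne2 : ∏ j ∈ range n, ((n + j).factorial : ℂ) ≠ 0 :=
    Finset.prod_ne_zero_iff.2 fun j _ => by exact_mod_cast Nat.factorial_ne_zero _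
  rw [show n + (n + 1) = 2 * n + 1 by ring, show n + n = 2 * n by ring, add_zero] at h
  field_simp
  linear_combination (∏ x ∈ range n, ((3 * x + 1).factorial : ℂ)) * ((3 * n + 1).factorial : ℂ) * h

lemma numeric (n : ℕ) : ∏ j ∈ range (2 * n), ∏ i ∈ range j, ((ex j : ℂ) - (ex i : ℂ)) =
    (∏ j ∈ range (2 * n), ∏ i ∈ range j, ((j : ℂ) - (i : ℂ))) * (∏ j ∈ range n, 3 ^ j) * Rr n := by
  induction n with
  | zero => simp [Rr]
  | succ n ih =>
    rw [show 2 * (n + 1) = 2 * n + 1 + 1 by ring]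
    simp only [Finset.prod_range_succ _ (2 * n + 1), Finset.prod_range_succ _ (2 * n), Finset.prod_range_succ _ n]
    have e1 : ex (2 * n) = 3 * n := by unfold ex; omega
    have e2 : ex (2 * n + 1) = 3 * n + 1 := by unfold ex; omega
    have hq := Q_prod n
    have f1 := fact_prod (2 * n)
    have f2 := fact_prod (2 * n + 1)
    rw [Finset.prod_range_succ _ (2 * n)] at hq f2
    rw [ih, e1, e2]
    rw [e1] at hq
    have hr := Rr_rec n
    generalize ∏ i ∈ range (2 * n), (((3 * n : ℕ) : ℂ) - ex i) = a1 at *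
    generalize ∏ i ∈ range (2 * n), (((3 * n + 1 : ℕ) : ℂ) - ex i) = a2 at *
    generalize ∏ i ∈ range (2 * n), (((2 * n : ℕ) : ℂ) - i) = a3 at *
    generalize ∏ i ∈ range (2 * n), (((2 * n + 1 : ℕ) : ℂ) - i) = a4 at *
    generalize ∏ j ∈ range (2 * n), ∏ i ∈ range j, ((j : ℂ) - (i : ℂ)) = a5 at *
    generalize (((2 * n + 1 : ℕ) : ℂ) - ((2 * n : ℕ) : ℂ)) = a6 at *
    generalize (((3 * n + 1 : ℕ) : ℂ) - ((3 * n : ℕ) : ℂ)) = a7 at *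
    rw [← f1, ← f2] at hr
    linear_combination (a5 * (∏ j ∈ range n, 3 ^ j) * Rr n) * hq -
      (a5 * (∏ j ∈ range n, 3 ^ j) * 3 ^ n) * hr

lemma Cc_three (w : ℂ) (hw : w ^ 2 + w + 1 = 0) (n : ℕ) :
    Cc w n * (∏ j ∈ range n, 3 ^ j) = (1 - w) ^ (n ^ 2) := by
  induction n with
  | zero => simp [Cc]
  | succ n ih =>
    have h : (1 - w) ^ 2 = (-w) * 3 := by linear_combination hw
    rw [Cc, Finset.prod_range_succ, Finset.prod_range_succ, ← Cc]
    calc _ = (Cc w n * ∏ j ∈ range n, 3 ^ j) * ((1 - w) * ((-w) * 3) ^ n) := by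
          rw [mul_pow]; ring
      _ = _ := by rw [ih, ← h, ← pow_mul, ← pow_succ', ← pow_add]; congr 1; ring

theorem Z_value (w : ℂ) (hw : w ^ 2 + w + 1 = 0) (n : ℕ) :
    Z w n (fun _ => 1) (fun _ => 1) = (1 - w) ^ (n ^ 2) * Rr n := by
  have h := limit_id w hw n
  rw [prod_pairs (2 * n) (fun i j => (j : ℂ) - (i : ℂ)),
    prod_pairs (2 * n) (fun i j => (ex j : ℂ) - (ex i : ℂ)), numeric] at h
  have hne : ∏ j ∈ range (2 * n), ∏ i ∈ range j, ((j : ℂ) - (i : ℂ)) ≠ 0 := by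
    refine Finset.prod_ne_zero_iff.2 fun j _ => Finset.prod_ne_zero_iff.2 fun i hi => ?_
    rw [sub_ne_zero]
    exact_mod_cast (Finset.mem_range.1 hi).ne'
  refine mul_right_cancel₀ hne ?_
  rw [h, ← Cc_three w hw n]; ring

end SixV

namespace SixV

/-- Integer value of a bit. -/
def iv (b : Bool) : ℤ := if b then 1 else 0

lemma iv_inj {a b : Bool} (h : iv a = iv b) : a = b := by
  cases a <;> cases b <;> simp [iv] at h ⊢

lemma iv_mem {x : ℤ} (h : x = 0 ∨ x = 1) : ∃ b, iv b = x := by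
  rcases h with rfl | rfl
  · exact ⟨false, rfl⟩
  · exact ⟨true, rfl⟩

lemma iv_cases (b : Bool) : iv b = 0 ∨ iv b = 1 := by cases b <;> simp [iv]

/-- All partial sums, starting from `h`, are `0` or `1`. -/
def Good {n : ℕ} (h : ℤ) (r : Fin n → ℤ) : Prop :=
  ∀ k, h + ∑ j ∈ Finset.univ.filter (fun j => j ≤ k), r j = 0 ∨
    h + ∑ j ∈ Finset.univ.filter (fun j => j ≤ k), r j = 1

lemma sum_le_zero {n : ℕ} (r : Fin (n + 1) → ℤ) :
    ∑ j ∈ Finset.univ.filter (fun j => j ≤ 0), r j = r 0 := by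
  rw [Finset.sum_filter, Fin.sum_univ_succ]
  simp

lemma sum_le_succ {n : ℕ} (r : Fin (n + 1) → ℤ) (k : Fin n) :
    ∑ j ∈ Finset.univ.filter (fun j => j ≤ k.succ), r j =
      r 0 + ∑ j ∈ Finset.univ.filter (fun j => j ≤ k), Fin.tail r j := by
  rw [Finset.sum_filter, Finset.sum_filter, Fin.sum_univ_succ]
  simp [Fin.tail]

lemma Good_succ {n : ℕ} (h : ℤ) (r : Fin (n + 1) → ℤ) :
    Good h r ↔ (h + r 0 = 0 ∨ h + r 0 = 1) ∧ Good (h + r 0) (Fin.tail r) := by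
  unfold Good
  rw [Fin.forall_fin_succ, sum_le_zero]
  simp only [sum_le_succ, add_assoc]

/-- Admissible row between the vertical two given vertical states. -/
def RowOK {n : ℕ} (h h' : Bool) (s s' : Fin n → Bool) : Prop :=
  Good (iv h) (fun j => iv (s' j) - iv (s j)) ∧ iv h + ∑ j, (iv (s' j) - iv (s j)) = iv h'

lemma RowOK_succ {n : ℕ} (h h' : Bool) (s s' : Fin (n + 1) → Bool) :
    RowOK h h' s s' ↔ ∃ m, iv h + (iv (s' 0) - iv (s 0)) = iv m ∧
      RowOK m h' (Fin.tail s) (Fin.tail s') := by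
  unfold RowOK
  rw [Good_succ, Fin.sum_univ_succ, ← add_assoc]
  constructor
  · rintro ⟨⟨h1, h2⟩, h3⟩
    obtain ⟨m, hm⟩ := iv_mem h1
    refine ⟨m, hm.symm, ?_, ?_⟩
    · rw [hm]; exact h2
    · rw [hm]; exact h3
  · rintro ⟨m, hm, h2, h3⟩
    rw [hm]
    exact ⟨⟨iv_cases m, h2⟩, h3⟩

open Classical in
lemma T_one (w : ℂ) : ∀ (n : ℕ) (h h' : Bool) (s s' : Fin n → Bool),
    T w 1 n (fun _ => 1) h h' s s' = (1 - w) ^ n * if RowOK h h' s s' then 1 else 0 := by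
  intro n
  induction n with
  | zero =>
    intro h h' s s'
    have : RowOK h h' s s' ↔ h = h' := by
      unfold RowOK Good
      simp only [IsEmpty.forall_iff, true_and, Finset.univ_eq_empty, Finset.sum_empty, add_zero]
      exact ⟨iv_inj, fun e => e ▸ rfl⟩
    simp [T, this]
  | succ n ih =>
    intro h h' s s'
    have ht : Fin.tail (fun _ : Fin (n + 1) => (1 : ℂ)) = fun _ => 1 := rfl
    simp only [T, ht, ih, RowOK_succ, Bool.exists_bool, Fintype.sum_bool]
    cases h <;> cases s 0 <;> cases s' 0 <;> simp [L, iv] <;> ring_nf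

open Classical in
/-- 0-1 transfer matrix. -/
noncomputable def B1 (n : ℕ) : Matrix (Fin n → Bool) (Fin n → Bool) ℂ :=
  fun s s' => if RowOK false true s s' then 1 else 0

lemma B_one (w : ℂ) (n : ℕ) : B w 1 n (fun _ => 1) = (1 - w) ^ n • B1 n := by
  ext s s'
  simp [B, T_one, B1]

lemma Z_one (w : ℂ) (n : ℕ) : Z w n (fun _ => 1) (fun _ => 1) =
    (1 - w) ^ (n ^ 2) * (B1 n ^ n) (fun _ => false) (fun _ => true) := by
  unfold Z
  rw [List.ofFn_const, List.prod_replicate, B_one, smul_pow, ← pow_mul, ← sq]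
  simp

/-- Partial alternating sign matrices, with `m` rows, below the vertical state `s`. -/
def CfgP {m n : ℕ} (s : Fin n → Bool) (A : Fin m → Fin n → ℤ) : Prop :=
  (∀ i, Good 0 (A i) ∧ ∑ j, A i j = 1) ∧
    ∀ j, Good (iv (s j)) (fun i => A i j) ∧ iv (s j) + ∑ i, A i j = 1

lemma CfgP_succ {m n : ℕ} (s s' : Fin n → Bool) (A : Fin (m + 1) → Fin n → ℤ)
    (h0 : ∀ j, A 0 j = iv (s' j) - iv (s j)) :
    CfgP s A ↔ RowOK false true s s' ∧ CfgP s' (Fin.tail A) := by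
  have e0 : A 0 = fun j => iv (s' j) - iv (s j) := funext h0
  have e : ∀ j, iv (s j) + A 0 j = iv (s' j) := fun j => by rw [h0]; ring
  unfold CfgP RowOK
  rw [Fin.forall_fin_succ]
  simp only [Good_succ, Fin.sum_univ_succ, ← add_assoc, e, iv_cases, true_and]
  rw [e0]
  simp only [iv, Bool.false_eq_true, if_false, if_true, zero_add]
  exact and_assoc

lemma CfgP_first {m n : ℕ} (s : Fin n → Bool) (A : Fin (m + 1) → Fin n → ℤ) (h : CfgP s A) :
    ∃ s' : Fin n → Bool, ∀ j, A 0 j = iv (s' j) - iv (s j) := by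
  have : ∀ j, ∃ b, iv b = iv (s j) + A 0 j := fun j =>
    iv_mem ((Good_succ _ _).1 (h.2 j).1).1
  choose s' hs' using this
  exact ⟨s', fun j => by rw [hs']; ring⟩

/-- Splitting off the first row. -/
noncomputable def cfgEquiv (m n : ℕ) (s : Fin n → Bool) :
    {A : Fin (m + 1) → Fin n → ℤ // CfgP s A} ≃
      Σ s' : {s' : Fin n → Bool // RowOK false true s s'},
        {A : Fin m → Fin n → ℤ // CfgP s'.1 A} := by
  refine Equiv.symm (Equiv.ofBijective (fun p => ⟨Fin.cons (fun j => iv (p.1.1 j) - iv (s j)) p.2.1,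
    (CfgP_succ s p.1.1 _ (fun j => rfl)).2 ⟨p.1.2, p.2.2⟩⟩) ⟨?_, ?_⟩)
  · rintro ⟨⟨s1, h1⟩, A1, g1⟩ ⟨⟨s2, h2⟩, A2, g2⟩ h
    simp only [Subtype.mk.injEq, Fin.cons_inj] at h
    obtain ⟨h, rfl⟩ := h
    have : s1 = s2 := by
      funext j
      have := congrFun h j
      exact iv_inj (by linarith)
    subst this
    rfl
  · rintro ⟨A, hA⟩
    obtain ⟨s', hs'⟩ := CfgP_first s A hA
    have := (CfgP_succ s s' A hs').1 hA
    refine ⟨⟨⟨s', this.1⟩, Fin.tail A, this.2⟩, ?_⟩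
    apply Subtype.ext
    funext i
    refine Fin.cases ?_ (fun i => rfl) i
    funext j
    exact (hs' j).symm

lemma cfg_card (n m : ℕ) : ∀ s : Fin n → Bool,
    Finite {A : Fin m → Fin n → ℤ // CfgP s A} ∧
    (Nat.card {A : Fin m → Fin n → ℤ // CfgP s A} : ℂ) = (B1 n ^ m) s (fun _ => true) := by
  classical
  induction m with
  | zero =>
    intro s
    refine ⟨Subtype.finite, ?_⟩
    rw [pow_zero, Matrix.one_apply]
    have key : ∀ A : Fin 0 → Fin n → ℤ, CfgP s A ↔ s = fun _ => true := by
      intro A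
      unfold CfgP Good
      simp only [IsEmpty.forall_iff, true_and, Finset.univ_eq_empty, Finset.sum_empty, add_zero]
      constructor
      · intro h
        funext j
        exact iv_inj (h j)
      · rintro rfl j; rfl
    split_ifs with h
    · have : Unique {A : Fin 0 → Fin n → ℤ // CfgP s A} :=
        { default := ⟨Fin.elim0, (key _).2 h⟩
          uniq := fun a => Subtype.ext (Subsingleton.elim _ _) }
      simp
    · have : IsEmpty {A : Fin 0 → Fin n → ℤ // CfgP s A} := ⟨fun a => h ((key _).1 a.2)⟩
      simp
  | succ m ih =>
    intro s
    have hf : ∀ s' : {s' : Fin n → Bool // RowOK false true s s'},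
      Finite {A : Fin m → Fin n → ℤ // CfgP s'.1 A} := fun s' => (ih s'.1).1
    refine ⟨Finite.of_equiv _ (cfgEquiv m n s).symm, ?_⟩
    rw [Nat.card_congr (cfgEquiv m n s), Nat.card_sigma, pow_succ', Matrix.mul_apply]
    push_cast
    simp only [(ih _).2, B1, ite_mul, one_mul, zero_mul]
    rw [← Finset.sum_filter]
    exact (Finset.sum_subtype (f := fun s' => (B1 n ^ m) s' (fun _ => true)) _ (by simp)).symm

end SixV

namespace SixV

lemma Good_entry {n : ℕ} (h : ℤ) (hh : h = 0 ∨ h = 1) (r : Fin n → ℤ) (hr : Good h r) (j : Fin n) :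
    r j = -1 ∨ r j = 0 ∨ r j = 1 := by
  induction n generalizing h with
  | zero => exact j.elim0
  | succ n ih =>
    obtain ⟨h1, h2⟩ := (Good_succ h r).1 hr
    refine Fin.cases ?_ (fun i => ih (h + r 0) h1 (Fin.tail r) h2 i) j
    omega

lemma isASM_iff (n : ℕ) (A : Matrix (Fin n) (Fin n) ℤ) :
    IsASM n A ↔ CfgP (m := n) (fun _ => false) A := by
  unfold IsASM CfgP
  constructor
  · rintro ⟨_, h2, h3, h4, h5⟩
    refine ⟨fun i => ⟨fun k => ?_, h2 i⟩, fun j => ⟨fun k => ?_, ?_⟩⟩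
    · simpa using h4 i k
    · simpa [iv] using h5 j k
    · simpa [iv] using h3 j
  · rintro ⟨h1, h2⟩
    refine ⟨fun i j => Good_entry 0 (Or.inl rfl) _ (h1 i).1 j, fun i => (h1 i).2,
      fun j => ?_, fun i k => ?_, fun j k => ?_⟩
    · simpa [iv] using (h2 j).2
    · simpa using (h1 i).1 k
    · simpa [iv] using (h2 j).1 k

lemma exists_root : ∃ w : ℂ, w ^ 2 + w + 1 = 0 := by
  obtain ⟨d, hd⟩ := IsAlgClosed.exists_pow_nat_eq (-3 : ℂ) (n := 2) (by norm_num)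
  exact ⟨(-1 + d) / 2, by linear_combination hd / 4⟩

lemma card_complex (n : ℕ) :
    (Nat.card {A : Matrix (Fin n) (Fin n) ℤ // IsASM n A} : ℂ) = Rr n := by
  obtain ⟨w, hw⟩ := exists_root
  have h1 : (1 - w) ≠ 0 := by
    intro h
    have e : w = 1 := by linear_combination -h
    rw [e] at hw
    norm_num at hw
  have hc : Nat.card {A : Matrix (Fin n) (Fin n) ℤ // IsASM n A} =
      Nat.card {A : Fin n → Fin n → ℤ // CfgP (fun _ => false) A} :=
    Nat.card_congr (Equiv.subtypeEquivRight (isASM_iff n))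
  rw [hc, (cfg_card n n _).2]
  refine mul_left_cancel₀ (pow_ne_zero (n ^ 2) h1) ?_
  rw [← Z_one, Z_value w hw]

end SixV

/-- **The ASM theorem**: the number of `n×n` alternating sign matrices
(equivalently, of fully-packed loop configurations on the `n×n` square with
alternating boundary conditions and fixed boundary coloring) is
`∏_{j=0}^{n-1} (3j+1)!/(n+j)!`. -/
theorem card_ASM (n : ℕ) :
    (Nat.card {A : Matrix (Fin n) (Fin n) ℤ // IsASM n A} : ℚ) =
      ∏ j ∈ Finset.range n,
        ((Nat.factorial (3 * j + 1) : ℚ) / (Nat.factorial (n + j) : ℚ)) := by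
  have h := SixV.card_complex n
  unfold SixV.Rr at h
  apply (Rat.cast_injective (α := ℂ))
  push_cast
  exact h
end

section
/- The number of n×n alternating sign matrices whose unique 1 in the bottom row is at column j satisfies Z^{[j-1]}(n-1) = [(n+j)!(2n−j)!(2n+1)!]/[n!·j!·(n−j)!·(3n+1)!] · Z(n−1), where Z(m) = ∏_{k=0}^{m-1}(3k+1)!/(m+k)! . Equivalently, the refined ASM numbers A(n,k) = binomial(n+k-2, k-1)·(2n−k−1)!/(n−k)! · ∏_{j=0}^{n-2}(3j+1)!/(n+j)! . -/
open Finset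

namespace RASM

variable {R : Type*} [CommRing R]

/-- Column transfer operator (rows listed from the special row outwards). -/
def T (t : R) : Bool → List Bool → (List Bool → R) → R
  | false, [], _ => 0
  | true, [], f => f []
  | false, false :: l, f => T t false l (fun l' => f (false :: l')) + T t true l (fun l' => f (true :: l'))
  | false, true :: l, f => t * T t false l (fun l' => f (true :: l'))
  | true, false :: l, f => t * T t true l (fun l' => f (false :: l'))
  | true, true :: l, f => (t ^ 2 - t + 1) * T t false l (fun l' => f (false :: l')) + T t true l (fun l' => f (true :: l'))

theorem T_add (t : R) (v : Bool) (l : List Bool) (f g : List Bool → R) :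
    T t v l (fun l' => f l' + g l') = T t v l f + T t v l g := by
  induction l generalizing v f g with
  | nil => cases v <;> simp [T]
  | cons a l ih => cases v <;> cases a <;> simp only [T, ih] <;> ring

theorem T_smul (t : R) (v : Bool) (l : List Bool) (c : R) (f : List Bool → R) :
    T t v l (fun l' => c * f l') = c * T t v l f := by
  induction l generalizing v f with
  | nil => cases v <;> simp [T]
  | cons a l ih => cases v <;> cases a <;> simp only [T, ih] <;> ring

theorem T_zero (t : R) (v : Bool) (l : List Bool) :
    T t v l (fun _ => 0) = 0 := by
  have := T_smul t v l 0 (fun _ => 0)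
  simpa using this

theorem T_rel (t u : R) (l : List Bool) (f : List Bool → R) :
    T t false l (fun l' => T u false l' f) = T u false l (fun l' => T t false l' f) ∧
    T t true l (fun l' => T u true l' f) = T u true l (fun l' => T t true l' f) ∧
    T t false l (fun l' => T u true l' f) + u * T t true l (fun l' => T u false l' f)
      = T u false l (fun l' => T t true l' f) + t * T u true l (fun l' => T t false l' f) ∧
    -t * T t false l (fun l' => T u true l' f) + (1 - u) * T t true l (fun l' => T u false l' f)
      = -u * T u false l (fun l' => T t true l' f) + (1 - t) * T u true l (fun l' => T t false l' f) := by
  induction l generalizing f with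
  | nil => simp [T]
  | cons a l ih =>
    obtain ⟨h1, h2, h3, h4⟩ := ih (fun l' => f (false :: l'))
    obtain ⟨k1, k2, k3, k4⟩ := ih (fun l' => f (true :: l'))
    cases a
    · simp only [T, T_add, T_smul]
      refine ⟨?_, ?_, ?_, ?_⟩
      · linear_combination h1 + k3
      · linear_combination t * u * h2
      · linear_combination (t + u) * h3 + h4 + (1 + t * u) * k2
      · grind
    · simp only [T, T_add, T_smul]
      refine ⟨?_, ?_, ?_, ?_⟩
      · linear_combination t * u * k1
      · grind
      · grind
      · grind

/-- Right vacuum. -/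
def e : List Bool → R
  | [] => 1
  | false :: _ => 0
  | true :: l => e l

def P : List R → List Bool → R
  | [] => e
  | t :: ts => fun l => T t false l (P ts)

def aw (x y t : R) : R := t * x - t * y + y
def bw (x y t : R) : R := x - t * y

def Z (x y : R) : List R → List Bool → R
  | [] => fun _ => 0
  | t :: ts => fun l => bw x y t * T t false l (Z x y ts) + (ts.map (aw x y)).prod * T t true l (P ts)

theorem P_perm {ts us : List R} (h : ts.Perm us) : P ts = P us := by
  induction h with
  | nil => rfl
  | cons x _ ih => simp only [P, ih]
  | swap x y l => funext k; simp only [P]; exact (T_rel _ _ _ _).1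
  | trans _ _ h1 h2 => exact h1.trans h2

theorem Z_perm (x y : R) {ts us : List R} (h : ts.Perm us) : Z x y ts = Z x y us := by
  induction h with
  | nil => rfl
  | cons x h ih => simp only [Z, ih, P_perm h, (h.map _).prod_eq]
  | swap t u l =>
    funext k
    simp only [Z, T_add, T_smul, List.map_cons, List.prod_cons, P]
    obtain ⟨h1, _, _, _⟩ := T_rel u t k (Z x y l)
    obtain ⟨_, _, h3, h4⟩ := T_rel u t k (P l)
    have e1 : T u false k (Z x y l) = T u false k (Z x y l) := rfl
    simp only [bw, aw]
    linear_combination (x - t * y) * (x - u * y) * h1 + (List.map (aw x y) l).prod * (x * h3 + y * h4)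
  | trans _ _ h1 h2 => exact h1.trans h2

theorem T_true_rep (t : R) (m : ℕ) (f : List Bool → R) :
    T t true (List.replicate m false) f = t ^ m * f (List.replicate m false) := by
  induction m generalizing f with
  | zero => simp [T]
  | succ m ih => simp only [List.replicate_succ, T, ih]; ring

theorem T_true_e (t : R) : (fun l => T t true l e) = e := by
  funext l
  induction l with
  | nil => simp [T]
  | cons a l ih => cases a <;> simp [T, e, T_zero, ih]; 

theorem Z_first (x y t : R) (ts : List R) (m : ℕ) (h : bw x y t = 0) :
    Z x y (t :: ts) (List.replicate m false) =
      (ts.map (aw x y)).prod * t ^ m * P ts (List.replicate m false) := by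
  simp [Z, h, T_true_rep, mul_assoc]

theorem Z_last (x y t : R) (ts : List R) (h : aw x y t = 0) :
    Z x y (ts ++ [t]) = fun l => (ts.map (bw x y)).prod * P ts l := by
  induction ts with
  | nil =>
    funext l
    have := congrFun (T_true_e t) l
    simp [Z, T_zero, P]
    exact this
  | cons u ts ih =>
    funext l
    simp [Z, ih, h, T_smul, P]
    ring

theorem P_cons_true (ts : List R) (l : List Bool) : P ts (true :: l) = ts.prod * P ts l := by
  induction ts generalizing l with
  | nil => simp [P, e]
  | cons t ts ih => simp only [P, T, ih, T_smul, List.prod_cons]; ring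

theorem P_cons_false (ts : List R) (l : List Bool) : P ts (false :: l) = Z 1 0 ts l := by
  induction ts generalizing l with
  | nil => simp [P, e, Z]
  | cons t ts ih =>
    have : aw (1:R) 0 = id := by funext t; simp [aw]
    simp only [P, T, ih, P_cons_true, T_smul, Z, bw, this, List.map_id]; ring

section map
variable {S : Type*} [CommRing S] (φ : R →+* S)

theorem T_map (t : R) (v : Bool) (l : List Bool) (f : List Bool → R) :
    φ (T t v l f) = T (φ t) v l (fun l' => φ (f l')) := by
  induction l generalizing v f with
  | nil => cases v <;> simp [T]
  | cons a l ih => cases v <;> cases a <;> simp [T, ih]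

theorem e_map (l : List Bool) : φ (e l) = e l := by
  induction l with
  | nil => simp [e]
  | cons a l ih => cases a <;> simp [e, ih]

theorem P_map (ts : List R) (l : List Bool) : φ (P ts l) = P (ts.map φ) l := by
  induction ts generalizing l with
  | nil => simp [P, e_map]
  | cons t ts ih => simp only [P, T_map, ih, List.map_cons]

theorem aw_map (x y t : R) : φ (aw x y t) = aw (φ x) (φ y) (φ t) := by simp [aw]
theorem bw_map (x y t : R) : φ (bw x y t) = bw (φ x) (φ y) (φ t) := by simp [bw]

theorem Z_map (x y : R) (ts : List R) (l : List Bool) :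
    φ (Z x y ts l) = Z (φ x) (φ y) (ts.map φ) l := by
  induction ts generalizing l with
  | nil => simp [Z]
  | cons t ts ih =>
    simp only [Z, map_add, map_mul, T_map, ih, List.map_cons, bw_map, P_map, map_list_prod, List.map_map]
    congr 4
    funext t; simp [aw_map]

end map

end RASM


namespace RASM

variable {R : Type*} [CommRing R]

def dw (s t : R) : R := t * s - s + 1

/-- The three-term combination. -/
def E (s : R) (m : ℕ) (ts : List R) : R :=
  (ts.map (dw s)).prod * Z s 1 ts (List.replicate m false)
  + (1 - s) ^ m * (ts.map (bw s 1)).prod * Z 1 (1 - s) ts (List.replicate m false)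
  - s ^ m * (ts.map (aw s 1)).prod * Z (1 - s) (-s) ts (List.replicate m false)

theorem E_perm (s : R) (m : ℕ) {ts us : List R} (h : ts.Perm us) : E s m ts = E s m us := by
  simp only [E, Z_perm _ _ h, (h.map _).prod_eq]

theorem bw1 (s : R) : bw 1 (1 - s) = aw s 1 := by funext t; simp only [bw, aw]; ring
theorem aw1 (s : R) : aw 1 (1 - s) = dw s := by funext t; simp only [dw, aw]; ring
theorem bw2 (s : R) : bw (1 - s) (-s) = dw s := by funext t; simp only [bw, dw]; ring
theorem aw2 (s : R) : aw (1 - s) (-s) = fun t => - bw s 1 t := by funext t; simp only [bw, aw]; ring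

theorem prod_neg_map (f : R → R) (ts : List R) :
    (ts.map (fun t => - f t)).prod = (-1) ^ ts.length * (ts.map f).prod := by
  induction ts with
  | nil => simp
  | cons t ts ih => simp only [List.map_cons, List.prod_cons, ih, List.length_cons]; ring

theorem E_root (s t : R) (ts : List R) (h : bw s 1 t = 0 ∨ aw s 1 t = 0 ∨ dw s t = 0) :
    E s ts.length (t :: ts) = 0 := by
  have hp : (t :: ts).Perm (ts ++ [t]) := List.perm_append_comm (l₁ := [t]) (l₂ := ts)
  set m := ts.length with hm
  rcases h with h | h | h
  · have h2 : aw (1 - s) (-s) t = 0 := by rw [aw2]; simp [h]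
    rw [E, Z_first s 1 t ts m h, Z_perm (1 - s) (-s) hp, Z_last (1 - s) (-s) t ts h2]
    simp only [bw2, List.map_cons, List.prod_cons, h]
    have hs : s = t := by simp only [bw] at h; linear_combination h
    subst hs
    simp only [aw, dw]; ring
  · have h1 : bw 1 (1 - s) t = 0 := by rw [bw1]; exact h
    rw [E, Z_perm s 1 hp, Z_last s 1 t ts h, Z_first 1 (1 - s) t ts m h1]
    simp only [aw1, List.map_cons, List.prod_cons, h]
    have hs : (1 - s) * t = 1 := by simp only [aw] at h; linear_combination -h
    have hs' : (1 - s) ^ m * t ^ m = 1 := by rw [← mul_pow, hs, one_pow]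
    simp only [bw, dw]
    linear_combination ((List.map (dw s) ts).prod * (List.map (bw s 1) ts).prod * P ts (List.replicate m false)) * ((s - t) * hs' - hs)
  · have h1 : aw 1 (1 - s) t = 0 := by rw [aw1]; exact h
    have h2 : bw (1 - s) (-s) t = 0 := by rw [bw2]; exact h
    rw [E, Z_perm 1 (1 - s) hp, Z_last 1 (1 - s) t ts h1, Z_first (1 - s) (-s) t ts m h2]
    simp only [aw2, bw1, prod_neg_map, List.map_cons, List.prod_cons, h, ← hm]
    have hs : (1 - s) = - s * t := by simp only [dw] at h; linear_combination h
    have hb : bw s 1 t = aw s 1 t := by simp only [bw, aw]; simp only [dw] at h; linear_combination -h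
    rw [hs, hb, mul_pow, neg_pow]
    ring

theorem E_map {S : Type*} [CommRing S] (φ : R →+* S) (s : R) (m : ℕ) (ts : List R) :
    φ (E s m ts) = E (φ s) m (ts.map φ) := by
  have h1 : φ ∘ dw s = dw (φ s) ∘ φ := by funext t; simp [dw]
  have h2 : φ ∘ aw s 1 = aw (φ s) 1 ∘ φ := by funext t; simp [aw]
  have h3 : φ ∘ bw s 1 = bw (φ s) 1 ∘ φ := by funext t; simp [bw]
  simp only [E, map_add, map_sub, map_mul, map_pow, Z_map, map_list_prod, List.map_map, map_one, map_neg, h1, h2, h3]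

open Polynomial in
theorem sub_deg_le {p q : ℚ[X]} {d : ℕ} (hp : p.natDegree ≤ d) (hq : q.natDegree ≤ d) :
    (p - q).natDegree ≤ d := (natDegree_sub_le p q).trans (max_le hp hq)

open Polynomial in
theorem T_deg (t : ℚ) (d : ℕ) (v : Bool) (l : List Bool) (f : List Bool → ℚ[X])
    (hf : ∀ l, (f l).natDegree ≤ d) : (T (C t) v l f).natDegree ≤ d := by
  have hm : ∀ (c : ℚ) (p : ℚ[X]), p.natDegree ≤ d → (C c * p).natDegree ≤ d := fun c p h =>
    (natDegree_C_mul_le c p).trans h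
  induction l generalizing v f with
  | nil => cases v <;> simp [T, hf]
  | cons a l ih =>
    have i1 := fun v => ih v _ (fun l => hf (false :: l))
    have i2 := fun v => ih v _ (fun l => hf (true :: l))
    cases v <;> cases a <;> simp only [T]
    · exact natDegree_add_le_of_degree_le (i1 _) (i2 _)
    · exact hm _ _ (i2 _)
    · exact hm _ _ (i1 _)
    · refine natDegree_add_le_of_degree_le ?_ (i2 _)
      have : (C t ^ 2 - C t + 1 : ℚ[X]) = C (t ^ 2 - t + 1) := by simp
      rw [this]
      exact hm _ _ (i1 _)

open Polynomial in
theorem e_deg (l : List Bool) : (e l : ℚ[X]).natDegree ≤ 0 := by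
  induction l with
  | nil => simp [e]
  | cons a l ih => cases a <;> simp [e]; simpa using ih

open Polynomial in
theorem P_deg (ts : List ℚ) (l : List Bool) : (P (ts.map C) l : ℚ[X]).natDegree ≤ 0 := by
  induction ts generalizing l with
  | nil => exact e_deg l
  | cons t ts ih => exact T_deg t 0 false l _ ih

open Polynomial in
theorem prod_deg (f : ℚ[X] → ℚ[X]) (hf : ∀ t : ℚ, (f (C t)).natDegree ≤ 1) (ts : List ℚ) :
    (((ts.map C).map f).prod).natDegree ≤ ts.length := by
  induction ts with
  | nil => simp
  | cons t ts ih =>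
    simp only [List.map_cons, List.prod_cons, List.length_cons]
    refine natDegree_mul_le.trans ?_
    have := hf t
    omega

open Polynomial in
theorem Z_deg (x y : ℚ[X]) (hx : x.natDegree ≤ 1) (hy : y.natDegree ≤ 1) (ts : List ℚ) (l : List Bool) :
    (Z x y (ts.map C) l).natDegree ≤ ts.length - 1 := by
  have ha : ∀ t : ℚ, (aw x y (C t)).natDegree ≤ 1 := by
    intro t
    simp only [aw]
    refine natDegree_add_le_of_degree_le (sub_deg_le ?_ ?_) hy
    · exact (natDegree_C_mul_le _ _).trans hx
    · exact (natDegree_C_mul_le _ _).trans hy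
  have hb : ∀ t : ℚ, (bw x y (C t)).natDegree ≤ 1 := by
    intro t
    simp only [bw]
    exact sub_deg_le hx ((natDegree_C_mul_le _ _).trans hy)
  induction ts generalizing l with
  | nil => simp [Z]
  | cons t ts ih =>
    simp only [List.map_cons, Z, List.length_cons, Nat.add_sub_cancel]
    refine natDegree_add_le_of_degree_le ?_ ?_
    · rcases ts with _ | ⟨u, us⟩
      · simp [Z, T_zero]
      · refine natDegree_mul_le.trans ?_
        have := T_deg t _ false l _ ih
        have := hb t
        simp only [List.length_cons] at *
        omega
    · refine natDegree_mul_le.trans ?_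
      have := T_deg t 0 true l _ (P_deg ts)
      have := prod_deg _ ha ts
      omega

open Polynomial in
theorem E_deg (m : ℕ) (ts : List ℚ) (h : ts.length = m + 1) :
    (E (X : ℚ[X]) m (ts.map C)).natDegree < 3 * ts.length := by
  have hX : (1 - X : ℚ[X]).natDegree ≤ 1 := sub_deg_le (by simp) (by simp)
  have hXX : (-X : ℚ[X]).natDegree ≤ 1 := by simp
  have z1 := Z_deg X 1 (by simp) (by simp) ts (List.replicate m false)
  have z2 := Z_deg 1 (1 - X) (by simp) hX ts (List.replicate m false)
  have z3 := Z_deg (1 - X) (-X) hX hXX ts (List.replicate m false)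
  have q1 : (((ts.map C).map (dw (X : ℚ[X]))).prod).natDegree ≤ ts.length := prod_deg _ (by
    intro t; simp only [dw]
    refine natDegree_add_le_of_degree_le (sub_deg_le ?_ ?_) (by simp)
    · exact (natDegree_C_mul_le _ _).trans (by simp)
    · simp) ts
  have q2 : (((ts.map C).map (bw (X : ℚ[X]) 1)).prod).natDegree ≤ ts.length := prod_deg _ (by
    intro t; simp only [bw]
    exact sub_deg_le (by simp) ((natDegree_C_mul_le _ _).trans (by simp))) ts
  have q3 : (((ts.map C).map (aw (X : ℚ[X]) 1)).prod).natDegree ≤ ts.length := prod_deg _ (by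
    intro t; simp only [aw]
    refine natDegree_add_le_of_degree_le (sub_deg_le ?_ ?_) (by simp)
    · exact (natDegree_C_mul_le _ _).trans (by simp)
    · exact (natDegree_C_mul_le _ _).trans (by simp)) ts
  have p1 : ((1 - X : ℚ[X]) ^ m).natDegree ≤ m := natDegree_pow_le.trans (by nlinarith)
  have p2 : ((X : ℚ[X]) ^ m).natDegree ≤ m := by simp
  suffices h : (E (X : ℚ[X]) m (ts.map C)).natDegree ≤ 3 * m + 1 by omega
  unfold E
  refine sub_deg_le (natDegree_add_le_of_degree_le ?_ ?_) ?_
  · refine natDegree_mul_le.trans ?_; omega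
  · refine natDegree_mul_le.trans ?_
    have := natDegree_mul_le (p := (1 - X : ℚ[X]) ^ m) (q := ((ts.map C).map (bw (X : ℚ[X]) 1)).prod)
    omega
  · refine natDegree_mul_le.trans ?_
    have := natDegree_mul_le (p := (X : ℚ[X]) ^ m) (q := ((ts.map C).map (aw (X : ℚ[X]) 1)).prod)
    omega

open Polynomial in
theorem E_generic (m : ℕ) (ts : List ℚ) (h : ts.length = m + 1) (hnd : ts.Nodup)
    (hgt : ∀ t ∈ ts, 1 < t) (s : ℚ) : E s m ts = 0 := by
  have key : ∀ t ∈ ts, ∀ s : ℚ, (bw s 1 t = 0 ∨ aw s 1 t = 0 ∨ dw s t = 0) → E s m ts = 0 := by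
    intro t ht s hs
    have hp := List.perm_cons_erase ht
    have hl : (ts.erase t).length = m := by rw [List.length_erase_of_mem ht]; omega
    rw [E_perm s m hp, ← hl]
    exact E_root s t _ hs
  have hev : ∀ s : ℚ, (E (X : ℚ[X]) m (ts.map C)).eval s = E s m ts := by
    intro s
    have := E_map (evalRingHom s) (X : ℚ[X]) m (ts.map C)
    simp only [coe_evalRingHom, eval_X, List.map_map] at this
    rw [this]
    congr 1
    conv_rhs => rw [← List.map_id ts]
    congr 1
    funext t; simp
  let S0 := ts.toFinset
  let S1 := S0.image (fun t => (t - 1) / t)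
  let S2 := S0.image (fun t => 1 / (1 - t))
  have c0 : S0.card = ts.length := List.toFinset_card_of_nodup hnd
  have hS0 : ∀ t ∈ S0, 1 < t := by intro t ht; exact hgt t (by simpa [S0] using ht)
  have hS1 : ∀ t ∈ S1, 0 < t ∧ t < 1 := by
    intro t ht
    obtain ⟨u, hu, rfl⟩ := Finset.mem_image.1 ht
    have := hS0 u hu
    constructor
    · apply div_pos <;> linarith
    · rw [div_lt_one] <;> linarith
  have hS2 : ∀ t ∈ S2, t < 0 := by
    intro t ht
    obtain ⟨u, hu, rfl⟩ := Finset.mem_image.1 ht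
    have := hS0 u hu
    apply div_neg_of_pos_of_neg <;> linarith
  have c1 : S1.card = ts.length := by
    rw [← c0]; apply Finset.card_image_of_injOn
    intro t ht u hu htu
    have h1 := hS0 t ht; have h2 := hS0 u hu
    simp only at htu
    rw [div_eq_div_iff (by linarith) (by linarith)] at htu
    linarith
  have c2 : S2.card = ts.length := by
    rw [← c0]; apply Finset.card_image_of_injOn
    intro t ht u hu htu
    have h1 := hS0 t ht; have h2 := hS0 u hu
    simp only at htu
    rw [div_eq_div_iff (by linarith) (by linarith)] at htu
    linarith
  have d1 : Disjoint S0 S1 := Finset.disjoint_left.2 (fun t h1 h2 => by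
    have := hS0 t h1; have := hS1 t h2; linarith)
  have d2 : Disjoint (S0 ∪ S1) S2 := Finset.disjoint_left.2 (fun t h1 h2 => by
    have := hS2 t h2
    rcases Finset.mem_union.1 h1 with h1 | h1
    · have := hS0 t h1; linarith
    · have := hS1 t h1; linarith)
  have hz : E (X : ℚ[X]) m (ts.map C) = 0 := by
    apply eq_zero_of_natDegree_lt_card_of_eval_eq_zero' _ (S0 ∪ S1 ∪ S2)
    · intro s hs
      rw [hev]
      rcases Finset.mem_union.1 hs with hs | hs
      · rcases Finset.mem_union.1 hs with hs | hs
        · exact key s (by simpa [S0] using hs) s (Or.inl (by simp [bw]))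
        · obtain ⟨u, hu, rfl⟩ := Finset.mem_image.1 hs
          have := hS0 u hu
          refine key u (by simpa [S0] using hu) _ (Or.inr (Or.inl ?_))
          have : u ≠ 0 := by linarith
          simp only [aw]; field_simp; ring
      · obtain ⟨u, hu, rfl⟩ := Finset.mem_image.1 hs
        have := hS0 u hu
        refine key u (by simpa [S0] using hu) _ (Or.inr (Or.inr ?_))
        have : 1 - u ≠ 0 := by linarith
        simp only [dw]; field_simp; ring
    · rw [Finset.card_union_of_disjoint d2, Finset.card_union_of_disjoint d1, c0, c1, c2]
      have := E_deg m ts h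
      omega
  rw [← hev, hz, eval_zero]

open Polynomial in
theorem E_one (m : ℕ) (s : ℚ) : E s m (List.replicate (m + 1) 1) = 0 := by
  let q : ℚ[X] := E (C s) m ((List.range (m + 1)).map (fun j : ℕ => 1 + ((j : ℚ[X]) + 1) * X))
  have hev : ∀ ε : ℚ, q.eval ε = E s m ((List.range (m + 1)).map (fun j : ℕ => 1 + ((j : ℚ) + 1) * ε)) := by
    intro ε
    have := E_map (evalRingHom ε) (C s) m ((List.range (m + 1)).map (fun j : ℕ => 1 + ((j : ℚ[X]) + 1) * X))
    simp only [coe_evalRingHom, eval_C, List.map_map] at this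
    rw [this]
    congr 2
    funext t; simp
  have hq : q = 0 := by
    apply eq_zero_of_infinite_isRoot
    refine Set.Infinite.mono ?_ (Set.Ioi_infinite (0 : ℚ))
    intro ε hε
    have hε : 0 < ε := hε
    show q.eval ε = 0
    rw [hev]
    apply E_generic
    · simp
    · refine List.Nodup.map ?_ List.nodup_range
      intro i j hij
      simp only [add_right_inj] at hij
      have := mul_right_cancel₀ hε.ne' hij
      simpa using this
    · intro t ht
      obtain ⟨j, _, rfl⟩ := List.mem_map.1 ht
      have : 0 < ((j : ℚ) + 1) * ε := by positivity
      linarith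
  have := hev 0
  rw [hq] at this
  simp only [eval_zero, mul_zero, add_zero, List.map_const', List.length_range] at this
  exact this.symm

end RASM


namespace RASM

def Wv : List Bool → List Bool → ℚ
  | [] => e
  | v :: vs => fun l => T 1 v l (Wv vs)

def vv (N k : ℕ) : List Bool := List.replicate k false ++ true :: List.replicate (N - 1 - k) false

def w (m k : ℕ) : ℚ := Wv (vv (m + 1) k) (List.replicate m false)

theorem P_one (N : ℕ) : P (List.replicate N (1 : ℚ)) = Wv (List.replicate N false) := by
  induction N with
  | zero => rfl
  | succ N ih => simp only [List.replicate_succ, P, Wv, ih]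

theorem T_sum {ι : Type*} (t : ℚ) (v : Bool) (l : List Bool) (s : Finset ι) (f : ι → List Bool → ℚ) :
    T t v l (fun l' => ∑ i ∈ s, f i l') = ∑ i ∈ s, T t v l (f i) := by
  classical
  induction s using Finset.induction_on with
  | empty => simp [T_zero]
  | insert a s ha ih => simp only [Finset.sum_insert ha, T_add, ih]

theorem Z_one (x y : ℚ) (N : ℕ) (l : List Bool) :
    Z x y (List.replicate N 1) l = ∑ k ∈ range N, (x - y) ^ k * x ^ (N - 1 - k) * Wv (vv N k) l := by
  induction N generalizing l with
  | zero => simp [Z]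
  | succ N ih =>
    have ih' := funext ih
    simp only [List.replicate_succ, Z]
    rw [ih', T_sum, P_one, Finset.sum_range_succ', Finset.mul_sum]
    congr 1
    · refine Finset.sum_congr rfl fun k hk => ?_
      rw [T_smul]
      have : N + 1 - 1 - (k + 1) = N - 1 - k := by omega
      have h2 : vv (N + 1) (k + 1) = false :: vv N k := by
        simp only [vv, this, List.replicate_succ, List.cons_append]
      rw [h2, this]
      simp only [bw, Wv]
      ring
    · simp [aw, vv, Wv]

theorem w_zero : w 0 0 = 1 := by simp [w, vv, Wv, T, e]

theorem w_succ (m : ℕ) : w (m + 1) 0 = ∑ k ∈ range (m + 1), w m k := by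
  have h : w (m + 1) 0 = P (List.replicate (m + 1) (1 : ℚ)) (List.replicate (m + 1) false) := by
    simp [w, vv, Wv, T_true_rep, P_one]
  rw [h, List.replicate_succ (a := false), P_cons_false, Z_one]
  refine Finset.sum_congr rfl fun k hk => by simp [w]

open Polynomial

noncomputable def wp (m : ℕ) : ℚ[X] := ∑ k ∈ range (m + 1), C (w m k) * X ^ k

theorem wp_coeff (m k : ℕ) (hk : k ≤ m) : (wp m).coeff k = w m k := by
  simp only [wp, finsetSum_coeff, coeff_C_mul_X_pow]
  simp; omega

theorem wp_gap (m r : ℕ) (h1 : m + 1 ≤ r) (h2 : r ≤ 2 * m) :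
    ((1 - X) ^ (2 * m + 1) * wp m).coeff r = 0 := by
  let p : ℚ[X] := ∑ k ∈ range (m + 1), C (w m k) * ((X - 1) ^ k * X ^ (m - k))
  let q : ℚ[X] := ∑ k ∈ range (m + 1), C (w m k) * (1 - X) ^ (m - k)
  have key : (1 - X) ^ (2 * m + 1) * wp m = (-1) ^ m * (p - X ^ (2 * m + 1) * q) := by
    apply Polynomial.funext
    intro s
    have := E_one m s
    simp only [E, Z_one, dw, bw, aw, List.map_replicate, List.prod_replicate] at this
    simp only [wp, p, q, eval_mul, eval_pow, eval_sub, eval_one, eval_X, eval_finsetSum, eval_C, eval_neg]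
    have e1 : ∑ k ∈ range (m + 1), (s - 1) ^ k * s ^ (m + 1 - 1 - k) * Wv (vv (m + 1) k) (List.replicate m false)
        = ∑ k ∈ range (m + 1), w m k * ((s - 1) ^ k * s ^ (m - k)) :=
      Finset.sum_congr rfl fun k hk => by simp [w]; ring
    have e2 : ∑ k ∈ range (m + 1), (1 - (1 - s)) ^ k * 1 ^ (m + 1 - 1 - k) * Wv (vv (m + 1) k) (List.replicate m false)
        = ∑ k ∈ range (m + 1), w m k * s ^ k :=
      Finset.sum_congr rfl fun k hk => by simp [w]; ring
    have e3 : ∑ k ∈ range (m + 1), (1 - s - -s) ^ k * (1 - s) ^ (m + 1 - 1 - k) * Wv (vv (m + 1) k) (List.replicate m false)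
        = ∑ k ∈ range (m + 1), w m k * (1 - s) ^ (m - k) :=
      Finset.sum_congr rfl fun k hk => by simp [w]; ring
    rw [e1, e2, e3] at this
    set A := ∑ k ∈ range (m + 1), w m k * ((s - 1) ^ k * s ^ (m - k))
    set B := ∑ k ∈ range (m + 1), w m k * s ^ k
    set D := ∑ k ∈ range (m + 1), w m k * (1 - s) ^ (m - k)
    have hs : (s - 1) ^ (m + 1) = (-1) ^ (m + 1) * (1 - s) ^ (m + 1) := by rw [← mul_pow]; ring_nf
    have hsq : ((-1 : ℚ) ^ m) * (-1) ^ m = 1 := by rw [← mul_pow]; simp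
    have hb1 : s - 1 * 1 = s - 1 := by ring
    have hb2 : 1 * s - s + 1 = 1 := by ring
    have hb3 : 1 * s - 1 * 1 + 1 = s := by ring
    rw [hb1, hb2, hb3, hs, one_pow, one_mul] at this
    have h5 : (1 - s) ^ (2 * m + 1) = (1 - s) ^ m * (1 - s) ^ (m + 1) := by rw [← pow_add]; congr 1; omega
    have h6 : s ^ (2 * m + 1) = s ^ m * s ^ (m + 1) := by rw [← pow_add]; congr 1; omega
    rw [h5, h6]
    rw [pow_succ (-1 : ℚ)] at this
    linear_combination (-(-1) ^ m) * this - ((1 - s) ^ m * (1 - s) ^ (m + 1) * B) * hsq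
  have hp : p.natDegree ≤ m := by
    refine natDegree_sum_le_of_forall_le _ _ fun k hk => ?_
    refine (natDegree_C_mul_le _ _).trans (natDegree_mul_le.trans ?_)
    have : ((X - 1 : ℚ[X]) ^ k).natDegree ≤ k := by
      refine natDegree_pow_le.trans ?_
      have : (X - 1 : ℚ[X]).natDegree ≤ 1 := sub_deg_le (by simp) (by simp)
      nlinarith
    have h3 : ((X : ℚ[X]) ^ (m - k)).natDegree ≤ m - k := by simp
    have := Finset.mem_range.1 hk
    omega
  have hpr : p.coeff r = 0 := coeff_eq_zero_of_natDegree_lt (by omega)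
  have hqr : (X ^ (2 * m + 1) * q).coeff r = 0 := by
    rw [coeff_X_pow_mul']; rw [if_neg]; omega
  have hc : ((-1 : ℚ[X]) ^ m) = C ((-1) ^ m) := by simp
  rw [key, hc, coeff_C_mul, coeff_sub, hpr, hqr]; simp

theorem support_bound (p : ℚ[X]) (hp : p ≠ 0) : p.signVariations + 1 ≤ p.support.card := by
  induction hn : p.support.card using Nat.strong_induction_on generalizing p with
  | _ n ih =>
    subst hn
    by_cases h : p.eraseLead = 0
    · have : p = monomial p.natDegree p.leadingCoeff := by
        have := eraseLead_add_monomial_natDegree_leadingCoeff p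
        rw [h, zero_add] at this; exact this.symm
      rw [this, signVariations_monomial, ← this]
      have : 0 < p.support.card := Finset.card_pos.2 (by simpa using hp)
      omega
    · have h1 := eraseLead_support_card_lt hp
      have h2 := ih _ h1 _ h rfl
      have h3 := signVariations_le_eraseLead_succ (P := p)
      omega

theorem eq_zero_of_dvd (p : ℚ[X]) (N : ℕ) (h : (X - C 1) ^ N ∣ p) (hs : p.support.card ≤ N) : p = 0 := by
  by_contra hp
  have h1 := support_bound p hp
  have h2 := roots_countP_pos_le_signVariations (P := p)
  have h3 : N ≤ p.rootMultiplicity 1 := (le_rootMultiplicity_iff hp).2 h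
  have h4 : p.roots.count 1 ≤ p.roots.countP (0 < ·) := by
    rw [Multiset.count]
    rw [Multiset.countP_eq_card_filter, Multiset.countP_eq_card_filter]
    apply Multiset.card_le_card
    apply Multiset.monotone_filter_right
    intro b hb; rw [← hb]; norm_num
  rw [count_roots] at h4
  omega

theorem gap_unique (m : ℕ) (f : ℚ[X]) (hd : f.natDegree ≤ m) (h0 : f.coeff 0 = 0)
    (hg : ∀ r, m + 1 ≤ r → r ≤ 2 * m → ((1 - X) ^ (2 * m + 1) * f).coeff r = 0) : f = 0 := by
  have h1X : (1 - X : ℚ[X]) = - (X - C 1) := by simp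
  have hz : (1 - X) ^ (2 * m + 1) * f = 0 := by
    apply eq_zero_of_dvd _ (2 * m + 1)
    · rw [h1X, neg_pow]
      exact Dvd.dvd.mul_right (Dvd.intro_left _ rfl) _
    · have hsub : ((1 - X) ^ (2 * m + 1) * f).support ⊆ Finset.Icc 1 m ∪ Finset.Icc (2 * m + 1) (3 * m + 1) := by
        intro r hr
        rw [mem_support_iff] at hr
        have c1 : r ≠ 0 := by rintro rfl; apply hr; simp [mul_coeff_zero, h0]
        have c2 : ¬ (m + 1 ≤ r ∧ r ≤ 2 * m) := fun h => hr (hg r h.1 h.2)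
        have c3 : r ≤ 3 * m + 1 := by
          by_contra hc
          apply hr
          apply coeff_eq_zero_of_natDegree_lt
          have h1 := natDegree_mul_le (p := (1 - X : ℚ[X]) ^ (2 * m + 1)) (q := f)
          have h2 : ((1 - X : ℚ[X]) ^ (2 * m + 1)).natDegree ≤ 2 * m + 1 := by
            refine natDegree_pow_le.trans ?_
            have : (1 - X : ℚ[X]).natDegree ≤ 1 := sub_deg_le (by simp) (by simp)
            nlinarith
          omega
        simp only [Finset.mem_union, Finset.mem_Icc]
        omega
      refine (Finset.card_le_card hsub).trans ((Finset.card_union_le _ _).trans ?_)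
      simp; omega
  rcases mul_eq_zero.1 hz with h | h
  · exfalso
    rw [h1X] at h
    exact X_sub_C_ne_zero (1 : ℚ) (neg_eq_zero.1 (pow_eq_zero_iff (by omega) |>.1 h))
  · exact h

def bb (m k : ℕ) : ℚ := (Nat.choose (m + k) k : ℚ) * Nat.choose (2 * m - k) (m - k)

theorem fact_prod (a d : ℕ) : ((a + d).factorial : ℚ) = a.factorial * ∏ i ∈ range d, ((a : ℚ) + 1 + i) := by
  induction d with
  | zero => simp
  | succ d ih =>
    rw [Finset.prod_range_succ, ← mul_assoc, ← ih, ← add_assoc, Nat.factorial_succ]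
    push_cast; ring

theorem coeff_one_sub (N r : ℕ) : ((1 - X : ℚ[X]) ^ N).coeff r = (-1) ^ r * N.choose r := by
  have : (1 - X : ℚ[X]) ^ N = ((1 + X) ^ N).comp (C (-1) * X) := by simp [sub_eq_add_neg]
  rw [this, comp_C_mul_X_coeff, coeff_one_add_X_pow]; ring

theorem alt_sum (m : ℕ) (p : ℚ[X]) (hp : p.natDegree < m) :
    ∑ k ∈ range (m + 1), (-1) ^ k * (m.choose k : ℚ) * p.eval (k : ℚ) = 0 := by
  have h := congrFun (fwdDiff_iter_eq_zero_of_degree_lt hp) (0 : ℚ)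
  rw [fwdDiff_iter_eq_sum_shift] at h
  simp only [nsmul_eq_mul, mul_one, zero_add, Pi.zero_apply] at h
  have h2 : ∑ k ∈ range (m + 1), (-1) ^ k * (m.choose k : ℚ) * p.eval (k : ℚ)
      = (-1) ^ m * ∑ k ∈ range (m + 1), ((-1 : ℤ) ^ (m - k) * (m.choose k : ℤ)) • p.eval (k : ℚ) := by
    rw [Finset.mul_sum]
    refine Finset.sum_congr rfl fun k hk => ?_
    have hk := Finset.mem_range.1 hk
    have hkm : ((-1 : ℚ)) ^ k = (-1) ^ m * (-1) ^ (m - k) := by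
      rw [← pow_add]
      have : m + (m - k) = k + 2 * (m - k) := by omega
      rw [this, pow_add, pow_mul]; simp
    rw [hkm, zsmul_eq_mul]; push_cast; ring
  rw [h2, h, mul_zero]

noncomputable def bp (m : ℕ) : ℚ[X] := ∑ k ∈ range (m + 1), C (bb m k) * X ^ k

theorem bp_coeff (m k : ℕ) (hk : k ≤ m) : (bp m).coeff k = bb m k := by
  simp only [bp, finsetSum_coeff, coeff_C_mul_X_pow]
  simp; omega

theorem bp_gap (m r : ℕ) (h1 : m + 1 ≤ r) (h2 : r ≤ 2 * m) :
    ((1 - X) ^ (2 * m + 1) * bp m).coeff r = 0 := by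
  let q : ℚ[X] := (∏ i ∈ range (2 * m - r), (C ((r : ℚ) + 1 + i) - X)) *
    ∏ i ∈ range (r - m - 1), (C ((2 * m + 1 - r : ℕ) + 1 + i : ℚ) + X)
  have hq : q.natDegree < m := by
    have e1 : (∏ i ∈ range (2 * m - r), (C ((r : ℚ) + 1 + i) - X)).natDegree ≤ 2 * m - r := by
      refine (natDegree_prod_le _ _).trans ?_
      refine (Finset.sum_le_sum (g := fun _ => 1) fun i _ => sub_deg_le (by rw [natDegree_C]; omega) (by simp)).trans ?_
      simp
    have e2 : (∏ i ∈ range (r - m - 1), (C ((2 * m + 1 - r : ℕ) + 1 + i : ℚ) + X)).natDegree ≤ r - m - 1 := by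
      refine (natDegree_prod_le _ _).trans ?_
      refine (Finset.sum_le_sum (g := fun _ => 1) fun i _ => natDegree_add_le_of_degree_le (by rw [natDegree_C]; omega) (by simp)).trans ?_
      simp
    have := natDegree_mul_le (p := (∏ i ∈ range (2 * m - r), (C ((r : ℚ) + 1 + i) - X))) (q := ∏ i ∈ range (r - m - 1), (C ((2 * m + 1 - r : ℕ) + 1 + i : ℚ) + X))
    show natDegree (_ * _) < m
    omega
  have hsum := alt_sum m q hq
  rw [mul_comm, bp, Finset.sum_mul, finsetSum_coeff]
  have : ∀ k ∈ range (m + 1), (C (bb m k) * X ^ k * (1 - X) ^ (2 * m + 1)).coeff r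
      = ((-1) ^ r * (2 * m + 1).factorial / (m.factorial : ℚ) ^ 3) * ((-1) ^ k * (m.choose k : ℚ) * q.eval (k : ℚ)) := by
    intro k hk
    have hk := Finset.mem_range.1 hk
    rw [mul_assoc, coeff_C_mul, coeff_X_pow_mul', if_pos (by omega), coeff_one_sub]
    have hs : ((-1 : ℚ)) ^ r * (-1) ^ k = (-1) ^ (r - k) := by
      rw [← pow_add]
      have : r + k = (r - k) + 2 * k := by omega
      rw [this, pow_add, pow_mul]; simp
    have f1 : ((2 * m - k).factorial : ℚ) = (r - k).factorial * ∏ i ∈ range (2 * m - r), ((r : ℚ) + 1 + i - k) := by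
      have := fact_prod (r - k) (2 * m - r)
      rw [show r - k + (2 * m - r) = 2 * m - k by omega] at this
      rw [this]
      congr 1
      refine Finset.prod_congr rfl fun i _ => ?_
      rw [Nat.cast_sub (by omega)]; ring
    have f2 : ((m + k).factorial : ℚ) = (2 * m + 1 - r + k).factorial * ∏ i ∈ range (r - m - 1), (((2 * m + 1 - r : ℕ) : ℚ) + 1 + i + k) := by
      have := fact_prod (2 * m + 1 - r + k) (r - m - 1)
      rw [show 2 * m + 1 - r + k + (r - m - 1) = m + k by omega] at this
      rw [this]
      congr 1
      refine Finset.prod_congr rfl fun i _ => ?_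
      push_cast; ring
    have hqe : q.eval (k : ℚ) = (∏ i ∈ range (2 * m - r), ((r : ℚ) + 1 + i - k)) * ∏ i ∈ range (r - m - 1), (((2 * m + 1 - r : ℕ) : ℚ) + 1 + i + k) := by
      simp only [q, eval_mul, eval_prod, eval_sub, eval_add, eval_C, eval_X]
    rw [hqe, bb, ← hs]
    rw [Nat.cast_choose ℚ (show k ≤ m + k by omega), Nat.cast_choose ℚ (show m - k ≤ 2 * m - k by omega),
      Nat.cast_choose ℚ (show k ≤ m by omega), Nat.cast_choose ℚ (show r - k ≤ 2 * m + 1 by omega),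
      show m + k - k = m by omega, show 2 * m - k - (m - k) = m by omega,
      show 2 * m + 1 - (r - k) = 2 * m + 1 - r + k by omega, f1, f2]
    set A := (∏ i ∈ range (2 * m - r), ((r : ℚ) + 1 + i - k))
    set B := ∏ i ∈ range (r - m - 1), (((2 * m + 1 - r : ℕ) : ℚ) + 1 + i + k)
    have n1 : (m.factorial : ℚ) ≠ 0 := by positivity
    have n2 : (k.factorial : ℚ) ≠ 0 := by positivity
    have n3 : ((m - k).factorial : ℚ) ≠ 0 := by positivity
    have n4 : ((r - k).factorial : ℚ) ≠ 0 := by positivity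
    have n5 : ((2 * m + 1 - r + k).factorial : ℚ) ≠ 0 := by positivity
    field_simp
  rw [Finset.sum_congr rfl this, ← Finset.mul_sum, hsum, mul_zero]

theorem w_prop (m k : ℕ) (hk : k ≤ m) : bb m 0 * w m k = w m 0 * bb m k := by
  have hdeg : ∀ g : ℕ → ℚ, (∑ k ∈ range (m + 1), C (g k) * X ^ k : ℚ[X]).natDegree ≤ m := by
    intro g
    refine natDegree_sum_le_of_forall_le _ _ fun k hk => ?_
    have := Finset.mem_range.1 hk
    exact (natDegree_C_mul_X_pow_le _ _).trans (by omega)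
  have h := gap_unique m (C (bb m 0) * wp m - C (w m 0) * bp m)
    (sub_deg_le ((natDegree_C_mul_le _ _).trans (hdeg _)) ((natDegree_C_mul_le _ _).trans (hdeg _)))
    (by rw [coeff_sub, coeff_C_mul, coeff_C_mul, wp_coeff _ _ (by omega), bp_coeff _ _ (by omega)]; ring)
    (by
      intro r h1 h2
      have : (1 - X) ^ (2 * m + 1) * (C (bb m 0) * wp m - C (w m 0) * bp m) =
        C (bb m 0) * ((1 - X) ^ (2 * m + 1) * wp m) - C (w m 0) * ((1 - X) ^ (2 * m + 1) * bp m) := by ring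
      rw [this, coeff_sub, coeff_C_mul, coeff_C_mul, wp_gap m r h1 h2, bp_gap m r h1 h2]; ring)
  have h2 := congrArg (fun p => coeff p k) h
  simp only [coeff_sub, coeff_C_mul, wp_coeff _ _ hk, bp_coeff _ _ hk, coeff_zero] at h2
  linarith

theorem bb_sum (m : ℕ) : ∑ k ∈ range (m + 1), bb m k = Nat.choose (3 * m + 1) m := by
  have h1 := PowerSeries.mk_one_pow_eq_mk_choose_add ℚ m
  have h2 := PowerSeries.mk_one_pow_eq_mk_choose_add ℚ (2 * m + 1)
  have h3 : ((PowerSeries.mk 1 : PowerSeries ℚ) ^ (m + 1)) * (PowerSeries.mk 1 : PowerSeries ℚ) ^ (m + 1) = (PowerSeries.mk 1 : PowerSeries ℚ) ^ (2 * m + 1 + 1) := by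
    rw [← pow_add]; congr 1; omega
  rw [h1, h2] at h3
  have h4 := congrArg (PowerSeries.coeff m) h3
  rw [PowerSeries.coeff_mul, Finset.Nat.sum_antidiagonal_eq_sum_range_succ_mk] at h4
  simp only [PowerSeries.coeff_mk] at h4
  have h5 : (2 * m + 1 + m).choose (2 * m + 1) = (3 * m + 1).choose m := by
    rw [Nat.choose_symm_add]; congr 1; omega
  rw [h5] at h4
  rw [← h4]
  refine Finset.sum_congr rfl fun k hk => ?_
  have hk := Finset.mem_range.1 hk
  rw [bb]
  congr 2
  · rw [Nat.choose_symm_add]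
  · rw [show 2 * m - k = m + (m - k) by omega, Nat.choose_symm_add]

def lam (m : ℕ) : ℚ := m.factorial * ∏ j ∈ range m, ((Nat.factorial (3 * j + 1) : ℚ) / (Nat.factorial (m + 1 + j) : ℚ))

theorem lam_succ (m : ℕ) : lam (m + 1) * (Nat.choose (2 * (m + 1)) (m + 1)) = lam m * Nat.choose (3 * m + 1) m := by
  have hp : (∏ j ∈ range (m + 1), (Nat.factorial (m + 1 + 1 + j) : ℚ)) * (m + 1).factorial
      = (∏ j ∈ range m, (Nat.factorial (m + 1 + j) : ℚ)) * (2 * m + 1).factorial * (2 * m + 2).factorial := by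
    have a1 := Finset.prod_range_succ' (fun j => (Nat.factorial (m + 1 + j) : ℚ)) (m + 1)
    have a2 := Finset.prod_range_succ (fun j => (Nat.factorial (m + 1 + j) : ℚ)) (m + 1)
    rw [Finset.prod_range_succ (fun j => (Nat.factorial (m + 1 + j) : ℚ)) m] at a2
    rw [a2] at a1
    rw [show m + 1 + m = 2 * m + 1 by omega, show m + 1 + (m + 1) = 2 * m + 2 by omega] at a1
    rw [a1]
    simp only [add_zero]
    congr 1
    refine Finset.prod_congr rfl fun j _ => ?_
    rw [show m + 1 + 1 + j = m + 1 + (j + 1) by omega]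
  simp only [lam, Finset.prod_div_distrib]
  rw [Finset.prod_range_succ (fun j => (Nat.factorial (3 * j + 1) : ℚ)) m]
  rw [Nat.cast_choose ℚ (show m + 1 ≤ 2 * (m + 1) by omega), Nat.cast_choose ℚ (show m ≤ 3 * m + 1 by omega),
    show 2 * (m + 1) - (m + 1) = m + 1 by omega, show 3 * m + 1 - m = 2 * m + 1 by omega,
    show 2 * (m + 1) = 2 * m + 2 by omega]
  have n1 : (∏ j ∈ range (m + 1), (Nat.factorial (m + 1 + 1 + j) : ℚ)) ≠ 0 :=
    Finset.prod_ne_zero_iff.2 fun j _ => by positivity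
  have n2 : (∏ j ∈ range m, (Nat.factorial (m + 1 + j) : ℚ)) ≠ 0 :=
    Finset.prod_ne_zero_iff.2 fun j _ => by positivity
  set A := (∏ j ∈ range (m + 1), (Nat.factorial (m + 1 + 1 + j) : ℚ))
  set B := (∏ j ∈ range m, (Nat.factorial (m + 1 + j) : ℚ))
  have n3 : (m.factorial : ℚ) ≠ 0 := by positivity
  have n4 : ((m + 1).factorial : ℚ) ≠ 0 := by positivity
  have n5 : ((2 * m + 1).factorial : ℚ) ≠ 0 := by positivity
  have n6 : ((2 * m + 2).factorial : ℚ) ≠ 0 := by positivity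
  have hA : A = B * (2 * m + 1).factorial * (2 * m + 2).factorial / (m + 1).factorial := by
    rw [eq_div_iff n4, hp]
  rw [hA]
  field_simp

theorem w_formula (m : ℕ) : ∀ k ≤ m, w m k = lam m * bb m k := by
  have step : ∀ m, w m 0 = lam m * bb m 0 → ∀ k ≤ m, w m k = lam m * bb m k := by
    intro m h0 k hk
    have h := w_prop m k hk
    have hb : bb m 0 ≠ 0 := by
      have : 0 < (2 * m - 0).choose (m - 0) := Nat.choose_pos (by omega)
      simp only [bb]
      simp
      simpa using this.ne'
    apply mul_left_cancel₀ hb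
    rw [h, h0]; ring
  refine step m ?_
  induction m with
  | zero => simp [w_zero, lam, bb]
  | succ m ih =>
    rw [w_succ, Finset.sum_congr rfl (fun k hk => step m ih k (by have := Finset.mem_range.1 hk; omega)),
      ← Finset.mul_sum, bb_sum, ← lam_succ]
    simp [bb]

end RASM


namespace RASM

def zb (b : Bool) : ℤ := if b then 1 else 0

theorem zb_or (b : Bool) : zb b = 0 ∨ zb b = 1 := by cases b <;> simp [zb]

theorem zb_inj {a b : Bool} (h : zb a = zb b) : a = b := by
  cases a <;> cases b <;> simp [zb] at h ⊢

/-- Sum of the first `r` entries. -/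
def pre {n : ℕ} (c : Fin n → ℤ) (r : ℕ) : ℤ := ∑ i, if i.val < r then c i else 0

theorem pre_zero {n : ℕ} (c : Fin n → ℤ) : pre c 0 = 0 := by simp [pre]

theorem pre_full {n : ℕ} (c : Fin n → ℤ) : pre c n = ∑ i, c i := by
  simp [pre]

theorem pre_succ {n : ℕ} (c : Fin (n + 1) → ℤ) (r : ℕ) :
    pre c (r + 1) = c 0 + pre (fun i => c i.succ) r := by
  simp [pre, Fin.sum_univ_succ]

theorem pre_add {n : ℕ} (c : Fin n → ℤ) (j : Fin n) : pre c (j.val + 1) = pre c j.val + c j := by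
  simp only [pre]
  rw [← Finset.sum_ite_eq' Finset.univ j c |>.trans (if_pos (Finset.mem_univ j)), ← Finset.sum_add_distrib]
  refine Finset.sum_congr rfl fun i _ => ?_
  rcases lt_trichotomy i j with h | h | h
  · have h' : i.val < j.val := h
    rw [if_pos (by omega), if_pos h', if_neg h.ne, add_zero]
  · subst h; simp
  · have h' : j.val < i.val := h
    rw [if_neg (by omega), if_neg (by omega), if_neg h.ne', add_zero]

theorem pre_le {n : ℕ} (c : Fin n → ℤ) (k : Fin n) :
    (∑ j ∈ Finset.univ.filter (fun j => j ≤ k), c j) = pre c (k.val + 1) := by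
  rw [pre, Finset.sum_filter]
  refine Finset.sum_congr rfl fun i _ => ?_
  simp only [Fin.le_def, Nat.lt_succ_iff]

theorem pre_rev {n : ℕ} (c : Fin n → ℤ) (r : ℕ) (hr : r ≤ n) :
    pre (fun i => c i.rev) r = (∑ i, c i) - pre c (n - r) := by
  have h1 : pre (fun i => c i.rev) r = ∑ i : Fin n, if i.rev.val < r then c i else 0 := by
    rw [pre, ← Equiv.sum_comp Fin.revPerm]; simp
  rw [h1, pre, eq_sub_iff_add_eq, ← Finset.sum_add_distrib]
  refine Finset.sum_congr rfl fun i _ => ?_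
  have := i.isLt
  rw [Fin.val_rev]
  by_cases h : i.val < n - r
  · rw [if_neg (by omega), if_pos h, zero_add]
  · rw [if_pos (by omega), if_neg h, add_zero]

def COK {n : ℕ} (v : ℤ) (c : Fin n → ℤ) : Prop :=
  (∀ r ≤ n, v + pre c r = 0 ∨ v + pre c r = 1) ∧ v + ∑ i, c i = 1

theorem COK_succ {n : ℕ} (v : ℤ) (c : Fin (n + 1) → ℤ) :
    COK v c ↔ (v = 0 ∨ v = 1) ∧ COK (v + c 0) (fun i => c i.succ) := by
  simp only [COK, Fin.sum_univ_succ, ← add_assoc]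
  constructor
  · rintro ⟨h1, h2⟩
    refine ⟨by simpa [pre_zero] using h1 0 (by omega), fun r hr => ?_, h2⟩
    have := h1 (r + 1) (by omega)
    rw [pre_succ, ← add_assoc] at this
    exact this
  · rintro ⟨h0, h1, h2⟩
    refine ⟨fun r hr => ?_, h2⟩
    rcases r with _ | r
    · simpa [pre_zero] using h0
    · rw [pre_succ, ← add_assoc]; exact h1 r (by omega)

theorem COK_nil (v : ℤ) (c : Fin 0 → ℤ) : COK v c ↔ v = 1 := by
  simp [COK, pre]
  omega

theorem COK_or {n : ℕ} {v : ℤ} {c : Fin n → ℤ} (h : COK v c) : v = 0 ∨ v = 1 := by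
  have := h.1 0 (by omega)
  simpa [pre_zero] using this

theorem COK_rev {n : ℕ} (c : Fin n → ℤ) (h : COK 0 c) : COK 0 (fun i => c i.rev) := by
  obtain ⟨h1, h2⟩ := h
  refine ⟨fun r hr => ?_, ?_⟩
  · rw [pre_rev c r hr]
    have := h1 (n - r) (by omega)
    omega
  · rw [← h2, ← Equiv.sum_comp Fin.revPerm]; simp

theorem COK_rev_iff {n : ℕ} (c : Fin n → ℤ) : COK 0 c ↔ COK 0 (fun i => c i.rev) :=
  ⟨COK_rev c, fun h => by simpa using COK_rev _ h⟩

theorem COK_last {m : ℕ} (c : Fin (m + 1) → ℤ) :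
    COK 0 c ↔ COK (c (Fin.last m)) (fun i : Fin m => c i.rev.castSucc) := by
  rw [COK_rev_iff, COK_succ]
  simp [Fin.rev_succ]

theorem isASM_iff (n : ℕ) (A : Matrix (Fin n) (Fin n) ℤ) :
    IsASM n A ↔ (∀ i, COK 0 (fun j => A i j)) ∧ (∀ j, COK 0 (fun i => A i j)) := by
  have aux : ∀ c : Fin n → ℤ, (∀ k : Fin n, pre c (k.val + 1) = 0 ∨ pre c (k.val + 1) = 1) →
      ∀ r ≤ n, pre c r = 0 ∨ pre c r = 1 := by
    intro c h r hr
    rcases r with _ | r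
    · left; exact pre_zero c
    · exact h ⟨r, by omega⟩
  constructor
  · rintro ⟨_, h2, h3, h4, h5⟩
    refine ⟨fun i => ⟨?_, by rw [zero_add]; exact h2 i⟩, fun j => ⟨?_, by rw [zero_add]; exact h3 j⟩⟩
    · simp only [zero_add]
      exact aux _ fun k => by rw [← pre_le]; exact h4 i k
    · simp only [zero_add]
      exact aux _ fun k => by rw [← pre_le]; exact h5 j k
  · rintro ⟨hr, hc⟩
    simp only [COK, zero_add] at hr hc
    refine ⟨fun i j => ?_, fun i => (hr i).2, fun j => (hc j).2, fun i k => ?_, fun j k => ?_⟩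
    · have h1 : pre (fun j => A i j) (j.val + 1) = pre (fun j => A i j) j.val + A i j :=
        pre_add (fun j => A i j) j
      have h2 := (hr i).1 (j.val) (by omega)
      have h3 := (hr i).1 (j.val + 1) (by omega)
      omega
    · rw [pre_le (fun j => A i j)]; exact (hr i).1 _ (by omega)
    · rw [pre_le (fun i => A i j)]; exact (hc j).1 _ (by omega)

theorem COK_ind {n : ℕ} (k : Fin n) : COK 0 (fun j : Fin n => zb (decide (j = k))) := by
  simp only [COK, zb, zero_add, decide_eq_true_eq]
  refine ⟨fun r _ => ?_, by simp⟩
  have : pre (fun j : Fin n => if j = k then (1 : ℤ) else 0) r = if k.val < r then 1 else 0 := by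
    rw [pre, Finset.sum_eq_single k]
    · simp
    · intro b _ hb; simp [hb]
    · simp
  rw [this]; split_ifs <;> simp

theorem main_iff (m : ℕ) (k : Fin (m + 1)) (A : Matrix (Fin (m + 1)) (Fin (m + 1)) ℤ) :
    (IsASM (m + 1) A ∧ A (Fin.last m) k = 1) ↔
      (∀ j, A (Fin.last m) j = zb (decide (j = k))) ∧
      (∀ j, COK (zb (decide (j = k))) (fun i : Fin m => A i.rev.castSucc j)) ∧
      (∀ i : Fin m, COK 0 (fun j => A i.rev.castSucc j)) := by
  rw [isASM_iff]
  constructor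
  · rintro ⟨⟨hr, hc⟩, hk⟩
    have hlast : ∀ j, A (Fin.last m) j = zb (decide (j = k)) := by
      have h01 : ∀ j, 0 ≤ A (Fin.last m) j := by
        intro j
        have := COK_or ((COK_last _).1 (hc j))
        omega
      have hs := (hr (Fin.last m)).2
      rw [zero_add, ← Finset.add_sum_erase _ _ (Finset.mem_univ k), hk] at hs
      have hz : ∑ j ∈ Finset.univ.erase k, A (Fin.last m) j = 0 := by linarith
      rw [Finset.sum_eq_zero_iff_of_nonneg (fun j _ => h01 j)] at hz
      intro j
      by_cases hj : j = k
      · subst hj; simp [zb, hk]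
      · simp [zb, hj]; exact hz j (by simp [hj])
    refine ⟨hlast, fun j => ?_, fun i => hr _⟩
    rw [← hlast]
    exact (COK_last _).1 (hc j)
  · rintro ⟨hl, hc, hr⟩
    refine ⟨⟨fun i => ?_, fun j => ?_⟩, by simp [hl, zb]⟩
    · refine Fin.lastCases ?_ (fun i => ?_) i
      · simp only [hl]; exact COK_ind k
      · have := hr i.rev; simpa using this
    · rw [COK_last, hl]; exact hc j

def Good {m n : ℕ} (v : Fin n → Bool) (h : Fin m → Bool) (A : Fin n → Fin m → ℤ) : Prop :=
  (∀ j, COK (zb (v j)) (A j)) ∧ ∀ i, COK (zb (h i)) (fun j => A j i)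

theorem card_ASM_eq (m : ℕ) (k : Fin (m + 1)) :
    Nat.card {A : Matrix (Fin (m + 1)) (Fin (m + 1)) ℤ // IsASM (m + 1) A ∧ A (Fin.last m) k = 1} =
    Nat.card {A : Fin (m + 1) → Fin m → ℤ // Good (fun j => decide (j = k)) (fun _ => false) A} := by
  apply Nat.card_eq_of_bijective
    (fun A => ⟨fun j i => A.1 i.rev.castSucc j, by
      have := (main_iff m k A.1).1 A.2
      exact ⟨this.2.1, this.2.2⟩⟩)
  constructor
  · rintro ⟨A, hA⟩ ⟨B, hB⟩ hAB
    have hAB' := congrArg Subtype.val hAB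
    apply Subtype.ext
    show A = B
    have h1 := ((main_iff m k A).1 hA).1
    have h2 := ((main_iff m k B).1 hB).1
    ext i j
    refine Fin.lastCases ?_ (fun i => ?_) i
    · rw [h1, h2]
    · have := congrFun (congrFun hAB' j) i.rev
      simpa using this
  · rintro ⟨B, hB⟩
    let A : Matrix (Fin (m + 1)) (Fin (m + 1)) ℤ := fun i j =>
      Fin.lastCases (motive := fun _ => ℤ) (zb (decide (j = k))) (fun i => B j i.rev) i
    have hA1 : ∀ j, A (Fin.last m) j = zb (decide (j = k)) := by intro j; simp [A]
    have hA2 : ∀ (i : Fin m) j, A i.rev.castSucc j = B j i := by intro i j; simp [A]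
    refine ⟨⟨A, (main_iff m k A).2 ⟨hA1, ?_, ?_⟩⟩, ?_⟩
    · intro j; simp only [hA2]; exact hB.1 j
    · intro i; simp only [hA2]; exact hB.2 i
    · simp only [hA2]

open Classical in
theorem T_ofFn {m : ℕ} (v : Bool) (h : Fin m → Bool) (f : List Bool → ℚ) :
    T 1 v (List.ofFn h) f = ∑ h' : Fin m → Bool,
      if COK (zb v) (fun i => zb (h' i) - zb (h i)) then f (List.ofFn h') else 0 := by
  induction m generalizing v f with
  | zero =>
    cases v <;> simp [T, COK_nil, zb]
  | succ m ih =>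
    rw [← Equiv.sum_comp (Fin.consEquiv (fun _ => Bool)), Fintype.sum_prod_type, Fintype.sum_bool]
    have hc : ∀ b (h' : Fin m → Bool), COK (zb v) (fun i => zb ((Fin.consEquiv (fun _ : Fin (m + 1) => Bool)) (b, h') i) - zb (h i)) ↔
        COK (zb v + (zb b - zb (h 0))) (fun i => zb (h' i) - zb (h i.succ)) := by
      intro b h'
      rw [COK_succ]
      simp [Fin.consEquiv, zb_or]
    have hl : ∀ b (h' : Fin m → Bool), List.ofFn ((Fin.consEquiv (fun _ : Fin (m + 1) => Bool)) (b, h')) = b :: List.ofFn h' := by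
      intro b h'; simp [Fin.consEquiv, List.ofFn_cons]
    simp only [hc, hl]
    rw [List.ofFn_succ]
    have hn : ∀ (u : ℤ) (c : Fin m → ℤ), ¬ (u = 0 ∨ u = 1) → ¬ COK u c := fun u c h h' => h (COK_or h')
    have i0 := fun v f => ih v (fun i => h i.succ) f
    have z0 : zb false = 0 := rfl
    have z1 : zb true = 1 := rfl
    have n1 : ∀ c : Fin m → ℤ, ¬ COK (-1) c := fun c => hn _ c (by omega)
    have n2 : ∀ c : Fin m → ℤ, ¬ COK 2 c := fun c => hn _ c (by omega)
    cases v <;> cases h0 : h 0 <;> simp [T, i0, z0, z1, n1, n2, add_comm]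

theorem e_ofFn {m : ℕ} (h : Fin m → Bool) : (e (List.ofFn h) : ℚ) = if ∀ i, h i = true then 1 else 0 := by
  induction m with
  | zero => simp [e]
  | succ m ih =>
    rw [List.ofFn_succ]
    cases h0 : h 0
    · simp only [e]; rw [if_neg]; intro hh; simp [hh] at h0
    · simp only [e, ih]; congr 1; simp [Fin.forall_fin_succ, h0]

theorem card_Good {m n : ℕ} (v : Fin n → Bool) (h : Fin m → Bool) :
    Finite {A : Fin n → Fin m → ℤ // Good v h A} ∧
    (Nat.card {A : Fin n → Fin m → ℤ // Good v h A} : ℚ) = Wv (List.ofFn v) (List.ofFn h) := by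
  classical
  induction n generalizing h with
  | zero =>
    have : ∀ A : Fin 0 → Fin m → ℤ, Good v h A ↔ ∀ i, h i = true := by
      intro A
      simp only [Good, COK_nil, IsEmpty.forall_iff, true_and]
      refine forall_congr' fun i => ?_
      cases h i <;> simp [zb]
    simp only [this, List.ofFn_zero, Wv, e_ofFn]
    refine ⟨inferInstance, ?_⟩
    by_cases hh : ∀ i, h i = true
    · simp [hh]
    · simp [hh]
  | succ n ih =>
    let F : (Σ h' : {h' : Fin m → Bool // COK (zb (v 0)) (fun i => zb (h' i) - zb (h i))},
        {A : Fin n → Fin m → ℤ // Good (fun j => v j.succ) h'.1 A}) → {A : Fin (n + 1) → Fin m → ℤ // Good v h A} :=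
      fun p => ⟨Fin.cons (fun i => zb (p.1.1 i) - zb (h i)) p.2.1, by
        refine ⟨fun j => ?_, fun i => ?_⟩
        · refine Fin.cases ?_ (fun j => ?_) j
          · exact p.1.2
          · exact p.2.2.1 j
        · rw [COK_succ]
          refine ⟨zb_or _, ?_⟩
          have := p.2.2.2 i
          simpa using this⟩
    have hF : Function.Bijective F := by
      constructor
      · rintro ⟨⟨h1, hh1⟩, ⟨A1, hA1⟩⟩ ⟨⟨h2, hh2⟩, ⟨A2, hA2⟩⟩ heq
        have heq' := congrArg Subtype.val heq
        simp only [F] at heq'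
        obtain ⟨e1, e2⟩ := Fin.cons_inj.1 heq'
        have : h1 = h2 := by
          funext i
          have := congrFun e1 i
          exact zb_inj (by simpa using this)
        subst this; subst e2; rfl
      · rintro ⟨A, hA⟩
        have hrow : ∀ i, (zb (h i) + A 0 i = 0 ∨ zb (h i) + A 0 i = 1) ∧ COK (zb (h i) + A 0 i) (fun j => A j.succ i) := by
          intro i
          have := ((COK_succ _ _).1 (hA.2 i)).2
          exact ⟨COK_or this, this⟩
        let h' : Fin m → Bool := fun i => decide (zb (h i) + A 0 i = 1)
        have hz : ∀ i, zb (h' i) = zb (h i) + A 0 i := by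
          intro i
          show zb (decide (zb (h i) + A 0 i = 1)) = _
          rcases (hrow i).1 with hh | hh <;> rw [hh] <;> simp [zb]
        have hz' : (fun i => zb (h' i) - zb (h i)) = A 0 := by funext i; rw [hz]; ring
        refine ⟨⟨⟨h', by rw [hz']; exact hA.1 0⟩, ⟨fun j => A j.succ, fun j => hA.1 j.succ, fun i => ?_⟩⟩, ?_⟩
        · rw [hz]; exact (hrow i).2
        · apply Subtype.ext
          simp only [F, hz']
          exact Fin.cons_self_tail A
    have hfin := fun h' => (ih (fun j => v j.succ) h').1
    have hfin' : ∀ h' : {h' : Fin m → Bool // COK (zb (v 0)) (fun i => zb (h' i) - zb (h i))},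
      Finite {A : Fin n → Fin m → ℤ // Good (fun j => v j.succ) h'.1 A} := fun h' => hfin h'.1
    refine ⟨Finite.of_surjective F hF.2, ?_⟩
    rw [← Nat.card_eq_of_bijective F hF, Nat.card_sigma, List.ofFn_succ]
    push_cast
    simp only [(ih _ _).2, Wv]
    rw [T_ofFn, ← Finset.sum_filter]
    symm
    exact Finset.sum_subtype (p := fun h' : Fin m → Bool => COK (zb (v 0)) (fun i => zb (h' i) - zb (h i)))
      _ (fun x => by simp) (fun h' => Wv (List.ofFn fun j => v j.succ) (List.ofFn h'))

theorem ofFn_vv (m : ℕ) (k : Fin (m + 1)) : List.ofFn (fun j : Fin (m + 1) => decide (j = k)) = vv (m + 1) k.val := by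
  apply List.ext_getElem
  · simp [vv]; omega
  · intro i h1 h2
    simp only [List.getElem_ofFn, vv]
    have := k.isLt
    rcases lt_trichotomy i k.val with h | h | h
    · rw [List.getElem_append_left (by simpa using h)]
      simp [Fin.ext_iff]; omega
    · rw [List.getElem_append_right (by simp; omega)]
      subst h; simp
    · rw [List.getElem_append_right (by simp; omega)]
      rw [List.getElem_cons]
      rw [dif_neg (by simp; omega)]
      simp [Fin.ext_iff]; omega

end RASM

/-- **The refined ASM theorem.**  The number `A(n,k)` of `n×n` alternating sign
matrices whose unique `+1` in the bottom row is at column `k` (`1 ≤ k ≤ n`)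
equals `C(n+k−2, k−1) · (2n−k−1)!/(n−k)! · ∏_{j=0}^{n-2} (3j+1)!/(n+j)!`. -/
theorem card_refined_ASM (n k : ℕ) (hk1 : 1 ≤ k) (hkn : k ≤ n) :
    (Nat.card {A : Matrix (Fin n) (Fin n) ℤ //
        IsASM n A ∧ A ⟨n - 1, by omega⟩ ⟨k - 1, by omega⟩ = 1} : ℚ) =
      (Nat.choose (n + k - 2) (k - 1) : ℚ) *
        (Nat.factorial (2 * n - k - 1) : ℚ) / (Nat.factorial (n - k) : ℚ) *
        ∏ j ∈ Finset.range (n - 1),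
          ((Nat.factorial (3 * j + 1) : ℚ) / (Nat.factorial (n + j) : ℚ)) := by
  obtain ⟨m, rfl⟩ : ∃ m, n = m + 1 := ⟨n - 1, by omega⟩
  obtain ⟨l, rfl⟩ : ∃ l, k = l + 1 := ⟨k - 1, by omega⟩
  have h1 := RASM.card_ASM_eq m ⟨l, by omega⟩
  have h2 := (RASM.card_Good (fun j : Fin (m + 1) => decide (j = ⟨l, by omega⟩)) (fun _ : Fin m => false)).2
  rw [← h1, RASM.ofFn_vv, List.ofFn_const] at h2
  have h3 := RASM.w_formula m l (by omega)
  rw [RASM.w] at h3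
  rw [h3] at h2
  refine Eq.trans h2 ?_
  rw [RASM.lam, RASM.bb, show m + 1 + (l + 1) - 2 = m + l by omega, show l + 1 - 1 = l by omega,
    show 2 * (m + 1) - (l + 1) - 1 = 2 * m - l by omega, show m + 1 - (l + 1) = m - l by omega,
    show m + 1 - 1 = m by omega, Nat.cast_choose ℚ (show m - l ≤ 2 * m - l by omega),
    show 2 * m - l - (m - l) = m by omega]
  have n1 : (m.factorial : ℚ) ≠ 0 := by positivity
  field_simp
end

section
/- The determinant identity: det_{1≤i,j≤γ} [ C(α+β−1, β−i+j) + t·C(α+β−1, β−i+j−1) ] = [Δ_α Δ_β Δ_{γ+1} Δ_{α+β+γ−1}] / [Δ_{α+β−1} Δ_{α+γ} Δ_{β+γ}] · Σ_{i=0}^{γ} t^i · C(β−1+i, i) · C(α−1+γ−i, γ−i), where C(n,k) denotes the binomial coefficient and Δ_n = ∏_{k=0}^{n-1} k!. -/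
open Finset Polynomial

/-- The superfactorial `Δ_n = 0!·1!···(n−1)!`. -/
def superfac (n : ℕ) : ℕ := ∏ k ∈ Finset.range n, Nat.factorial k

/-- Binomial coefficient `C(n, k)` with integer lower index, zero when `k < 0`. -/
def chInt (n : ℕ) (k : ℤ) : ℕ := if 0 ≤ k then n.choose k.toNat else 0


/-- First column `x`, the other columns bidiagonal. -/
def bidiag {R : Type*} [CommRing R] (g : ℕ) (s t : R) (x : ℕ → R) :
    Matrix (Fin (g + 1)) (Fin (g + 1)) R :=
  Matrix.of fun i j => Fin.cases (x i)
    (fun j' : Fin g => if (i : ℕ) = j' + 1 then s else if (i : ℕ) = j' then t else 0) j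

theorem det_bidiag {R : Type*} [CommRing R] (s t : R) (g : ℕ) : ∀ (x : ℕ → R),
    (bidiag g s t x).det = ∑ k ∈ range (g + 1), x k * (-t) ^ k * s ^ (g - k) := by
  induction g with
  | zero => intro x; simp [bidiag]
  | succ g ih =>
    intro x
    rw [Matrix.det_succ_row_zero, Fin.sum_univ_succ, Fin.sum_univ_succ, Finset.sum_eq_zero,
      Finset.sum_range_succ']
    · have h1 : ((bidiag (g + 1) s t x).submatrix Fin.succ (Fin.succAbove 0)).det
          = s ^ (g + 1) := by
        rw [Matrix.det_of_upperTriangular]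
        · simp [bidiag]
        · intro i j hij
          have : (j : ℕ) < i := hij
          simp [bidiag]
          split_ifs <;> first | rfl | omega
      have h2 : (bidiag (g + 1) s t x).submatrix Fin.succ (Fin.succAbove (Fin.succ 0))
          = bidiag g s t (fun k => x (k + 1)) := by
        ext i j
        refine Fin.cases ?_ (fun j => ?_) j
        · simp [bidiag]
        · simp [bidiag]
      rw [h1, h2, ih]
      have h3 : bidiag (g + 1) s t x 0 0 = x 0 := rfl
      have h4 : bidiag (g + 1) s t x 0 (Fin.succ 0) = t := by
        change (if ((0 : Fin (g + 2)) : ℕ) = ((0 : Fin (g + 1)) : ℕ) + 1 then s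
          else if ((0 : Fin (g + 2)) : ℕ) = ((0 : Fin (g + 1)) : ℕ) then t else 0) = t
        simp
      rw [h3, h4, Finset.mul_sum]
      simp only [Fin.val_zero, Fin.val_succ, pow_zero, pow_one, zero_add, one_mul, add_zero,
        Nat.sub_zero, mul_one]
      rw [add_comm]
      congr 1
      apply Finset.sum_congr rfl
      intro k _
      rw [Nat.add_sub_add_right]
      ring
    · intro j _
      simp [bidiag]

theorem det_lin {R : Type*} [CommRing R] (s t : R) (g : ℕ) (x : ℕ → R) (V : ℕ → ℕ → R)
    (hV : ∀ i < g, ∑ k ∈ range (g + 1), V i k * x k = 0) :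
    x 0 * (Matrix.of fun i j : Fin g => s * V i (j + 1) + t * V i j).det =
      (∑ k ∈ range (g + 1), x k * (-t) ^ k * s ^ (g - k)) *
        (Matrix.of fun i j : Fin g => V i (j + 1)).det := by
  set N : Matrix (Fin (g + 1)) (Fin (g + 1)) R :=
    Matrix.of fun i k => Fin.cases (if k = 0 then 1 else 0) (fun i' : Fin g => V i' k) i with hN
  have hdN : N.det = (Matrix.of fun i j : Fin g => V i (j + 1)).det := by
    rw [Matrix.det_succ_row_zero, Fin.sum_univ_succ, Finset.sum_eq_zero]
    · simp [hN]
      congr 1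
    · intro j _
      simp [hN]
  have hq : (N * bidiag g s t x).det =
      x 0 * (Matrix.of fun i j : Fin g => s * V i (j + 1) + t * V i j).det := by
    rw [Matrix.det_succ_column_zero, Fin.sum_univ_succ, Finset.sum_eq_zero]
    · have h0 : (N * bidiag g s t x) 0 0 = x 0 := by
        simp [Matrix.mul_apply, hN, bidiag]
      have h1 : (N * bidiag g s t x).submatrix (Fin.succAbove 0) Fin.succ =
          (Matrix.of fun i j : Fin g => s * V i (j + 1) + t * V i j) := by
        ext i j
        have e : ∀ k : Fin (g + 1), (if (k : ℕ) = (j : ℕ) + 1 then s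
            else if (k : ℕ) = (j : ℕ) then t else 0) =
            (if k = j.succ then s else 0) + (if k = j.castSucc then t else 0) := by
          intro k
          simp only [Fin.ext_iff, Fin.val_succ, Fin.val_castSucc]
          split_ifs <;> first | omega | simp
        simp [Matrix.mul_apply, hN, bidiag, e, mul_add, Finset.sum_add_distrib, mul_comm]
      rw [h0, h1]
      simp
    · intro i _
      have : (N * bidiag g s t x) i.succ 0 = 0 := by
        rw [Matrix.mul_apply, ← hV i i.2, Finset.sum_range]
        rfl
      rw [this]; simp
  rw [← hq, Matrix.det_mul, hdN, det_bidiag, mul_comm]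

theorem alt_sum_poly (g : ℕ) (P : ℚ[X]) (hP : P.natDegree < g) :
    ∑ k ∈ range (g + 1), (-1 : ℚ) ^ k * g.choose k * P.eval (k : ℚ) = 0 := by
  have h := congrFun (Polynomial.fwdDiff_iter_eq_zero_of_degree_lt hP) 0
  rw [fwdDiff_iter_eq_sum_shift] at h
  have h2 : ∑ k ∈ range (g + 1), (-1 : ℚ) ^ k * g.choose k * P.eval (k : ℚ)
     = (-1) ^ g * ∑ k ∈ range (g + 1), ((-1 : ℤ) ^ (g - k) * g.choose k) • P.eval (0 + k • 1) := by
    rw [Finset.mul_sum]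
    apply Finset.sum_congr rfl
    intro k hk
    have hk' : k ≤ g := by simpa [Nat.lt_succ_iff] using hk
    obtain ⟨m, rfl⟩ := Nat.exists_eq_add_of_le hk'
    have : (-1 : ℚ) ^ m * (-1) ^ m = 1 := by rw [← mul_pow]; simp
    simp only [zsmul_eq_mul, nsmul_eq_mul, zero_add, mul_one, Nat.add_sub_cancel_left, pow_add]
    push_cast
    linear_combination (-1 : ℚ) ^ k * ((k+m).choose k) * (P.eval (k : ℚ)) * (-this)
  rw [h2, h]; simp

theorem term_eq (a b g i k : ℕ) (hi : i < g) (hk : k ≤ g) :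
    (chInt (a + b + 1) ((b : ℤ) - i + k) : ℚ) * ((b + k).choose k * (a + g - k).choose (g - k)) =
      ((a + b + 1).factorial : ℚ) / (a.factorial * b.factorial * g.factorial) *
        (g.choose k * ((b + k).descFactorial i * (a + g - k).descFactorial (g - 1 - i))) := by
  obtain ⟨m, rfl⟩ := Nat.exists_eq_add_of_le hk
  rcases lt_or_ge (b + k) i with h | h
  · rw [Nat.descFactorial_of_lt h, chInt, if_neg (by omega)]; simp
  rw [chInt, if_pos (by omega), show ((b : ℤ) - i + k).toNat = b + k - i by omega]
  rcases lt_or_ge (a + 1 + i) k with h' | h'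
  · rw [Nat.descFactorial_of_lt (show a + (k + m) - k < k + m - 1 - i by omega),
      Nat.choose_eq_zero_of_lt (show a + b + 1 < b + k - i by omega)]; simp
  obtain ⟨p, hp⟩ := Nat.exists_eq_add_of_le h
  obtain ⟨q, hq⟩ := Nat.exists_eq_add_of_le h'
  have e1 : b + k - i = p := by omega
  have e2 : a + b + 1 = p + q := by omega
  have e3 : a + (k + m) - k = a + m := by omega
  have e4 : k + m - k = m := by omega
  have d1 := Nat.factorial_mul_descFactorial h
  have d2 := Nat.factorial_mul_descFactorial (show k + m - 1 - i ≤ a + m by omega)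
  rw [show a + m - (k + m - 1 - i) = q by omega] at d2
  rw [e1] at d1
  rw [e1, e2, e3, e4]
  have c1 := Nat.add_choose_mul_factorial_mul_factorial p q
  have c2 := Nat.add_choose_mul_factorial_mul_factorial b k
  have c3 := Nat.add_choose_mul_factorial_mul_factorial a m
  have c4 := Nat.add_choose_mul_factorial_mul_factorial k m
  rw [← Nat.choose_symm_add] at c1 c4
  have f : ∀ n : ℕ, (n.factorial : ℚ) ≠ 0 := fun n => by positivity
  have D1 : ((b + k).descFactorial i : ℚ) = (b + k).factorial / p.factorial := by
    rw [eq_div_iff (f _)]; exact_mod_cast (by rw [mul_comm]; exact d1)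
  have D2 : ((a + m).descFactorial (k + m - 1 - i) : ℚ) = (a + m).factorial / q.factorial := by
    rw [eq_div_iff (f _)]; exact_mod_cast (by rw [mul_comm]; exact d2)
  have C1 : ((p + q).choose p : ℚ) = (p + q).factorial / (p.factorial * q.factorial) := by
    rw [eq_div_iff (mul_ne_zero (f _) (f _)), ← mul_assoc]; exact_mod_cast c1
  have C2 : ((b + k).choose k : ℚ) = (b + k).factorial / (b.factorial * k.factorial) := by
    rw [eq_div_iff (mul_ne_zero (f _) (f _)), ← mul_assoc]; exact_mod_cast c2
  have C3 : ((a + m).choose m : ℚ) = (a + m).factorial / (a.factorial * m.factorial) := by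
    rw [eq_div_iff (mul_ne_zero (f _) (f _)), ← mul_assoc]; exact_mod_cast c3
  have C4 : ((k + m).choose k : ℚ) = (k + m).factorial / (k.factorial * m.factorial) := by
    rw [eq_div_iff (mul_ne_zero (f _) (f _)), ← mul_assoc]; exact_mod_cast c4
  rw [D1, D2, C1, C2, C3, C4]
  have := f p; have := f q; have := f b; have := f k; have := f a; have := f m
  have := f (k + m)
  field_simp

/-- The kernel vector. -/
def kerv (a b g k : ℕ) : ℚ := (-1) ^ k * ((b + k).choose k * (a + g - k).choose (g - k))

theorem kerv_spec (a b g i : ℕ) (hi : i < g) :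
    ∑ k ∈ range (g + 1), (chInt (a + b + 1) ((b : ℤ) - i + k) : ℚ) * kerv a b g k = 0 := by
  set P : ℚ[X] := (descPochhammer ℚ i).comp (X + C (b : ℚ)) *
    (descPochhammer ℚ (g - 1 - i)).comp (C ((a + g : ℕ) : ℚ) - X) with hPd
  have hdeg : P.natDegree < g := by
    have h1 : ((descPochhammer ℚ i).comp (X + C (b : ℚ))).natDegree ≤ i := by
      refine natDegree_comp_le.trans ?_
      rw [descPochhammer_natDegree, natDegree_X_add_C, mul_one]
    have h2 : ((descPochhammer ℚ (g - 1 - i)).comp (C ((a + g : ℕ) : ℚ) - X)).natDegree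
        ≤ g - 1 - i := by
      refine natDegree_comp_le.trans ?_
      rw [descPochhammer_natDegree]
      have : (C ((a + g : ℕ) : ℚ) - X).natDegree ≤ 1 :=
        (natDegree_sub_le _ _).trans (by rw [natDegree_C, natDegree_X]; simp)
      nlinarith
    have := natDegree_mul_le (p := (descPochhammer ℚ i).comp (X + C (b : ℚ)))
      (q := (descPochhammer ℚ (g - 1 - i)).comp (C ((a + g : ℕ) : ℚ) - X))
    rw [← hPd] at this
    omega
  have h := alt_sum_poly g P hdeg
  have h2 : ∑ k ∈ range (g + 1), (chInt (a + b + 1) ((b : ℤ) - i + k) : ℚ) * kerv a b g k =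
      ((a + b + 1).factorial : ℚ) / (a.factorial * b.factorial * g.factorial) *
        ∑ k ∈ range (g + 1), (-1 : ℚ) ^ k * g.choose k * P.eval (k : ℚ) := by
    rw [Finset.mul_sum]
    apply Finset.sum_congr rfl
    intro k hk
    have hk' : k ≤ g := by simpa [Nat.lt_succ_iff] using hk
    have ev : P.eval (k : ℚ) =
        ((b + k).descFactorial i * (a + g - k).descFactorial (g - 1 - i) : ℚ) := by
      rw [← descPochhammer_eval_eq_descFactorial, ← descPochhammer_eval_eq_descFactorial, hPd,
        Nat.cast_sub (by omega)]
      simp [add_comm]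
    rw [ev, kerv]
    linear_combination (-1 : ℚ) ^ k * term_eq a b g i k hi hk'
  rw [h2, h, mul_zero]

/-- The MacMahon determinant. -/
def macD (n b g : ℕ) : ℚ :=
  (Matrix.of fun i j : Fin g => (chInt n ((b : ℤ) - i + j) : ℚ)).det

theorem macD_succ (a b g : ℕ) :
    (a + g).choose g * macD (a + b + 1) b g =
      (b + g).choose g * macD (a + b + 1) (b + 1) g := by
  have h := det_lin (0 : ℚ) 1 g (kerv a b g)
    (fun i k => (chInt (a + b + 1) ((b : ℤ) - i + k) : ℚ)) (fun i hi => kerv_spec a b g i hi)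
  rw [Finset.sum_range_succ, Finset.sum_eq_zero] at h
  · have : (-1 : ℚ) ^ g * (-1) ^ g = 1 := by rw [← mul_pow]; simp
    have e : (Matrix.of fun i j : Fin g =>
        (chInt (a + b + 1) ((b : ℤ) - (i : ℕ) + ((j : ℕ) + 1 : ℕ)) : ℚ)).det =
        macD (a + b + 1) (b + 1) g := by
      unfold macD
      congr 2
      ext i j
      congr 2
      push_cast
      ring
    rw [e] at h
    simp only [kerv, zero_mul, one_mul, zero_add, pow_zero, Nat.sub_self, Nat.choose_zero_right,
      Nat.sub_zero, mul_one, Nat.cast_one, add_zero] at h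
    change _ * macD (a + b + 1) b g = _ at h
    rw [h]
    linear_combination ((b + g).choose g * macD (a + b + 1) (b + 1) g) * this
  · intro k hk
    have : g - k ≠ 0 := by simp at hk; omega
    simp [this]

theorem superfac_succ (n : ℕ) : superfac (n + 1) = superfac n * n.factorial := by
  simp [superfac, Finset.prod_range_succ]

theorem superfac_ne (n : ℕ) : (superfac n : ℚ) ≠ 0 := by
  rw [superfac]
  exact_mod_cast Finset.prod_ne_zero_iff.2 fun k _ => Nat.factorial_ne_zero k

theorem choose_frac (a g : ℕ) :
    ((a + g).choose g : ℚ) = (a + g).factorial / (a.factorial * g.factorial) := by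
  have c := Nat.add_choose_mul_factorial_mul_factorial a g
  rw [eq_div_iff (by positivity), ← mul_assoc]; exact_mod_cast c

theorem macD_zero (n g : ℕ) : macD n 0 g = 1 := by
  unfold macD
  rw [Matrix.det_of_upperTriangular]
  · simp [chInt]
  · intro i j hij
    have : (j : ℕ) < i := hij
    simp only [Matrix.of_apply, chInt]
    rw [if_neg (by push_cast; omega)]
    simp

theorem macD_eq (g b : ℕ) : ∀ a : ℕ, macD (a + b) b g =
    (superfac a * superfac b * superfac g * superfac (a + b + g) : ℚ) /
      (superfac (a + b) * superfac (a + g) * superfac (b + g)) := by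
  have s := superfac_ne
  have f : ∀ n : ℕ, (n.factorial : ℚ) ≠ 0 := fun n => by positivity
  induction b with
  | zero =>
    intro a
    have := s a; have := s g; have := s (a + g)
    rw [macD_zero]
    simp [superfac]
    simp only [superfac] at *
    field_simp
  | succ b ih =>
    intro a
    have h := macD_succ a b g
    have h1 := ih (a + 1)
    rw [show a + 1 + b = a + b + 1 by ring] at h1
    rw [h1] at h
    rw [show a + (b + 1) = a + b + 1 by ring, ← mul_right_inj' (a := ((b + g).choose g : ℚ)), ← h]
    · rw [choose_frac, choose_frac, show a + 1 + g = a + g + 1 by ring,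
        show b + 1 + g = b + g + 1 by ring, superfac_succ a, superfac_succ b,
        superfac_succ (a + g), superfac_succ (b + g)]
      push_cast
      have := s a; have := s b; have := s g; have := s (a + g); have := s (b + g)
      have := s (a + b + 1); have := f a; have := f b; have := f g; have := f (a + g)
      have := f (b + g)
      field_simp
    · exact_mod_cast (Nat.choose_pos (by omega)).ne'

/-- **Determinant identity** (refined MacMahon-type formula):
`det_{1≤i,j≤γ} [C(α+β−1, β−i+j) + t·C(α+β−1, β−i+j−1)]
 = Δ_α Δ_β Δ_{γ+1} Δ_{α+β+γ−1} / (Δ_{α+β−1} Δ_{α+γ} Δ_{β+γ})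
   · Σ_{i=0}^{γ} t^i C(β−1+i, i) C(α−1+γ−i, γ−i)`. -/
theorem det_refined_macmahon (α β γ : ℕ) (hα : 1 ≤ α) (hβ : 1 ≤ β) :
    Matrix.det (Matrix.of fun i j : Fin γ =>
      Polynomial.C ((chInt (α + β - 1) ((β : ℤ) - (i : ℤ) + (j : ℤ)) : ℚ)) +
        Polynomial.X *
          Polynomial.C ((chInt (α + β - 1) ((β : ℤ) - (i : ℤ) + (j : ℤ) - 1) : ℚ))) =
    Polynomial.C
        ((superfac α * superfac β * superfac (γ + 1) * superfac (α + β + γ - 1) : ℚ) /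
          (superfac (α + β - 1) * superfac (α + γ) * superfac (β + γ) : ℚ)) *
      ∑ i ∈ Finset.range (γ + 1),
        Polynomial.X ^ i *
          Polynomial.C
            ((Nat.choose (β - 1 + i) i * Nat.choose (α - 1 + γ - i) (γ - i) : ℕ) : ℚ) := by
  obtain ⟨a, rfl⟩ := Nat.exists_eq_add_of_le' hα
  obtain ⟨b, rfl⟩ := Nat.exists_eq_add_of_le' hβ
  have en : a + 1 + (b + 1) - 1 = a + b + 1 := by omega
  have eg : a + 1 + (b + 1) + γ - 1 = a + b + 1 + γ := by omega
  rw [en, eg]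
  simp only [Nat.add_sub_cancel]
  have h := det_lin (1 : ℚ[X]) X γ (fun k => C (kerv a b γ k))
    (fun i k => C (chInt (a + b + 1) ((b : ℤ) - i + k) : ℚ)) (fun i hi => by
      have := kerv_spec a b γ i hi
      simp only [← C_mul]
      rw [← map_sum, this, C_0])
  have e1 : (Matrix.of fun i j : Fin γ =>
      (1 : ℚ[X]) * C (chInt (a + b + 1) ((b : ℤ) - (i : ℕ) + ((j : ℕ) + 1 : ℕ)) : ℚ) +
        X * C (chInt (a + b + 1) ((b : ℤ) - (i : ℕ) + (j : ℕ)) : ℚ)) =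
      (Matrix.of fun i j : Fin γ =>
      Polynomial.C ((chInt (a + b + 1) (((b + 1 : ℕ) : ℤ) - (i : ℤ) + (j : ℤ)) : ℚ)) +
        Polynomial.X *
          Polynomial.C ((chInt (a + b + 1) (((b + 1 : ℕ) : ℤ) - (i : ℤ) + (j : ℤ) - 1) : ℚ))) := by
    ext1 i j
    simp only [Matrix.of_apply]
    rw [one_mul, show (b : ℤ) - (i : ℕ) + ((j : ℕ) + 1 : ℕ) =
      ((b + 1 : ℕ) : ℤ) - (i : ℤ) + (j : ℤ) by push_cast; ring,
      show (b : ℤ) - (i : ℕ) + (j : ℕ) =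
      ((b + 1 : ℕ) : ℤ) - (i : ℤ) + (j : ℤ) - 1 by push_cast; ring]
  have e2 : (Matrix.of fun i j : Fin γ =>
      (C (chInt (a + b + 1) ((b : ℤ) - (i : ℕ) + ((j : ℕ) + 1 : ℕ)) : ℚ) : ℚ[X])).det =
      C (macD (a + (b + 1)) (b + 1) γ) := by
    rw [macD, RingHom.map_det]
    congr 1
    ext1 i j
    simp only [Matrix.of_apply, RingHom.mapMatrix_apply, Matrix.map_apply]
    rw [show (b : ℤ) - (i : ℕ) + ((j : ℕ) + 1 : ℕ) =
      ((b + 1 : ℕ) : ℤ) - (i : ℤ) + (j : ℤ) by push_cast; ring, add_assoc]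
  have e3 : ∑ k ∈ range (γ + 1), C (kerv a b γ k) * (-X : ℚ[X]) ^ k * 1 ^ (γ - k) =
      ∑ i ∈ Finset.range (γ + 1), Polynomial.X ^ i * Polynomial.C
            ((Nat.choose (b + i) i * Nat.choose (a + γ - i) (γ - i) : ℕ) : ℚ) := by
    apply Finset.sum_congr rfl
    intro k _
    have : (-1 : ℚ[X]) ^ k * (-1) ^ k = 1 := by rw [← mul_pow]; simp
    rw [kerv, neg_pow, one_pow]
    push_cast
    simp only [map_mul, map_pow, map_neg, map_one]
    linear_combination this * (C ((b + k).choose k : ℚ) * C ((a + γ - k).choose (γ - k) : ℚ) * X ^ k)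
  rw [e1, e2, e3] at h
  have hx : kerv a b γ 0 = ((a + γ).choose γ : ℚ) := by simp [kerv]
  have hne : ((a + γ).choose γ : ℚ) ≠ 0 := by
    exact_mod_cast (Nat.choose_pos (by omega)).ne'
  have hne' : (C ((a + γ).choose γ : ℚ) : ℚ[X]) ≠ 0 := by
    rwa [Ne, C_eq_zero]
  rw [hx] at h
  apply mul_left_cancel₀ hne'
  rw [h, mul_comm, ← mul_assoc, ← C_mul]
  congr 2
  rw [macD_eq, choose_frac, show a + 1 + γ = a + γ + 1 by ring,
    show b + 1 + γ = b + γ + 1 by ring, show a + (b + 1) = a + b + 1 by ring,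
    superfac_succ a, superfac_succ γ, superfac_succ (a + γ)]
  push_cast
  have s := superfac_ne
  have := s a; have := s (b + 1); have := s γ; have := s (a + γ); have := s (b + γ + 1)
  have := s (a + b + 1)
  field_simp
end
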